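/- arXiv:2005.08103 — 2 statements merged into one kernel-verified Lean document; each statement's English description precedes it below -/
import Mathlib

section
/- For every K > 0 there exists a constant α > 0 depending only on K with the following property. For all positive integers n and d with d ≤ (1/2)·n^{2/3}, if A is drawn uniformly at random from the nonempty set of all matrices in {0,1}^{n×n} whose rows each sum to d and whose columns each sum to d (the adjacency matrices of d-regular digraphs on n vertices), then ℙ(σ₂(A) ≤ α·√d) ≥ 1 − n^{−K} − e^{−n}, where σ₂(A) is the second largest singular value of A (singular values counted with multiplicity). -/
open scoped Classical BigOperators

noncomputable section

/-- The set of adjacency matrices of `d`-regular digraphs on `n` vertices: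
0-1 matrices with all row sums and all column sums equal to `d`. -/
def RegDigraph (n d : ℕ) : Finset (Fin n → Fin n → Bool) :=
  Finset.univ.filter fun X =>
    (∀ u, (∑ v, if X u v then 1 else 0) = d) ∧
    (∀ v, (∑ u, if X u v then 1 else 0) = d)

/-- The adjacency matrix as a real matrix. -/
def adjR {n : ℕ} (X : Fin n → Fin n → Bool) : Matrix (Fin n) (Fin n) ℝ :=
  Matrix.of fun u v => if X u v then (1 : ℝ) else 0

/-- real entry -/
def ent {n : ℕ} (X : Fin n → Fin n → Bool) (u v : Fin n) : ℝ := if X u v then 1 else 0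

/-- toggling the four entries of a rectangle -/
def sw {n : ℕ} (X : Fin n → Fin n → Bool) (u v u' v' : Fin n) : Fin n → Fin n → Bool :=
  fun i j => if (i = u ∨ i = u') ∧ (j = v ∨ j = v') then !X i j else X i j

/-- indicator that the rectangle is switchable -/
def VV {n : ℕ} (X : Fin n → Fin n → Bool) (u v u' v' : Fin n) : ℝ :=
  ent X u v * ent X u' v' * (1 - ent X u v') * (1 - ent X u' v)

/-- Kronecker delta -/
def dl {n : ℕ} (i j : Fin n) : ℝ := if i = j then 1 else 0

lemma ent_nonneg {n : ℕ} (X : Fin n → Fin n → Bool) (u v : Fin n) : 0 ≤ ent X u v := by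
  unfold ent; split_ifs <;> norm_num

lemma ent_le_one {n : ℕ} (X : Fin n → Fin n → Bool) (u v : Fin n) : ent X u v ≤ 1 := by
  unfold ent; split_ifs <;> norm_num

lemma dl_nonneg {n : ℕ} (i j : Fin n) : 0 ≤ dl i j := by
  unfold dl; split_ifs <;> norm_num

lemma sum_dl {n : ℕ} (i : Fin n) : ∑ j, dl i j = 1 := by
  simp [dl]

lemma sum_dl' {n : ℕ} (i : Fin n) : ∑ j, dl j i = 1 := by
  simp [dl]

lemma mem_reg {n d : ℕ} {X : Fin n → Fin n → Bool} :
    X ∈ RegDigraph n d ↔ (∀ u, ∑ v, ent X u v = d) ∧ (∀ v, ∑ u, ent X u v = d) := by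
  unfold RegDigraph ent
  simp only [Finset.mem_filter, Finset.mem_univ, true_and]
  constructor
  · rintro ⟨h1, h2⟩
    refine ⟨fun u => ?_, fun v => ?_⟩
    · rw [← h1 u]; push_cast; rfl
    · rw [← h2 v]; push_cast; rfl
  · rintro ⟨h1, h2⟩
    refine ⟨fun u => ?_, fun v => ?_⟩
    · have := h1 u; exact_mod_cast this
    · have := h2 v; exact_mod_cast this

lemma VV_cases {n : ℕ} (X : Fin n → Fin n → Bool) (u v u' v' : Fin n) :
    VV X u v u' v' = if (X u v = true ∧ X u' v' = true ∧ X u v' = false ∧ X u' v = false)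
      then 1 else 0 := by
  unfold VV ent
  cases X u v <;> cases X u' v' <;> cases X u v' <;> cases X u' v <;> simp

lemma VV_nonneg {n : ℕ} (X : Fin n → Fin n → Bool) (u v u' v' : Fin n) :
    0 ≤ VV X u v u' v' := by
  rw [VV_cases]; split_ifs <;> norm_num

lemma VV_le {n : ℕ} (X : Fin n → Fin n → Bool) (u v u' v' : Fin n) :
    VV X u v u' v' ≤ ent X u v * ent X u' v' := by
  unfold VV ent
  cases X u v <;> cases X u' v' <;> cases X u v' <;> cases X u' v <;> simp

lemma VV_ge {n : ℕ} (X : Fin n → Fin n → Bool) (u v u' v' : Fin n) :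
    ent X u v * (ent X u' v' - ent X u' v' * ent X u v' - ent X u' v' * ent X u' v)
      ≤ VV X u v u' v' := by
  unfold VV ent
  cases X u v <;> cases X u' v' <;> cases X u v' <;> cases X u' v <;> simp

/-- validity as a proposition -/
def Vld {n : ℕ} (X : Fin n → Fin n → Bool) (u v u' v' : Fin n) : Prop :=
  X u v = true ∧ X u' v' = true ∧ X u v' = false ∧ X u' v = false

lemma Vld.ne {n : ℕ} {X : Fin n → Fin n → Bool} {u v u' v' : Fin n} (h : Vld X u v u' v') :
    u ≠ u' ∧ v ≠ v' := by
  obtain ⟨h1, h2, h3, h4⟩ := h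
  constructor
  · rintro rfl; simp_all
  · rintro rfl; simp_all

lemma ent_sw {n : ℕ} {X : Fin n → Fin n → Bool} {u v u' v' : Fin n} (h : Vld X u v u' v')
    (i j : Fin n) :
    ent (sw X u v u' v') i j = ent X i j + (dl i u' - dl i u) * (dl j v - dl j v') := by
  obtain ⟨hu, hv⟩ := h.ne
  obtain ⟨h1, h2, h3, h4⟩ := h
  unfold ent sw dl
  by_cases a : i = u
  · subst a
    by_cases b : j = v
    · subst b; simp [*]
    · by_cases c : j = v'
      · subst c; simp [*]
      · simp [*]
  · by_cases a' : i = u'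
    · subst a'
      by_cases b : j = v
      · subst b; simp [*]
      · by_cases c : j = v'
        · subst c; simp [*]
        · simp [*]
    · simp [*]

lemma sw_sw {n : ℕ} (X : Fin n → Fin n → Bool) (u v u' v' : Fin n) :
    sw (sw X u v u' v') u v u' v' = X := by
  funext i j
  unfold sw
  split_ifs <;> simp

lemma sw_comm {n : ℕ} (X : Fin n → Fin n → Bool) (u v u' v' : Fin n) :
    sw X u v' u' v = sw X u v u' v' := by
  funext i j
  unfold sw
  have : (j = v' ∨ j = v) ↔ (j = v ∨ j = v') := or_comm
  simp only [this]

lemma sw_mem {n d : ℕ} {X : Fin n → Fin n → Bool} {u v u' v' : Fin n} (h : Vld X u v u' v')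
    (hX : X ∈ RegDigraph n d) : sw X u v u' v' ∈ RegDigraph n d := by
  rw [mem_reg] at hX ⊢
  obtain ⟨h1, h2⟩ := hX
  refine ⟨fun i => ?_, fun j => ?_⟩
  · simp only [ent_sw h, Finset.sum_add_distrib, ← Finset.mul_sum, Finset.sum_sub_distrib,
      sum_dl', h1]
    ring
  · simp only [ent_sw h, Finset.sum_add_distrib, ← Finset.sum_mul, Finset.sum_sub_distrib,
      sum_dl', h2]
    ring

lemma sw_vld {n : ℕ} {X : Fin n → Fin n → Bool} {u v u' v' : Fin n} (h : Vld X u v u' v') :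
    Vld (sw X u v u' v') u v' u' v := by
  obtain ⟨h1, h2, h3, h4⟩ := h
  unfold Vld sw
  simp [*]

/-- The switching identity. -/
lemma switch_sum {n d : ℕ} (u v u' v' : Fin n) (F : (Fin n → Fin n → Bool) → ℝ) :
    ∑ X ∈ RegDigraph n d, VV X u v u' v' * F X
      = ∑ X ∈ RegDigraph n d, VV X u v' u' v * F (sw X u v u' v') := by
  have e1 : ∀ X, VV X u v u' v' * F X = if Vld X u v u' v' then F X else 0 := by
    intro X; rw [VV_cases]; unfold Vld; split_ifs <;> simp
  have e2 : ∀ X, VV X u v' u' v * F (sw X u v u' v')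
      = if Vld X u v' u' v then F (sw X u v u' v') else 0 := by
    intro X; rw [VV_cases]; unfold Vld; split_ifs <;> simp
  simp only [e1, e2]
  rw [← Finset.sum_filter, ← Finset.sum_filter]
  refine Finset.sum_nbij' (fun X => sw X u v u' v') (fun X => sw X u v u' v') ?_ ?_ ?_ ?_ ?_
  · intro X hX
    simp only [Finset.mem_filter] at hX ⊢
    exact ⟨sw_mem hX.2 hX.1, sw_vld hX.2⟩
  · intro X hX
    simp only [Finset.mem_filter] at hX ⊢
    rw [← sw_comm]
    exact ⟨sw_mem hX.2 hX.1, sw_vld hX.2⟩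
  · intro X _; exact sw_sw ..
  · intro X _; exact sw_sw ..
  · intro X _; simp only [sw_sw]

/-- linear statistic -/
def ff {n : ℕ} (Q : Fin n → Fin n → ℝ) (X : Fin n → Fin n → Bool) : ℝ :=
  ∑ u, ∑ v, Q u v * ent X u v

lemma ff_sw {n : ℕ} (Q : Fin n → Fin n → ℝ) {X : Fin n → Fin n → Bool} {u v u' v' : Fin n}
    (h : Vld X u v u' v') :
    ff Q (sw X u v u' v') = ff Q X + (Q u' v - Q u' v' - Q u v + Q u v') := by
  have key : ∀ p q : Fin n, ∑ i, ∑ j, Q i j * (dl i p * dl j q) = Q p q := by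
    intro p q
    rw [Finset.sum_eq_single p, Finset.sum_eq_single q]
    · simp [dl]
    · intro b _ hb; simp [dl, hb]
    · simp
    · intro b _ hb; simp [dl, hb]
    · simp
  unfold ff
  simp only [ent_sw h]
  have : ∀ i j, Q i j * (ent X i j + (dl i u' - dl i u) * (dl j v - dl j v'))
      = Q i j * ent X i j + Q i j * (dl i u' * dl j v) - Q i j * (dl i u' * dl j v')
        - Q i j * (dl i u * dl j v) + Q i j * (dl i u * dl j v') := by
    intro i j; ring
  simp only [this, Finset.sum_add_distrib, Finset.sum_sub_distrib, key]
  ring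

section sums
variable {n d : ℕ} {X : Fin n → Fin n → Bool}

lemma row_sum (hX : X ∈ RegDigraph n d) (u : Fin n) : ∑ v, ent X u v = d := (mem_reg.1 hX).1 u
lemma col_sum (hX : X ∈ RegDigraph n d) (v : Fin n) : ∑ u, ent X u v = d := (mem_reg.1 hX).2 v
lemma tot_sum (hX : X ∈ RegDigraph n d) : ∑ u, ∑ v, ent X u v = n * d := by
  simp [row_sum hX]

lemma VV_sum_ge (hX : X ∈ RegDigraph n d) (u v : Fin n) :
    ent X u v * (n * d - 2 * d ^ 2) ≤ ∑ u', ∑ v', VV X u v u' v' := by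
  calc ent X u v * (n * d - 2 * d ^ 2)
      = ∑ u', ∑ v', ent X u v * (ent X u' v' - ent X u' v' * ent X u v'
          - ent X u' v' * ent X u' v) := by
        simp only [← Finset.mul_sum, Finset.sum_sub_distrib, ← Finset.sum_mul]
        rw [tot_sum hX]
        have a1 : ∑ u', ∑ v', ent X u' v' * ent X u v' = (d : ℝ) ^ 2 := by
          rw [Finset.sum_comm]
          simp only [← Finset.sum_mul, col_sum hX, ← Finset.mul_sum, row_sum hX]; ring
        have a2 : ∑ u', (∑ v', ent X u' v') * ent X u' v = (d : ℝ) ^ 2 := by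
          simp only [row_sum hX, ← Finset.mul_sum, col_sum hX]; ring
        rw [a1, a2]; ring
    _ ≤ _ := Finset.sum_le_sum fun u' _ => Finset.sum_le_sum fun v' _ => VV_ge X u v u' v'

end sums

/-- The arithmetic of the density assumption. -/
lemma dens {n d : ℕ} (hd : 0 < d) (h : 8 * d ^ 3 ≤ n ^ 2) :
    (n : ℝ) * d / 4 ≤ n * d - 2 * d ^ 2 := by
  have h1 : (8 : ℝ) * d ^ 3 ≤ n ^ 2 := by exact_mod_cast h
  have h2 : (1 : ℝ) ≤ d := by exact_mod_cast hd
  have h3 : (8 : ℝ) * d ^ 2 ≤ n ^ 2 := by nlinarith [sq_nonneg (d : ℝ)]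
  have h4 : (8 / 3 : ℝ) * d ≤ n := by
    by_contra hc
    push Not at hc
    nlinarith [(Nat.cast_nonneg n : (0 : ℝ) ≤ n)]
  nlinarith

/-- Main switching upper bound. -/
lemma switch_le {n d : ℕ} (hd : 0 < d) (h8 : 8 * d ^ 3 ≤ n ^ 2) (u v : Fin n)
    (F G : (Fin n → Fin n → Bool) → ℝ) (hF : ∀ X, 0 ≤ F X) (hG : ∀ X, 0 ≤ G X)
    (hFG : ∀ X u' v', Vld X u v' u' v → F (sw X u v u' v') ≤ G X) :
    (n : ℝ) * (∑ X ∈ RegDigraph n d, ent X u v * F X) ≤ 4 * d * ∑ X ∈ RegDigraph n d, G X := by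
  have hd' : (0 : ℝ) < d := by exact_mod_cast hd
  have step1 : (n * d / 4 : ℝ) * (∑ X ∈ RegDigraph n d, ent X u v * F X)
      ≤ d ^ 2 * ∑ X ∈ RegDigraph n d, G X := by
    calc (n * d / 4 : ℝ) * (∑ X ∈ RegDigraph n d, ent X u v * F X)
        ≤ ∑ X ∈ RegDigraph n d, ∑ u', ∑ v', VV X u v u' v' * F X := by
          rw [Finset.mul_sum]
          refine Finset.sum_le_sum fun X hX => ?_
          have := VV_sum_ge hX u v
          have h2 := mul_le_mul_of_nonneg_left (dens hd h8) (ent_nonneg X u v)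
          simp only [← Finset.sum_mul]
          nlinarith [mul_le_mul_of_nonneg_right (h2.trans this) (hF X)]
      _ = ∑ X ∈ RegDigraph n d, ∑ u', ∑ v', VV X u v' u' v * F (sw X u v u' v') := by
          rw [Finset.sum_comm]
          conv_rhs => rw [Finset.sum_comm]
          refine Finset.sum_congr rfl fun u' _ => ?_
          rw [Finset.sum_comm]
          conv_rhs => rw [Finset.sum_comm]
          exact Finset.sum_congr rfl fun v' _ => switch_sum u v u' v' F
      _ ≤ ∑ X ∈ RegDigraph n d, ∑ u', ∑ v', (ent X u v' * ent X u' v) * G X := by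
          refine Finset.sum_le_sum fun X _ => Finset.sum_le_sum fun u' _ =>
            Finset.sum_le_sum fun v' _ => ?_
          by_cases hV : Vld X u v' u' v
          · exact mul_le_mul (VV_le ..) (hFG X u' v' hV) (hF _)
              (mul_nonneg (ent_nonneg ..) (ent_nonneg ..))
          · have : VV X u v' u' v = 0 := by
              rw [VV_cases]; exact if_neg hV
            rw [this, zero_mul]
            exact mul_nonneg (mul_nonneg (ent_nonneg ..) (ent_nonneg ..)) (hG X)
      _ = d ^ 2 * ∑ X ∈ RegDigraph n d, G X := by
          rw [Finset.mul_sum]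
          refine Finset.sum_congr rfl fun X hX => ?_
          simp only [← Finset.sum_mul, row_sum hX, ← Finset.mul_sum, col_sum hX]
          ring
  have h3 : (d : ℝ) * (n * (∑ X ∈ RegDigraph n d, ent X u v * F X))
      ≤ d * (4 * d * ∑ X ∈ RegDigraph n d, G X) := by nlinarith
  exact le_of_mul_le_mul_left h3 hd'

/-- Gronwall for finite exponential sums. -/
lemma gron {ι : Type*} (s : Finset ι) (f : ι → ℝ) (B t0 : ℝ) (ht0 : 0 ≤ t0)
    (h : ∀ t, 0 ≤ t → t ≤ t0 → ∑ i ∈ s, f i * Real.exp (t * f i)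
      ≤ B * ∑ i ∈ s, Real.exp (t * f i)) :
    ∑ i ∈ s, Real.exp (t0 * f i) ≤ Real.exp (B * t0) * s.card := by
  set m : ℝ → ℝ := fun t => ∑ i ∈ s, Real.exp (t * f i) with hm
  have hder : ∀ t, HasDerivAt m (∑ i ∈ s, f i * Real.exp (t * f i)) t := by
    intro t
    refine HasDerivAt.fun_sum fun i _ => ?_
    have := ((hasDerivAt_id t).mul_const (f i)).exp
    simpa [mul_comm] using this
  set g : ℝ → ℝ := fun t => Real.exp (-(B * t)) * m t with hg
  have hgd : ∀ t, HasDerivAt g (Real.exp (-(B * t)) * (-B) * m t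
      + Real.exp (-(B * t)) * ∑ i ∈ s, f i * Real.exp (t * f i)) t := by
    intro t
    refine HasDerivAt.mul ?_ (hder t)
    have := (((hasDerivAt_id t).const_mul B).neg).exp
    simpa using this
  have hanti : AntitoneOn g (Set.Icc 0 t0) := by
    refine antitoneOn_of_deriv_nonpos (convex_Icc 0 t0) ?_ ?_ ?_
    · exact fun t _ => (hgd t).continuousAt.continuousWithinAt
    · exact fun t _ => (hgd t).differentiableAt.differentiableWithinAt
    · intro t ht
      rw [interior_Icc] at ht
      rw [(hgd t).deriv]
      have := h t ht.1.le ht.2.le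
      nlinarith [Real.exp_pos (-(B * t))]
  have h1 := hanti (Set.left_mem_Icc.2 ht0) (Set.right_mem_Icc.2 ht0) ht0
  have h0 : g 0 = s.card := by simp [hg, hm]
  rw [h0] at h1
  have h2 : m t0 = Real.exp (B * t0) * g t0 := by
    simp only [hg]
    rw [← mul_assoc, ← Real.exp_add]; simp
  show m t0 ≤ _
  rw [h2]
  exact mul_le_mul_of_nonneg_left h1 (Real.exp_pos _).le

/-- Chernoff for counting. -/
lemma chern {ι : Type*} (s : Finset ι) (f : ι → ℝ) (t r : ℝ) (ht : 0 ≤ t) :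
    ((s.filter fun i => r ≤ f i).card : ℝ) ≤ Real.exp (-(t * r)) * ∑ i ∈ s, Real.exp (t * f i) := by
  rw [Finset.mul_sum]
  calc ((s.filter fun i => r ≤ f i).card : ℝ) = ∑ i ∈ s.filter (fun i => r ≤ f i), (1 : ℝ) := by simp
    _ ≤ ∑ i ∈ s.filter (fun i => r ≤ f i), Real.exp (-(t * r)) * Real.exp (t * f i) := by
        refine Finset.sum_le_sum fun i hi => ?_
        rw [← Real.exp_add]
        apply Real.one_le_exp
        have := (Finset.mem_filter.1 hi).2
        nlinarith
    _ ≤ _ := Finset.sum_le_sum_of_subset_of_nonneg (Finset.filter_subset _ _)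
        fun i _ _ => by positivity

section mgf
variable {n d : ℕ}

/-- Poisson-type derivative bound, Q nonnegative bounded by 1. -/
lemma pois_der (hd : 0 < d) (h8 : 8 * d ^ 3 ≤ n ^ 2) (Q : Fin n → Fin n → ℝ)
    (hQ0 : ∀ u v, 0 ≤ Q u v) (hQ1 : ∀ u v, Q u v ≤ 1) (t : ℝ) (ht : 0 ≤ t) :
    (n : ℝ) * ∑ X ∈ RegDigraph n d, ff Q X * Real.exp (t * ff Q X)
      ≤ (4 * d * (∑ u, ∑ v, Q u v) * Real.exp (2 * t))
        * ∑ X ∈ RegDigraph n d, Real.exp (t * ff Q X) := by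
  have key : ∀ u v, (n : ℝ) * (∑ X ∈ RegDigraph n d, ent X u v * Real.exp (t * ff Q X))
      ≤ 4 * d * (Real.exp (2 * t) * ∑ X ∈ RegDigraph n d, Real.exp (t * ff Q X)) := by
    intro u v
    have := switch_le hd h8 u v (fun X => Real.exp (t * ff Q X))
      (fun X => Real.exp (2 * t) * Real.exp (t * ff Q X)) (fun X => (Real.exp_pos _).le)
      (fun X => by positivity) ?_
    · rw [Finset.mul_sum (s := RegDigraph n d) (a := Real.exp (2 * t))]; exact this
    · intro X u' v' hV
      rw [← sw_comm, ff_sw Q hV, ← Real.exp_add]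
      apply Real.exp_le_exp.2
      have := hQ0 u v'
      have := hQ0 u' v
      have := hQ1 u v
      have := hQ1 u' v'
      nlinarith
  have e : ∑ X ∈ RegDigraph n d, ff Q X * Real.exp (t * ff Q X)
      = ∑ u, ∑ v, Q u v * ∑ X ∈ RegDigraph n d, ent X u v * Real.exp (t * ff Q X) := by
    simp only [Finset.mul_sum]
    simp only [Finset.sum_comm (t := RegDigraph n d)]
    refine Finset.sum_congr rfl fun X _ => ?_
    generalize Real.exp (t * ff Q X) = E
    rw [ff]
    simp only [Finset.sum_mul]
    refine Finset.sum_congr rfl fun u _ => Finset.sum_congr rfl fun v _ => by ring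
  rw [e, Finset.mul_sum]
  simp only [Finset.mul_sum (s := (Finset.univ : Finset (Fin n))), Finset.sum_mul (s := (Finset.univ : Finset (Fin n)))]
  refine Finset.sum_le_sum fun u _ => Finset.sum_le_sum fun v _ => ?_
  have := mul_le_mul_of_nonneg_left (key u v) (hQ0 u v)
  nlinarith

/-- Exponential change under a switch. -/
lemma exp_sw (Q : Fin n → Fin n → ℝ) (a t : ℝ) (hQ : ∀ u v, |Q u v| ≤ a) (ht : 0 ≤ t)
    (hat : 4 * a * t ≤ 1) {X : Fin n → Fin n → Bool} {u v u' v' : Fin n} (hV : Vld X u v u' v') :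
    Real.exp (t * ff Q (sw X u v u' v')) ≤ 3 * Real.exp (t * ff Q X) := by
  rw [ff_sw Q hV, mul_add, Real.exp_add, mul_comm]
  refine mul_le_mul_of_nonneg_right ?_ (Real.exp_pos _).le
  have h1 := abs_le.1 (hQ u v)
  have h2 := abs_le.1 (hQ u' v)
  have h3 := abs_le.1 (hQ u v')
  have h4 := abs_le.1 (hQ u' v')
  have : t * (Q u' v - Q u' v' - Q u v + Q u v') ≤ 1 := by nlinarith
  calc Real.exp _ ≤ Real.exp 1 := Real.exp_le_exp.2 this
    _ ≤ 3 := by linarith [Real.exp_one_lt_d9]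

lemma ent_exp (hd : 0 < d) (h8 : 8 * d ^ 3 ≤ n ^ 2) (Q : Fin n → Fin n → ℝ) (a t : ℝ)
    (hQ : ∀ u v, |Q u v| ≤ a) (ht : 0 ≤ t) (hat : 4 * a * t ≤ 1) (u v : Fin n) :
    (n : ℝ) * (∑ X ∈ RegDigraph n d, ent X u v * Real.exp (t * ff Q X))
      ≤ 12 * d * ∑ X ∈ RegDigraph n d, Real.exp (t * ff Q X) := by
  have := switch_le hd h8 u v (fun X => Real.exp (t * ff Q X))
      (fun X => 3 * Real.exp (t * ff Q X)) (fun X => (Real.exp_pos _).le)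
      (fun X => by positivity) ?_
  · rw [← Finset.mul_sum] at this; linarith
  · intro X u' v' hV
    rw [← sw_comm]
    exact exp_sw Q a t hQ ht hat hV

/-- codegree-like statistic -/
def gg (R : Fin n → Fin n → ℝ) (X : Fin n → Fin n → Bool) : ℝ :=
  ∑ u', ∑ v', ∑ u, ∑ v, R u v * (ent X u v' * ent X u' v * ent X u' v')

lemma ffR_exp (hd : 0 < d) (h8 : 8 * d ^ 3 ≤ n ^ 2) (Q R : Fin n → Fin n → ℝ) (a t : ℝ)
    (hR : ∀ u v, 0 ≤ R u v)
    (hQ : ∀ u v, |Q u v| ≤ a) (ht : 0 ≤ t) (hat : 4 * a * t ≤ 1) :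
    (n : ℝ) * ∑ X ∈ RegDigraph n d, ff R X * Real.exp (t * ff Q X)
      ≤ 12 * d * (∑ u, ∑ v, R u v) * ∑ X ∈ RegDigraph n d, Real.exp (t * ff Q X) := by
  have e : ∑ X ∈ RegDigraph n d, ff R X * Real.exp (t * ff Q X)
      = ∑ u, ∑ v, R u v * ∑ X ∈ RegDigraph n d, ent X u v * Real.exp (t * ff Q X) := by
      simp only [Finset.mul_sum]
      simp only [Finset.sum_comm (t := RegDigraph n d)]
      refine Finset.sum_congr rfl fun X _ => ?_
      rw [ff]
      simp only [Finset.sum_mul]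
      refine Finset.sum_congr rfl fun u _ => Finset.sum_congr rfl fun v _ => by ring
  have K := ent_exp hd h8 Q a t hQ ht hat
  rw [e]
  generalize ∑ X ∈ RegDigraph n d, Real.exp (t * ff Q X) = m at K ⊢
  rw [Finset.mul_sum, Finset.mul_sum, Finset.sum_mul]
  refine Finset.sum_le_sum fun u _ => ?_
  rw [Finset.mul_sum, Finset.mul_sum, Finset.sum_mul]
  refine Finset.sum_le_sum fun v _ => ?_
  have := mul_le_mul_of_nonneg_left (K u v) (hR u v)
  linarith

lemma gg_exp (hd : 0 < d) (h8 : 8 * d ^ 3 ≤ n ^ 2) (Q R : Fin n → Fin n → ℝ) (a t : ℝ)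
    (hR : ∀ u v, 0 ≤ R u v)
    (hQ : ∀ u v, |Q u v| ≤ a) (ht : 0 ≤ t) (hat : 4 * a * t ≤ 1) :
    (n : ℝ) * (∑ X ∈ RegDigraph n d, gg R X * Real.exp (t * ff Q X))
      ≤ 36 * d ^ 3 * (∑ u, ∑ v, R u v) * ∑ X ∈ RegDigraph n d, Real.exp (t * ff Q X) := by
  have hd1 : (1 : ℝ) ≤ d := by exact_mod_cast hd
  set m := ∑ X ∈ RegDigraph n d, Real.exp (t * ff Q X) with hm
  set RS := ∑ u, ∑ v, R u v with hRS
  have hS : 0 ≤ RS := Finset.sum_nonneg fun u _ => Finset.sum_nonneg fun v _ => hR u v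
  have hM : 0 ≤ m := Finset.sum_nonneg fun _ _ => (Real.exp_pos _).le
  have dl1 : ∀ i j : Fin n, 0 ≤ 1 - dl i j := by
    intro i j; unfold dl; split_ifs <;> norm_num
  have dl2 : ∀ i j : Fin n, 1 - dl i j ≤ 1 := by
    intro i j; linarith [dl_nonneg i j]
  have key : ∀ u' v', (n : ℝ) * (∑ X ∈ RegDigraph n d, ent X u' v' *
        ((∑ u, ∑ v, R u v * (((1 - dl u u') * ent X u v') * ((1 - dl v v') * ent X u' v)))
          * Real.exp (t * ff Q X)))
      ≤ 4 * d * ∑ X ∈ RegDigraph n d,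
        (∑ u, ∑ v, R u v * (ent X u v' * ent X u' v)) * (3 * Real.exp (t * ff Q X)) := by
    intro u' v'
    refine switch_le hd h8 u' v'
      (fun X => (∑ u, ∑ v, R u v * (((1 - dl u u') * ent X u v') * ((1 - dl v v') * ent X u' v)))
        * Real.exp (t * ff Q X))
      (fun X => (∑ u, ∑ v, R u v * (ent X u v' * ent X u' v))
          * (3 * Real.exp (t * ff Q X))) ?_ ?_ ?_
    · intro X
      exact mul_nonneg (Finset.sum_nonneg fun u _ => Finset.sum_nonneg fun v _ =>
        mul_nonneg (hR u v) (mul_nonneg (mul_nonneg (dl1 ..) (ent_nonneg ..))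
          (mul_nonneg (dl1 ..) (ent_nonneg ..)))) (Real.exp_pos _).le
    · intro X
      exact mul_nonneg (Finset.sum_nonneg fun u _ => Finset.sum_nonneg fun v _ =>
        mul_nonneg (hR u v) (mul_nonneg (ent_nonneg ..) (ent_nonneg ..))) (by positivity)
    · intro X p q hV
      obtain ⟨hne1, hne2⟩ := hV.ne
      rw [← sw_comm]
      refine mul_le_mul ?_ (exp_sw Q a t hQ ht hat hV) (Real.exp_pos _).le ?_
      · refine Finset.sum_le_sum fun u _ => Finset.sum_le_sum fun v _ =>
          mul_le_mul_of_nonneg_left ?_ (hR u v)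
        refine mul_le_mul ?_ ?_ (mul_nonneg (dl1 ..) (ent_nonneg ..)) (ent_nonneg ..)
        · rw [ent_sw hV]
          have a1 : dl v' q = 0 := if_neg (Ne.symm hne2)
          have a2 : dl v' v' = 1 := if_pos rfl
          rw [a1, a2]
          have := dl_nonneg u p
          have := ent_nonneg X u v'
          by_cases hu : u = u'
          · have : dl u u' = 1 := if_pos hu
            rw [this]; linarith
          · have : dl u u' = 0 := if_neg hu
            rw [this]; linarith
        · rw [ent_sw hV]
          have a1 : dl u' p = 0 := if_neg hne1
          have a2 : dl u' u' = 1 := if_pos rfl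
          rw [a1, a2]
          have := dl_nonneg v q
          have := ent_nonneg X u' v
          by_cases hu : v = v'
          · have : dl v v' = 1 := if_pos hu
            rw [this]; linarith
          · have : dl v v' = 0 := if_neg hu
            rw [this]; linarith
      · exact Finset.sum_nonneg fun u _ => Finset.sum_nonneg fun v _ =>
          mul_nonneg (hR u v) (mul_nonneg (ent_nonneg ..) (ent_nonneg ..))
  have swap4 : ∀ (f : Fin n → Fin n → Fin n → Fin n → ℝ),
      ∑ u', ∑ v', ∑ u, ∑ v, f u' v' u v = ∑ u, ∑ v, ∑ u', ∑ v', f u' v' u v := by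
    intro f
    calc _ = ∑ u', ∑ u, ∑ v', ∑ v, f u' v' u v :=
            Finset.sum_congr rfl fun _ _ => Finset.sum_comm
        _ = ∑ u', ∑ u, ∑ v, ∑ v', f u' v' u v :=
            Finset.sum_congr rfl fun _ _ => Finset.sum_congr rfl fun _ _ => Finset.sum_comm
        _ = ∑ u, ∑ u', ∑ v, ∑ v', f u' v' u v :=
            Finset.sum_comm
        _ = _ := Finset.sum_congr rfl fun _ _ => Finset.sum_comm
  -- pointwise bound of gg
  have gle : ∀ X ∈ RegDigraph n d, gg R X ≤
      (∑ u', ∑ v', ent X u' v' *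
        (∑ u, ∑ v, R u v * (((1 - dl u u') * ent X u v') * ((1 - dl v v') * ent X u' v))))
      + 2 * d * ff R X := by
    intro X hX
    have e1 : ∑ u', ∑ v', ∑ u, ∑ v, R u v * (dl u u' * (ent X u v * ent X u v')) = d * ff R X := by
      rw [swap4, ff, Finset.mul_sum]
      refine Finset.sum_congr rfl fun u _ => ?_
      rw [Finset.mul_sum]
      refine Finset.sum_congr rfl fun v _ => ?_
      simp only [← Finset.mul_sum, row_sum hX, ← Finset.sum_mul, sum_dl]
      ring
    have e2 : ∑ u', ∑ v', ∑ u, ∑ v, R u v * (dl v v' * (ent X u v * ent X u' v)) = d * ff R X := by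
      rw [swap4, ff, Finset.mul_sum]
      refine Finset.sum_congr rfl fun u _ => ?_
      rw [Finset.mul_sum]
      refine Finset.sum_congr rfl fun v _ => ?_
      simp only [← Finset.mul_sum, col_sum hX, ← Finset.sum_mul, sum_dl]
      ring
    have e3 : 2 * d * ff R X = d * ff R X + d * ff R X := by ring
    rw [e3]
    nth_rewrite 1 [← e1]
    rw [← e2]
    simp only [gg, Finset.mul_sum, ← Finset.sum_add_distrib]
    refine Finset.sum_le_sum fun u' _ => Finset.sum_le_sum fun v' _ =>
      Finset.sum_le_sum fun u _ => Finset.sum_le_sum fun v _ => ?_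
    have : ent X u v' * ent X u' v * ent X u' v' ≤
        ent X u' v' * (((1 - dl u u') * ent X u v') * ((1 - dl v v') * ent X u' v))
        + (dl u u' * (ent X u v * ent X u v') + dl v v' * (ent X u v * ent X u' v)) := by
      have p1 := ent_nonneg X u v'
      have p2 := ent_nonneg X u' v
      have p3 := ent_nonneg X u v
      have q1 := ent_le_one X u v'
      have q2 := ent_le_one X u' v
      have q3 := ent_le_one X u v
      by_cases hu : u = u'
      · subst hu
        have : dl u u = 1 := if_pos rfl
        rw [this]
        have h1 : 0 ≤ dl v v' * (ent X u v * ent X u v) :=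
          mul_nonneg (dl_nonneg ..) (mul_nonneg p3 p3)
        have h2 : ent X u v' * ent X u v * ent X u v' ≤ ent X u v' * ent X u v :=
          mul_le_of_le_one_right (mul_nonneg p1 p3) q1
        linarith
      · by_cases hv : v = v'
        · subst hv
          have : dl v v = 1 := if_pos rfl
          rw [this]
          have h1 : 0 ≤ dl u u' * (ent X u v * ent X u v) :=
            mul_nonneg (dl_nonneg ..) (mul_nonneg p3 p3)
          have h2 : ent X u v * ent X u' v * ent X u' v ≤ ent X u v * ent X u' v :=
            mul_le_of_le_one_right (mul_nonneg p3 p2) q2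
          linarith
        · have h1 : dl u u' = 0 := if_neg hu
          have h2 : dl v v' = 0 := if_neg hv
          rw [h1, h2]
          apply le_of_eq; ring
    calc _ ≤ R u v * _ := mul_le_mul_of_nonneg_left this (hR u v)
      _ = _ := by ring
  have e2 : ∀ X ∈ RegDigraph n d, ∑ u', ∑ v',
      (∑ u, ∑ v, R u v * (ent X u v' * ent X u' v)) * (3 * Real.exp (t * ff Q X))
      = d ^ 2 * RS * (3 * Real.exp (t * ff Q X)) := by
    intro X hX
    simp only [← Finset.sum_mul]
    congr 1
    rw [swap4, hRS, Finset.mul_sum]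
    refine Finset.sum_congr rfl fun u _ => ?_
    rw [Finset.mul_sum]
    refine Finset.sum_congr rfl fun v _ => ?_
    simp only [← Finset.mul_sum, ← Finset.sum_mul, row_sum hX, col_sum hX]
    ring
  have partA : (n : ℝ) * ∑ X ∈ RegDigraph n d, (∑ u', ∑ v', ent X u' v' *
        (∑ u, ∑ v, R u v * (((1 - dl u u') * ent X u v') * ((1 - dl v v') * ent X u' v))))
        * Real.exp (t * ff Q X) ≤ 12 * d ^ 3 * RS * m := by
    have e : ∑ X ∈ RegDigraph n d, (∑ u', ∑ v', ent X u' v' *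
        (∑ u, ∑ v, R u v * (((1 - dl u u') * ent X u v') * ((1 - dl v v') * ent X u' v))))
        * Real.exp (t * ff Q X)
      = ∑ u', ∑ v', (∑ X ∈ RegDigraph n d, ent X u' v' *
        ((∑ u, ∑ v, R u v * (((1 - dl u u') * ent X u v') * ((1 - dl v v') * ent X u' v)))
          * Real.exp (t * ff Q X))) := by
      simp only [Finset.sum_comm (t := RegDigraph n d)]
      refine Finset.sum_congr rfl fun X _ => ?_
      rw [Finset.sum_mul]
      refine Finset.sum_congr rfl fun u _ => ?_
      rw [Finset.sum_mul]
      refine Finset.sum_congr rfl fun v _ => ?_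
      ring
    rw [e, Finset.mul_sum]
    calc _ ≤ ∑ u', ∑ v', 4 * d * ∑ X ∈ RegDigraph n d,
        (∑ u, ∑ v, R u v * (ent X u v' * ent X u' v)) * (3 * Real.exp (t * ff Q X)) := by
          refine Finset.sum_le_sum fun u _ => ?_
          rw [Finset.mul_sum]
          exact Finset.sum_le_sum fun v _ => key u v
      _ = 4 * d * (d ^ 2 * RS * (3 * m)) := by
        simp only [← Finset.mul_sum]
        congr 1
        simp only [Finset.sum_comm (t := RegDigraph n d)]
        rw [Finset.sum_congr rfl e2]
        simp only [← Finset.mul_sum, hm]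
      _ = _ := by ring
  have partB : (n : ℝ) * ∑ X ∈ RegDigraph n d, ff R X * Real.exp (t * ff Q X)
      ≤ 12 * d * RS * m := ffR_exp hd h8 Q R a t hR hQ ht hat
  have hfin : ∑ X ∈ RegDigraph n d, gg R X * Real.exp (t * ff Q X) ≤
      (∑ X ∈ RegDigraph n d, (∑ u', ∑ v', ent X u' v' *
        (∑ u, ∑ v, R u v * (((1 - dl u u') * ent X u v') * ((1 - dl v v') * ent X u' v))))
        * Real.exp (t * ff Q X)) + 2 * d * ∑ X ∈ RegDigraph n d, ff R X * Real.exp (t * ff Q X) := by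
    rw [Finset.mul_sum, ← Finset.sum_add_distrib]
    refine Finset.sum_le_sum fun X hX => ?_
    have := mul_le_mul_of_nonneg_right (gle X hX) (Real.exp_pos (t * ff Q X)).le
    linarith
  have h1 := mul_le_mul_of_nonneg_left hfin (Nat.cast_nonneg n : (0 : ℝ) ≤ n)
  have h2 := mul_le_mul_of_nonneg_left partB (show (0 : ℝ) ≤ 2 * d by positivity)
  have h3 : (24 : ℝ) * d ^ 2 * (RS * m) ≤ 24 * d ^ 3 * (RS * m) := by
    refine mul_le_mul_of_nonneg_right ?_ (mul_nonneg hS hM)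
    nlinarith [sq_nonneg (d : ℝ)]
  nlinarith

end mgf

section light
variable {n d : ℕ}

lemma swap4 (f : Fin n → Fin n → Fin n → Fin n → ℝ) :
      ∑ u', ∑ v', ∑ u, ∑ v, f u' v' u v = ∑ u, ∑ v, ∑ u', ∑ v', f u' v' u v := by
    calc _ = ∑ u', ∑ u, ∑ v', ∑ v, f u' v' u v :=
            Finset.sum_congr rfl fun _ _ => Finset.sum_comm
        _ = ∑ u', ∑ u, ∑ v, ∑ v', f u' v' u v :=
            Finset.sum_congr rfl fun _ _ => Finset.sum_congr rfl fun _ _ => Finset.sum_comm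
        _ = ∑ u, ∑ u', ∑ v, ∑ v', f u' v' u v :=
            Finset.sum_comm
        _ = _ := Finset.sum_congr rfl fun _ _ => Finset.sum_comm

lemma gg_eq (R : Fin n → Fin n → ℝ) (X : Fin n → Fin n → Bool) :
    gg R X = ∑ u, ∑ v, ∑ u', ∑ v', R u v * (ent X u v' * ent X u' v * ent X u' v') := by
  unfold gg
  exact swap4 _

lemma ident (Q : Fin n → Fin n → ℝ) {X : Fin n → Fin n → Bool} (hX : X ∈ RegDigraph n d) :
    ∑ u, ∑ v, ∑ u', ∑ v', Q u v * VV X u v u' v'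
      = ((n : ℝ) * d - d ^ 2) * ff Q X - d ^ 2 * (∑ u, ∑ v, Q u v) + gg Q X
        + ∑ u, ∑ v, ∑ u', ∑ v', Q u v * VV X u v' u' v := by
  rw [gg_eq, ff, Finset.mul_sum, Finset.mul_sum, ← Finset.sum_sub_distrib,
    ← Finset.sum_add_distrib, ← Finset.sum_add_distrib]
  refine Finset.sum_congr rfl fun u _ => ?_
  rw [Finset.mul_sum, Finset.mul_sum, ← Finset.sum_sub_distrib,
    ← Finset.sum_add_distrib, ← Finset.sum_add_distrib]
  refine Finset.sum_congr rfl fun v _ => ?_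
  have pt : ∀ u' v', Q u v * VV X u v u' v' =
      Q u v * (ent X u v * ent X u' v' - ent X u v * (ent X u' v' * ent X u v')
        - ent X u v * (ent X u' v * ent X u' v') - ent X u v' * ent X u' v
        + ent X u v * (ent X u v' * ent X u' v))
      + Q u v * (ent X u v' * ent X u' v * ent X u' v') + Q u v * VV X u v' u' v := by
    intro u' v'; unfold VV; ring
  simp only [pt, Finset.sum_add_distrib]
  congr 2
  simp only [← Finset.mul_sum, Finset.sum_add_distrib, Finset.sum_sub_distrib]
  have t1 := tot_sum hX
  have a1 : ∑ u', ∑ v', ent X u' v' * ent X u v' = (d : ℝ) ^ 2 := by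
    rw [Finset.sum_comm]
    simp only [← Finset.sum_mul, col_sum hX, ← Finset.mul_sum, row_sum hX]; ring
  have a2 : ∑ u', (ent X u' v * ∑ v', ent X u' v') = (d : ℝ) ^ 2 := by
    simp only [row_sum hX, ← Finset.sum_mul, col_sum hX]; ring
  have a3 : ∑ u', ∑ v', ent X u v' * ent X u' v = (d : ℝ) ^ 2 := by
    simp only [← Finset.sum_mul, row_sum hX, ← Finset.mul_sum, col_sum hX]; ring
  rw [t1, a1, a2, a3]
  ring

lemma ff_sub_abs (Q : Fin n → Fin n → ℝ) (X : Fin n → Fin n → Bool) :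
    -gg Q X ≤ gg (fun u v => |Q u v|) X := by
  unfold gg
  simp only [← Finset.sum_neg_distrib]
  refine Finset.sum_le_sum fun u' _ => Finset.sum_le_sum fun v' _ =>
      Finset.sum_le_sum fun u _ => Finset.sum_le_sum fun v _ => ?_
  rw [← neg_mul]
  exact mul_le_mul_of_nonneg_right (neg_le_abs _)
    (mul_nonneg (mul_nonneg (ent_nonneg ..) (ent_nonneg ..)) (ent_nonneg ..))

/-- error term -/
lemma err_pt (Q : Fin n → Fin n → ℝ) (a t : ℝ) (hQ : ∀ u v, |Q u v| ≤ a) (ht : 0 ≤ t)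
    (hat : 4 * a * t ≤ 1) {X : Fin n → Fin n → Bool} (u v u' v' : Fin n) :
    Q u v * (VV X u v' u' v * Real.exp (t * ff Q (sw X u v u' v')))
      ≤ (Q u v * VV X u v' u' v + ent X u v' * ent X u' v * (t *
        (5 * Q u v ^ 2 + Q u' v' ^ 2 + Q u v' ^ 2 + Q u' v ^ 2))) * Real.exp (t * ff Q X) := by
  have hE := Real.exp_pos (t * ff Q X)
  by_cases hV : Vld X u v' u' v
  · have h1 : VV X u v' u' v = 1 := by rw [VV_cases]; exact if_pos hV
    have h2 : ent X u v' = 1 := if_pos hV.1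
    have h3 : ent X u' v = 1 := if_pos hV.2.1
    rw [h1, h2, h3, ← sw_comm, ff_sw Q hV, mul_add, Real.exp_add]
    set D := Q u' v' - Q u' v - Q u v' + Q u v with hD
    have hDt : |t * D| ≤ 1 := by
      have b1 := abs_le.1 (hQ u v)
      have b2 := abs_le.1 (hQ u' v)
      have b3 := abs_le.1 (hQ u v')
      have b4 := abs_le.1 (hQ u' v')
      rw [abs_le]; constructor <;> nlinarith
    have hexp : |Real.exp (t * D) - 1| ≤ 2 * |t * D| := Real.abs_exp_sub_one_le hDt
    have hq : Q u v * (Real.exp (t * D) - 1) ≤ t *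
        (5 * Q u v ^ 2 + Q u' v' ^ 2 + Q u v' ^ 2 + Q u' v ^ 2) := by
      calc Q u v * (Real.exp (t * D) - 1) ≤ |Q u v * (Real.exp (t * D) - 1)| := le_abs_self _
        _ = |Q u v| * |Real.exp (t * D) - 1| := abs_mul _ _
        _ ≤ |Q u v| * (2 * |t * D|) := mul_le_mul_of_nonneg_left hexp (abs_nonneg _)
        _ = t * (2 * |Q u v * D|) := by rw [abs_mul, abs_mul, abs_of_nonneg ht]; ring
        _ ≤ _ := by
          refine mul_le_mul_of_nonneg_left ?_ ht
          have : |Q u v * D| ≤ (5 * Q u v ^ 2 + Q u' v' ^ 2 + Q u v' ^ 2 + Q u' v ^ 2) / 2 := by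
            rw [abs_le, hD]
            constructor <;>
            nlinarith [sq_nonneg (Q u v + Q u' v'), sq_nonneg (Q u v - Q u' v'),
              sq_nonneg (Q u v + Q u v'), sq_nonneg (Q u v - Q u v'),
              sq_nonneg (Q u v + Q u' v), sq_nonneg (Q u v - Q u' v)]
          linarith
    have := mul_le_mul_of_nonneg_right hq hE.le
    nlinarith
  · have h1 : VV X u v' u' v = 0 := by rw [VV_cases]; exact if_neg hV
    rw [h1]
    have : 0 ≤ ent X u v' * ent X u' v * (t *
        (5 * Q u v ^ 2 + Q u' v' ^ 2 + Q u v' ^ 2 + Q u' v ^ 2)) :=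
      mul_nonneg (mul_nonneg (ent_nonneg ..) (ent_nonneg ..)) (by positivity)
    have := mul_nonneg this hE.le
    simpa using this

lemma err_sum (Q : Fin n → Fin n → ℝ) {X : Fin n → Fin n → Bool} (hX : X ∈ RegDigraph n d) :
    ∑ u, ∑ v, ∑ u', ∑ v', ent X u v' * ent X u' v *
        (5 * Q u v ^ 2 + Q u' v' ^ 2 + Q u v' ^ 2 + Q u' v ^ 2)
      = 6 * d ^ 2 * (∑ u, ∑ v, Q u v ^ 2) + 2 * (n * d) * ff (fun u v => Q u v ^ 2) X := by
  have pt : ∀ u v u' v', ent X u v' * ent X u' v *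
        (5 * Q u v ^ 2 + Q u' v' ^ 2 + Q u v' ^ 2 + Q u' v ^ 2)
      = 5 * (Q u v ^ 2 * (ent X u' v * ent X u v')) + Q u' v' ^ 2 * (ent X u' v * ent X u v')
        + (Q u v' ^ 2 * ent X u v') * ent X u' v + (Q u' v ^ 2 * ent X u' v) * ent X u v' := by
    intros; ring
  simp only [pt, Finset.sum_add_distrib]
  have s1 : ∑ u, ∑ v, ∑ u', ∑ v', 5 * (Q u v ^ 2 * (ent X u' v * ent X u v'))
      = 5 * d ^ 2 * (∑ u, ∑ v, Q u v ^ 2) := by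
    simp only [← Finset.mul_sum, ← Finset.sum_mul, row_sum hX, col_sum hX]; ring
  have s2 : ∑ u, ∑ v, ∑ u', ∑ v', Q u' v' ^ 2 * (ent X u' v * ent X u v')
      = d ^ 2 * (∑ u, ∑ v, Q u v ^ 2) := by
    rw [← swap4 (fun u' v' u v => Q u' v' ^ 2 * (ent X u' v * ent X u v'))]
    simp only [← Finset.mul_sum, ← Finset.sum_mul, row_sum hX, col_sum hX]; ring
  have s3 : ∑ u, ∑ v, ∑ u', ∑ v', (Q u v' ^ 2 * ent X u v') * ent X u' v
      = (n * d) * ff (fun u v => Q u v ^ 2) X := by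
    simp only [← Finset.mul_sum, ← Finset.sum_mul, row_sum hX, col_sum hX]
    simp only [ff, Finset.sum_const, Finset.card_univ, Fintype.card_fin, nsmul_eq_mul,
      Finset.mul_sum, Finset.sum_mul]
    refine Finset.sum_congr rfl fun u _ => Finset.sum_congr rfl fun v _ => by ring
  have s4 : ∑ u, ∑ v, ∑ u', ∑ v', (Q u' v ^ 2 * ent X u' v) * ent X u v'
      = (n * d) * ff (fun u v => Q u v ^ 2) X := by
    simp only [← Finset.mul_sum, ← Finset.sum_mul, row_sum hX, col_sum hX]
    simp only [ff, Finset.sum_const, Finset.card_univ, Fintype.card_fin, nsmul_eq_mul]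
    rw [Finset.sum_comm]; ring
  rw [s1, s2, s3, s4]; ring

lemma light_der (hd : 0 < d) (h8 : 8 * d ^ 3 ≤ n ^ 2) (Q : Fin n → Fin n → ℝ) (a t : ℝ)
    (hQ : ∀ u v, |Q u v| ≤ a) (ht : 0 ≤ t) (hat : 4 * a * t ≤ 1) :
    ((n : ℝ) * d - d ^ 2) * ∑ X ∈ RegDigraph n d, ff Q X * Real.exp (t * ff Q X)
      ≤ (d ^ 2 * (∑ u, ∑ v, Q u v) + 36 * d ^ 3 / n * (∑ u, ∑ v, |Q u v|)
        + 30 * t * d ^ 2 * (∑ u, ∑ v, Q u v ^ 2)) *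
        ∑ X ∈ RegDigraph n d, Real.exp (t * ff Q X) := by
  have hn : 0 < n := by
    rcases Nat.eq_zero_or_pos n with h | h
    · subst h; have : 0 < d ^ 3 := by positivity
      omega
    · exact h
  have hn' : (0 : ℝ) < n := by exact_mod_cast hn
  have hG := gg_exp hd h8 Q (fun u v => |Q u v|) a t (fun _ _ => abs_nonneg _) hQ ht hat
  have hS := ffR_exp hd h8 Q (fun u v => Q u v ^ 2) a t (fun _ _ => sq_nonneg _) hQ ht hat
  have hI : ∑ X ∈ RegDigraph n d, (∑ u, ∑ v, ∑ u', ∑ v', Q u v * VV X u v u' v')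
        * Real.exp (t * ff Q X)
      ≤ ∑ X ∈ RegDigraph n d, (∑ u, ∑ v, ∑ u', ∑ v',
        (Q u v * VV X u v' u' v + ent X u v' * ent X u' v * (t *
        (5 * Q u v ^ 2 + Q u' v' ^ 2 + Q u v' ^ 2 + Q u' v ^ 2)))) * Real.exp (t * ff Q X) := by
    have e1 : ∑ X ∈ RegDigraph n d, (∑ u, ∑ v, ∑ u', ∑ v', Q u v * VV X u v u' v')
        * Real.exp (t * ff Q X)
        = ∑ u, ∑ v, ∑ u', ∑ v', Q u v *
          ∑ X ∈ RegDigraph n d, VV X u v u' v' * Real.exp (t * ff Q X) := by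
      simp only [Finset.sum_mul, Finset.mul_sum]
      simp only [Finset.sum_comm (t := RegDigraph n d)]
      simp only [mul_assoc]
    rw [e1]
    have e2 : ∀ u v u' v' : Fin n, ∑ X ∈ RegDigraph n d, VV X u v u' v' * Real.exp (t * ff Q X)
      = ∑ X ∈ RegDigraph n d, VV X u v' u' v * Real.exp (t * ff Q (sw X u v u' v')) :=
      fun u v u' v' => switch_sum u v u' v' (fun X => Real.exp (t * ff Q X))
    simp only [e2]
    simp only [Finset.sum_mul, Finset.mul_sum (s := RegDigraph n d)]
    simp only [Finset.sum_comm (t := RegDigraph n d)]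
    refine Finset.sum_le_sum fun X _ => Finset.sum_le_sum fun u _ => Finset.sum_le_sum fun v _ =>
      Finset.sum_le_sum fun u' _ => Finset.sum_le_sum fun v' _ => ?_
    exact err_pt Q a t hQ ht hat u v u' v'
  have hJ : ∑ X ∈ RegDigraph n d, (((n : ℝ) * d - d ^ 2) * ff Q X - d ^ 2 * (∑ u, ∑ v, Q u v)
        + gg Q X) * Real.exp (t * ff Q X)
      ≤ ∑ X ∈ RegDigraph n d, (t * (6 * d ^ 2 * (∑ u, ∑ v, Q u v ^ 2)
        + 2 * (n * d) * ff (fun u v => Q u v ^ 2) X)) * Real.exp (t * ff Q X) := by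
    have : ∀ X ∈ RegDigraph n d, (∑ u, ∑ v, ∑ u', ∑ v', Q u v * VV X u v u' v')
        * Real.exp (t * ff Q X) = (((n : ℝ) * d - d ^ 2) * ff Q X - d ^ 2 * (∑ u, ∑ v, Q u v)
        + gg Q X) * Real.exp (t * ff Q X)
        + (∑ u, ∑ v, ∑ u', ∑ v', Q u v * VV X u v' u' v) * Real.exp (t * ff Q X) := by
      intro X hX
      rw [ident Q hX]; ring
    rw [Finset.sum_congr rfl this, Finset.sum_add_distrib] at hI
    have h2 : ∀ X ∈ RegDigraph n d, (∑ u, ∑ v, ∑ u', ∑ v',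
        (Q u v * VV X u v' u' v + ent X u v' * ent X u' v * (t *
        (5 * Q u v ^ 2 + Q u' v' ^ 2 + Q u v' ^ 2 + Q u' v ^ 2)))) * Real.exp (t * ff Q X)
        = (∑ u, ∑ v, ∑ u', ∑ v', Q u v * VV X u v' u' v) * Real.exp (t * ff Q X)
        + (t * (6 * d ^ 2 * (∑ u, ∑ v, Q u v ^ 2)
        + 2 * (n * d) * ff (fun u v => Q u v ^ 2) X)) * Real.exp (t * ff Q X) := by
      intro X hX
      rw [← err_sum Q hX]
      simp only [Finset.sum_add_distrib, add_mul]
      congr 2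
      simp only [Finset.mul_sum]
      refine Finset.sum_congr rfl fun u _ => Finset.sum_congr rfl fun v _ =>
        Finset.sum_congr rfl fun u' _ => Finset.sum_congr rfl fun v' _ => by ring
    rw [Finset.sum_congr rfl h2, Finset.sum_add_distrib] at hI
    linarith
  have hK : ∑ X ∈ RegDigraph n d, -gg Q X * Real.exp (t * ff Q X)
      ≤ ∑ X ∈ RegDigraph n d, gg (fun u v => |Q u v|) X * Real.exp (t * ff Q X) :=
    Finset.sum_le_sum fun X _ => mul_le_mul_of_nonneg_right (ff_sub_abs Q X) (Real.exp_pos _).le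
  have hJ' : ((n : ℝ) * d - d ^ 2) * (∑ X ∈ RegDigraph n d, ff Q X * Real.exp (t * ff Q X))
      - d ^ 2 * (∑ u, ∑ v, Q u v) * (∑ X ∈ RegDigraph n d, Real.exp (t * ff Q X))
      - (∑ X ∈ RegDigraph n d, -gg Q X * Real.exp (t * ff Q X))
      ≤ t * (6 * d ^ 2 * (∑ u, ∑ v, Q u v ^ 2)) * (∑ X ∈ RegDigraph n d, Real.exp (t * ff Q X))
      + 2 * t * d * (n * ∑ X ∈ RegDigraph n d, ff (fun u v => Q u v ^ 2) X * Real.exp (t * ff Q X)) := by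
    simp only [Finset.mul_sum (s := RegDigraph n d)]
    rw [← Finset.sum_sub_distrib, ← Finset.sum_sub_distrib, ← Finset.sum_add_distrib]
    refine le_trans (le_of_eq ?_) (hJ.trans (le_of_eq ?_))
    · exact Finset.sum_congr rfl fun X _ => by ring
    · exact Finset.sum_congr rfl fun X _ => by ring
  have hS' := mul_le_mul_of_nonneg_left hS (show (0 : ℝ) ≤ 2 * t * d by positivity)
  have hG' : ∑ X ∈ RegDigraph n d, gg (fun u v => |Q u v|) X * Real.exp (t * ff Q X) ≤
      36 * d ^ 3 / n * (∑ u, ∑ v, |Q u v|) * ∑ X ∈ RegDigraph n d, Real.exp (t * ff Q X) := by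
    rw [← mul_le_mul_iff_right₀ hn']
    refine hG.trans (le_of_eq ?_)
    field_simp
  nlinarith
end light

section tails
variable {n d : ℕ}

lemma n_pos_of (hd : 0 < d) (h8 : 8 * d ^ 3 ≤ n ^ 2) : (0 : ℝ) < n := by
  have : 0 < n := by
    rcases Nat.eq_zero_or_pos n with h | h
    · subst h; have : 0 < d ^ 3 := by positivity
      omega
    · exact h
  exact_mod_cast this

lemma sqrt_cube_le (h8 : 8 * d ^ 3 ≤ n ^ 2) :
    Real.sqrt d * d ≤ n := by
  have h1 : (8 : ℝ) * d ^ 3 ≤ n ^ 2 := by exact_mod_cast h8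
  have h0 : (0 : ℝ) ≤ d := Nat.cast_nonneg d
  refine (le_abs_self _).trans (abs_le_of_sq_le_sq ?_ (Nat.cast_nonneg n))
  rw [mul_pow, Real.sq_sqrt h0]
  nlinarith [pow_nonneg h0 3]

/-- light part of the rank one matrix -/
def lt (n d : ℕ) (x y : Fin n → ℝ) (u v : Fin n) : ℝ :=
  if |x u * y v| ≤ Real.sqrt d / n then x u * y v else 0

lemma sum_abs_le (x : Fin n → ℝ) (hx : ∑ u, x u ^ 2 ≤ 2) : (∑ u, |x u|) ^ 2 ≤ 2 * n := by
  have := sq_sum_le_card_mul_sum_sq (s := (Finset.univ : Finset (Fin n))) (f := fun u => |x u|)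
  simp only [sq_abs, Finset.card_univ, Fintype.card_fin] at this
  nlinarith [(Nat.cast_nonneg n : (0 : ℝ) ≤ n)]

lemma sum_prod_abs (x y : Fin n → ℝ) (hx : ∑ u, x u ^ 2 ≤ 2) (hy : ∑ u, y u ^ 2 ≤ 2) :
    ∑ u, ∑ v, |x u * y v| ≤ 2 * n := by
  have : ∑ u, ∑ v, |x u * y v| = (∑ u, |x u|) * ∑ v, |y v| := by
    simp only [abs_mul, ← Finset.mul_sum, ← Finset.sum_mul]
  rw [this]
  nlinarith [sum_abs_le x hx, sum_abs_le y hy, sq_nonneg ((∑ u, |x u|) - ∑ v, |y v|)]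

lemma sum_prod_sq (x y : Fin n → ℝ) (hx : ∑ u, x u ^ 2 ≤ 2) (hy : ∑ u, y u ^ 2 ≤ 2) :
    ∑ u, ∑ v, (x u * y v) ^ 2 ≤ 4 := by
  have : ∑ u, ∑ v, (x u * y v) ^ 2 = (∑ u, x u ^ 2) * ∑ v, y v ^ 2 := by
    simp only [mul_pow, ← Finset.mul_sum, ← Finset.sum_mul]
  rw [this]
  have h1 : 0 ≤ ∑ u, x u ^ 2 := Finset.sum_nonneg fun _ _ => sq_nonneg _
  have h2 : 0 ≤ ∑ u, y u ^ 2 := Finset.sum_nonneg fun _ _ => sq_nonneg _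
  nlinarith

lemma light_tail (hd : 0 < d) (h8 : 8 * d ^ 3 ≤ n ^ 2) (x y : Fin n → ℝ)
    (hx : ∑ u, x u ^ 2 ≤ 2) (hy : ∑ u, y u ^ 2 ≤ 2) (B : ℝ) :
    (((RegDigraph n d).filter fun X =>
      B * Real.sqrt d ≤ ff (lt n d x y) X - (d / n : ℝ) * ∑ u, ∑ v, lt n d x y u v).card : ℝ)
      ≤ Real.exp ((52 - B / 4) * n) * (RegDigraph n d).card := by
  have hn := n_pos_of hd h8
  have hd' : (0 : ℝ) < d := by exact_mod_cast hd
  have hs : 0 < Real.sqrt d := Real.sqrt_pos.2 hd'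
  have hss : Real.sqrt d * Real.sqrt d = d := Real.mul_self_sqrt hd'.le
  set Q := lt n d x y with hQdef
  have hQ : ∀ u v, |Q u v| ≤ Real.sqrt d / n := by
    intro u v
    simp only [hQdef, lt]
    split_ifs with h
    · exact h
    · rw [abs_zero]; positivity
  have hA : ∑ u, ∑ v, |Q u v| ≤ 2 * n := by
    refine le_trans ?_ (sum_prod_abs x y hx hy)
    refine Finset.sum_le_sum fun u _ => Finset.sum_le_sum fun v _ => ?_
    simp only [hQdef, lt]
    split_ifs with h
    · exact le_rfl
    · rw [abs_zero]; positivity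
  have hq : ∑ u, ∑ v, Q u v ^ 2 ≤ 4 := by
    refine le_trans ?_ (sum_prod_sq x y hx hy)
    refine Finset.sum_le_sum fun u _ => Finset.sum_le_sum fun v _ => ?_
    simp only [hQdef, lt]
    split_ifs with h
    · exact le_rfl
    · simp only [ne_eq, OfNat.ofNat_ne_zero, not_false_eq_true, zero_pow]; positivity
  have hA1 : ∑ u, ∑ v, Q u v ≤ ∑ u, ∑ v, |Q u v| :=
    Finset.sum_le_sum fun u _ => Finset.sum_le_sum fun v _ => le_abs_self _
  set c : ℝ := (d / n : ℝ) * ∑ u, ∑ v, Q u v with hc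
  set t0 : ℝ := n / (4 * Real.sqrt d) with ht0
  have ht00 : 0 ≤ t0 := by positivity
  have ht0s : t0 * Real.sqrt d = n / 4 := by rw [ht0]; field_simp
  have hder : ∀ t, 0 ≤ t → t ≤ t0 → ∑ X ∈ RegDigraph n d, (ff Q X - c) * Real.exp (t * (ff Q X - c))
      ≤ (208 * Real.sqrt d) * ∑ X ∈ RegDigraph n d, Real.exp (t * (ff Q X - c)) := by
    intro t ht htt
    have hat : 4 * (Real.sqrt d / n) * t ≤ 1 := by
      calc 4 * (Real.sqrt d / n) * t ≤ 4 * (Real.sqrt d / n) * t0 := by gcongr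
        _ = 1 := by rw [ht0]; field_simp
    have hL := light_der hd h8 Q _ t hQ ht hat
    have hm : 0 ≤ ∑ X ∈ RegDigraph n d, Real.exp (t * ff Q X) :=
      Finset.sum_nonneg fun _ _ => (Real.exp_pos _).le
    have e1 : ∑ X ∈ RegDigraph n d, (ff Q X - c) * Real.exp (t * (ff Q X - c))
        = Real.exp (-(t * c)) * ((∑ X ∈ RegDigraph n d, ff Q X * Real.exp (t * ff Q X))
          - c * ∑ X ∈ RegDigraph n d, Real.exp (t * ff Q X)) := by
      rw [Finset.mul_sum (a := c), ← Finset.sum_sub_distrib, Finset.mul_sum]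
      refine Finset.sum_congr rfl fun X _ => ?_
      rw [mul_sub, sub_eq_add_neg (t * ff Q X), Real.exp_add]; ring
    have e2 : ∑ X ∈ RegDigraph n d, Real.exp (t * (ff Q X - c))
        = Real.exp (-(t * c)) * ∑ X ∈ RegDigraph n d, Real.exp (t * ff Q X) := by
      rw [Finset.mul_sum]
      refine Finset.sum_congr rfl fun X _ => ?_
      rw [mul_sub, sub_eq_add_neg (t * ff Q X), Real.exp_add]; ring
    rw [e1, e2]
    generalize ∑ X ∈ RegDigraph n d, Real.exp (t * ff Q X) = m at *
    generalize ∑ X ∈ RegDigraph n d, ff Q X * Real.exp (t * ff Q X) = F at *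
    have goal : F - c * m ≤ 208 * Real.sqrt d * m := by
      have hnd : (n : ℝ) * d / 2 ≤ n * d - d ^ 2 := by
        have := dens hd h8
        nlinarith
      have hpos : (0 : ℝ) < n * d - d ^ 2 := lt_of_lt_of_le (by positivity) hnd
      have hb : d ^ 2 * (∑ u, ∑ v, Q u v) + 36 * d ^ 3 / n * (∑ u, ∑ v, |Q u v|)
        + 30 * t * d ^ 2 * (∑ u, ∑ v, Q u v ^ 2) - ((n : ℝ) * d - d ^ 2) * c
          ≤ 104 * n * d * Real.sqrt d := by
        have k1 : d ^ 2 * (∑ u, ∑ v, Q u v) - ((n : ℝ) * d - d ^ 2) * c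
            = d ^ 3 / n * ∑ u, ∑ v, Q u v := by
          rw [hc]; field_simp; ring
        have k2 : (d ^ 3 / n : ℝ) * (∑ u, ∑ v, Q u v) ≤ d ^ 3 / n * (2 * n) := by
          refine mul_le_mul_of_nonneg_left (hA1.trans hA) (by positivity)
        have k3 : 36 * d ^ 3 / n * (∑ u, ∑ v, |Q u v|) ≤ (36 * d ^ 3 / n : ℝ) * (2 * n) :=
          mul_le_mul_of_nonneg_left hA (by positivity)
        have k4 : 30 * t * d ^ 2 * (∑ u, ∑ v, Q u v ^ 2) ≤ 30 * t0 * d ^ 2 * 4 := by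
          gcongr
        have k5 : 30 * t0 * d ^ 2 * 4 = 30 * n * d * Real.sqrt d := by
          have : (d : ℝ) ^ 2 = d * (Real.sqrt d * Real.sqrt d) := by rw [hss]; ring
          rw [this]
          calc _ = 120 * d * Real.sqrt d * (t0 * Real.sqrt d) := by ring
            _ = _ := by rw [ht0s]; ring
        have k6 : (d ^ 3 / n : ℝ) * (2 * n) = 2 * d ^ 3 := by field_simp
        have k7 : (36 * d ^ 3 / n : ℝ) * (2 * n) = 72 * d ^ 3 := by field_simp; norm_num
        have k8 : (d : ℝ) ^ 3 ≤ n * d * Real.sqrt d := by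
          have := sqrt_cube_le h8
          calc (d : ℝ) ^ 3 = d * Real.sqrt d * (Real.sqrt d * d) := by
                rw [show (d : ℝ) * Real.sqrt d * (Real.sqrt d * d) =
                  d * d * (Real.sqrt d * Real.sqrt d) by ring, hss]; ring
            _ ≤ d * Real.sqrt d * n := by gcongr
            _ = _ := by ring
        linarith
      have h1 : ((n : ℝ) * d - d ^ 2) * (F - c * m) ≤ (104 * n * d * Real.sqrt d) * m := by
        have := mul_le_mul_of_nonneg_right hb hm
        nlinarith
      have h2 : (104 * n * d * Real.sqrt d) * m ≤ ((n : ℝ) * d - d ^ 2) * (208 * Real.sqrt d * m) := by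
        have : 0 ≤ 208 * Real.sqrt d * m := by positivity
        nlinarith
      exact le_of_mul_le_mul_left (h1.trans h2) hpos
    have := mul_le_mul_of_nonneg_left goal (Real.exp_pos (-(t * c))).le
    linarith
  have hg := gron (RegDigraph n d) (fun X => ff Q X - c) (208 * Real.sqrt d) t0 ht00 hder
  have hch := chern (RegDigraph n d) (fun X => ff Q X - c) t0 (B * Real.sqrt d) ht00
  refine hch.trans ?_
  have := mul_le_mul_of_nonneg_left hg (Real.exp_pos (-(t0 * (B * Real.sqrt d)))).le
  refine this.trans (le_of_eq ?_)
  rw [← mul_assoc, ← Real.exp_add]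
  congr 2
  have : -(t0 * (B * Real.sqrt d)) + 208 * Real.sqrt d * t0 = (208 - B) * (t0 * Real.sqrt d) := by ring
  rw [this, ht0s]; ring

/-- edges between S and T -/
def eST (S T : Finset (Fin n)) (X : Fin n → Fin n → Bool) : ℝ := ∑ u ∈ S, ∑ v ∈ T, ent X u v

lemma eST_eq (S T : Finset (Fin n)) (X : Fin n → Fin n → Bool) :
    eST S T X = ff (fun u v => if u ∈ S ∧ v ∈ T then 1 else 0) X := by
  unfold eST ff
  rw [← Finset.sum_filter_add_sum_filter_not Finset.univ (· ∈ S)]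
  simp only [ite_mul, one_mul, zero_mul]
  have h2 : ∑ u ∈ Finset.univ.filter (fun u => u ∉ S), ∑ v, (if u ∈ S ∧ v ∈ T then ent X u v else 0) = 0 := by
    refine Finset.sum_eq_zero fun u hu => Finset.sum_eq_zero fun v _ => ?_
    simp at hu; simp [hu]
  rw [h2, add_zero]
  have : Finset.univ.filter (fun u => u ∈ S) = S := by ext; simp
  rw [this]
  refine Finset.sum_congr rfl fun u hu => ?_
  simp only [hu, true_and]
  simp

lemma pois_tail (hd : 0 < d) (h8 : 8 * d ^ 3 ≤ n ^ 2) (S T : Finset (Fin n))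
    (hS : S.Nonempty) (hT : T.Nonempty) (r : ℝ) (hr : 64 * ((S.card : ℝ) * T.card * d / n) < r) :
    (((RegDigraph n d).filter fun X => r ≤ eST S T X).card : ℝ)
      ≤ Real.exp (-(r / 8 * Real.log (r / ((S.card : ℝ) * T.card * d / n))))
        * (RegDigraph n d).card := by
  have hn := n_pos_of hd h8
  have hd' : (0 : ℝ) < d := by exact_mod_cast hd
  have hs : (0 : ℝ) < S.card := by exact_mod_cast hS.card_pos
  have ht : (0 : ℝ) < T.card := by exact_mod_cast hT.card_pos
  set μ : ℝ := (S.card : ℝ) * T.card * d / n with hμ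
  have hμ0 : 0 < μ := by positivity
  have hr0 : 0 < r := lt_trans (by positivity) hr
  set Q : Fin n → Fin n → ℝ := fun u v => if u ∈ S ∧ v ∈ T then 1 else 0 with hQ
  have hQs : ∑ u, ∑ v, Q u v = S.card * T.card := by
    simp only [hQ]
    have : ∀ u v : Fin n, (if u ∈ S ∧ v ∈ T then (1 : ℝ) else 0)
        = (if u ∈ S then 1 else 0) * (if v ∈ T then 1 else 0) := by
      intro u v; by_cases h1 : u ∈ S <;> by_cases h2 : v ∈ T <;> simp [h1, h2]
    simp only [this, ← Finset.mul_sum, ← Finset.sum_mul]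
    simp
  have hfun : ∀ X, eST S T X = ff Q X := fun X => eST_eq S T X
  simp only [hfun]
  set t0 : ℝ := Real.log (r / (8 * μ)) / 2 with ht0
  have hr8 : 1 ≤ r / (8 * μ) := by rw [le_div_iff₀ (by positivity)]; linarith
  have ht00 : 0 ≤ t0 := by
    have := Real.log_nonneg hr8; positivity
  have he : Real.exp (2 * t0) = r / (8 * μ) := by
    rw [ht0, mul_div_cancel₀ _ (two_ne_zero), Real.exp_log (by positivity)]
  have hder : ∀ t, 0 ≤ t → t ≤ t0 → ∑ X ∈ RegDigraph n d, ff Q X * Real.exp (t * ff Q X)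
      ≤ (r / 2) * ∑ X ∈ RegDigraph n d, Real.exp (t * ff Q X) := by
    intro t ht htt
    have h := pois_der hd h8 Q (fun u v => by simp only [hQ]; split_ifs <;> norm_num)
      (fun u v => by simp only [hQ]; split_ifs <;> norm_num) t ht
    rw [hQs] at h
    have hm : 0 ≤ ∑ X ∈ RegDigraph n d, Real.exp (t * ff Q X) :=
      Finset.sum_nonneg fun _ _ => (Real.exp_pos _).le
    have h2 : 4 * d * ((S.card : ℝ) * T.card) * Real.exp (2 * t) ≤ n * (r / 2) := by
      calc 4 * d * ((S.card : ℝ) * T.card) * Real.exp (2 * t)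
          ≤ 4 * d * ((S.card : ℝ) * T.card) * Real.exp (2 * t0) := by gcongr
        _ = n * (r / 2) := by rw [he, hμ]; field_simp; norm_num
    have h3 := mul_le_mul_of_nonneg_right h2 hm
    have := h.trans h3
    rw [mul_assoc] at this
    exact le_of_mul_le_mul_left this hn
  have hg := gron (RegDigraph n d) (fun X => ff Q X) (r / 2) t0 ht00 hder
  have hch := chern (RegDigraph n d) (fun X => ff Q X) t0 r ht00
  refine hch.trans ?_
  have := mul_le_mul_of_nonneg_left hg (Real.exp_pos (-(t0 * r))).le
  refine this.trans ?_
  rw [← mul_assoc, ← Real.exp_add]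
  refine mul_le_mul_of_nonneg_right ?_ (Nat.cast_nonneg _)
  apply Real.exp_le_exp.2
  have hl : t0 * 2 = Real.log (r / μ) - Real.log 8 := by
    rw [ht0, ← Real.log_div (by positivity) (by norm_num)]
    rw [div_mul_cancel₀ _ (two_ne_zero), div_div, mul_comm μ 8]
  have hl2 : 2 * Real.log 8 ≤ Real.log (r / μ) := by
    have : 2 * Real.log 8 = Real.log 64 := by
      rw [show (64 : ℝ) = 8 ^ 2 by norm_num, Real.log_pow]; norm_num
    rw [this]
    refine Real.log_le_log (by norm_num) ?_
    rw [le_div_iff₀ hμ0]; linarith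
  nlinarith
end tails

section disc
variable {n d : ℕ}

/-- entropy function `s log (e n / s)` -/
def LL (n s : ℕ) : ℝ := s * (1 + Real.log (n / s))

lemma LL_mono {s m : ℕ} (hs : 0 < s) (hsm : s ≤ m) (hmn : m ≤ n) : LL n s ≤ LL n m := by
  have hs' : (0 : ℝ) < s := by exact_mod_cast hs
  have hm' : (0 : ℝ) < m := by exact_mod_cast lt_of_lt_of_le hs hsm
  have hn' : (0 : ℝ) < n := by exact_mod_cast lt_of_lt_of_le hs (hsm.trans hmn)
  have h1 : (s : ℝ) ≤ m := by exact_mod_cast hsm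
  have h2 : (m : ℝ) ≤ n := by exact_mod_cast hmn
  unfold LL
  rw [Real.log_div hn'.ne' hs'.ne', Real.log_div hn'.ne' hm'.ne']
  have a := Real.log_le_sub_one_of_pos (show (0 : ℝ) < m / s by positivity)
  rw [Real.log_div hm'.ne' hs'.ne'] at a
  have b : (s : ℝ) * (Real.log m - Real.log s) ≤ m - s := by
    calc (s : ℝ) * (Real.log m - Real.log s) ≤ s * (m / s - 1) := by gcongr
      _ = m - s := by field_simp
  have c : Real.log m ≤ Real.log n := Real.log_le_log hm' h2
  nlinarith

lemma LL_one_le {s : ℕ} (hs : 0 < s) (hsn : s ≤ n) : 1 + Real.log n ≤ LL n s := by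
  have := LL_mono (n := n) (s := 1) (m := s) one_pos hs hsn
  simpa [LL] using this

lemma choose_le_LL {s : ℕ} (hs : 0 < s) (hsn : s ≤ n) :
    (n.choose s : ℝ) ≤ Real.exp (LL n s) := by
  have hs' : (0 : ℝ) < s := by exact_mod_cast hs
  have hn' : (0 : ℝ) < n := by exact_mod_cast lt_of_lt_of_le hs hsn
  have h1 : (n.choose s : ℝ) ≤ (n : ℝ) ^ s / (s.factorial : ℝ) := Nat.choose_le_pow_div s n
  have h2 := Real.pow_div_factorial_le_exp (s : ℝ) hs'.le s
  have h3 : Real.exp (LL n s) = Real.exp s * (n / s : ℝ) ^ s := by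
    unfold LL
    rw [mul_add, mul_one, Real.exp_add]
    congr 1
    rw [← Real.rpow_natCast, Real.rpow_def_of_pos (by positivity), mul_comm]
  rw [h3]
  calc (n.choose s : ℝ) ≤ (n : ℝ) ^ s / (s.factorial : ℝ) := h1
    _ = (s : ℝ) ^ s / s.factorial * (n / s : ℝ) ^ s := by
        rw [div_pow]; field_simp
    _ ≤ _ := by gcongr

/-- expected number of edges -/
def mu (n d : ℕ) (S T : Finset (Fin n)) : ℝ := (S.card : ℝ) * T.card * d / n

/-- discrepancy property -/
def Disc (κ : ℝ) (d : ℕ) (X : Fin n → Fin n → Bool) : Prop :=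
  ∀ S T : Finset (Fin n), S.Nonempty → T.Nonempty →
    eST S T X ≤ 64 * mu n d S T ∨
    eST S T X * Real.log (eST S T X / mu n d S T) ≤ κ * LL n (max S.card T.card)

lemma eST_nat (S T : Finset (Fin n)) (X : Fin n → Fin n → Bool) :
    ∃ r : ℕ, r ≤ n ^ 2 ∧ eST S T X = r := by
  refine ⟨∑ u ∈ S, ∑ v ∈ T, if X u v then 1 else 0, ?_, ?_⟩
  · calc ∑ u ∈ S, ∑ v ∈ T, (if X u v then 1 else 0) ≤ ∑ u ∈ S, ∑ v ∈ T, 1 := by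
          refine Finset.sum_le_sum fun u _ => Finset.sum_le_sum fun v _ => ?_
          split_ifs <;> norm_num
      _ = S.card * T.card := by simp
      _ ≤ n * n := by
          have h1 := Finset.card_le_univ S
          have h2 := Finset.card_le_univ T
          rw [Fintype.card_fin] at h1 h2
          exact Nat.mul_le_mul h1 h2
      _ = n ^ 2 := by ring
  · unfold eST ent; push_cast; rfl

lemma sum_sets (hn : 0 < n) (c : ℝ) (hc : 1 ≤ c) :
    ∑ S ∈ (Finset.univ : Finset (Finset (Fin n))).filter (fun S => S.Nonempty),
      Real.exp (-(c * LL n S.card)) ≤ (n : ℝ) * (n : ℝ) ^ (-(c - 1)) := by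
  have hn' : (0 : ℝ) < n := by exact_mod_cast hn
  have e1 : ∑ S ∈ (Finset.univ : Finset (Finset (Fin n))).filter (fun S => S.Nonempty),
      Real.exp (-(c * LL n S.card)) = ∑ S ∈ (Finset.univ : Finset (Fin n)).powerset,
        (fun s : ℕ => if s = 0 then 0 else Real.exp (-(c * LL n s))) S.card := by
    rw [Finset.sum_filter, Finset.powerset_univ]
    refine Finset.sum_congr rfl fun S _ => ?_
    by_cases h : S.Nonempty
    · have : S.card ≠ 0 := h.card_pos.ne'
      simp [h, this]
    · have h' : S = ∅ := Finset.not_nonempty_iff_eq_empty.1 h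
      subst h'; simp
  have e2 := Finset.sum_powerset_apply_card
    (fun s : ℕ => if s = 0 then (0 : ℝ) else Real.exp (-(c * LL n s)))
    (x := (Finset.univ : Finset (Fin n)))
  refine (e1.trans e2).trans_le ?_
  rw [Finset.card_univ, Fintype.card_fin, Finset.sum_range_succ']
  simp only [if_true, smul_zero, add_zero, Nat.add_eq_zero_iff, one_ne_zero, and_false, if_false]
  calc ∑ k ∈ Finset.range n, n.choose (k + 1) • Real.exp (-(c * LL n (k + 1)))
      ≤ ∑ k ∈ Finset.range n, (n : ℝ) ^ (-(c - 1)) := by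
        refine Finset.sum_le_sum fun k hk => ?_
        have hk' : k + 1 ≤ n := Finset.mem_range.1 hk
        rw [nsmul_eq_mul]
        calc (n.choose (k + 1) : ℝ) * Real.exp (-(c * LL n (k + 1)))
            ≤ Real.exp (LL n (k + 1)) * Real.exp (-(c * LL n (k + 1))) := by
              gcongr; exact choose_le_LL (Nat.succ_pos k) hk'
          _ = Real.exp (-(c - 1) * LL n (k + 1)) := by rw [← Real.exp_add]; ring_nf
          _ ≤ Real.exp (Real.log n * (-(c - 1))) := by
              apply Real.exp_le_exp.2
              have := LL_one_le (Nat.succ_pos k) hk'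
              have h3 : Real.log n ≤ LL n (k + 1) := by linarith
              nlinarith
          _ = _ := by rw [Real.rpow_def_of_pos hn']
    _ = _ := by simp

lemma disc_prob (hd : 0 < d) (h8 : 8 * d ^ 3 ≤ n ^ 2) (K : ℝ) (hK : 0 < K) :
    (((RegDigraph n d).filter fun X => ¬ Disc (8 * (K + 6)) d X).card : ℝ)
      ≤ (n : ℝ) ^ (-K) * (RegDigraph n d).card := by
  have hn' := n_pos_of hd h8
  have hn : 0 < n := by exact_mod_cast hn'
  have hd' : (0 : ℝ) < d := by exact_mod_cast hd
  set N := (Finset.univ : Finset (Finset (Fin n))).filter (fun S => S.Nonempty) with hN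
  set Z : ℝ := ((RegDigraph n d).card : ℝ) with hZ
  set κ := 8 * (K + 6) with hκ
  set c : ℝ := (K + 6) / 2 with hc
  set Bd : Finset (Fin n) → Finset (Fin n) → ℕ → Finset (Fin n → Fin n → Bool) := fun S T r =>
    (RegDigraph n d).filter fun X => (r : ℝ) ≤ eST S T X ∧ 64 * mu n d S T < r ∧
      κ * LL n (max S.card T.card) < r * Real.log (r / mu n d S T) with hBd
  have hsub : ((RegDigraph n d).filter fun X => ¬ Disc κ d X) ⊆
      N.biUnion fun S => N.biUnion fun T => (Finset.Icc 1 (n ^ 2)).biUnion fun r => Bd S T r := by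
    intro X hX
    rw [Finset.mem_filter] at hX
    obtain ⟨hX1, hX2⟩ := hX
    unfold Disc at hX2
    push Not at hX2
    obtain ⟨S, T, hS, hT, h1, h2⟩ := hX2
    obtain ⟨r, hr, hre⟩ := eST_nat S T X
    rw [hre] at h1 h2
    have hmu : 0 ≤ mu n d S T := by unfold mu; positivity
    have hr0 : (0 : ℝ) < r := by linarith
    have hr1 : 0 < r := by exact_mod_cast hr0
    simp only [Finset.mem_biUnion]
    refine ⟨S, by simp [hN, hS], T, by simp [hN, hT], r, Finset.mem_Icc.2 ⟨hr1, hr⟩, ?_⟩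
    simp only [hBd, Finset.mem_filter]
    exact ⟨hX1, hre.ge, h1, h2⟩
  have hone : ∀ S ∈ N, ∀ T ∈ N, ∀ r ∈ Finset.Icc 1 (n ^ 2), ((Bd S T r).card : ℝ) ≤
      Real.exp (-(c * LL n S.card)) * Real.exp (-(c * LL n T.card)) * Z := by
    intro S hS T hT r hr
    have hS' : S.Nonempty := (Finset.mem_filter.1 hS).2
    have hT' : T.Nonempty := (Finset.mem_filter.1 hT).2
    by_cases hcond : 64 * mu n d S T < r ∧
      κ * LL n (max S.card T.card) < r * Real.log (r / mu n d S T)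
    · have h1 := pois_tail hd h8 S T hS' hT' r hcond.1
      have h2 : ((Bd S T r).card : ℝ) ≤ ((RegDigraph n d).filter fun X => (r : ℝ) ≤ eST S T X).card := by
        have : Bd S T r ⊆ (RegDigraph n d).filter fun X => (r : ℝ) ≤ eST S T X := by
          intro X hX
          simp only [hBd, Finset.mem_filter] at hX ⊢
          exact ⟨hX.1, hX.2.1⟩
        exact_mod_cast Finset.card_le_card this
      refine (h2.trans h1).trans ?_
      refine mul_le_mul_of_nonneg_right ?_ (Nat.cast_nonneg _)
      rw [← Real.exp_add]
      apply Real.exp_le_exp.2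
      have h3 := hcond.2
      unfold mu at h3
      have hSn : S.card ≤ n := by simpa using Finset.card_le_univ S
      have hTn : T.card ≤ n := by simpa using Finset.card_le_univ T
      have m1 : LL n S.card ≤ LL n (max S.card T.card) :=
        LL_mono hS'.card_pos (le_max_left _ _) (max_le hSn hTn)
      have m2 : LL n T.card ≤ LL n (max S.card T.card) :=
        LL_mono hT'.card_pos (le_max_right _ _) (max_le hSn hTn)
      have hc0 : 0 < c := by rw [hc]; positivity
      have hκc : κ = 16 * c := by rw [hκ, hc]; ring
      rw [hκc] at h3
      nlinarith
    · have : Bd S T r = ∅ := by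
        rw [Finset.eq_empty_iff_forall_notMem]
        intro X hX
        simp only [hBd, Finset.mem_filter] at hX
        exact hcond hX.2.2
      rw [this]
      simp only [Finset.card_empty, Nat.cast_zero]
      positivity
  have hb : (((RegDigraph n d).filter fun X => ¬ Disc κ d X).card : ℝ) ≤
      ∑ S ∈ N, ∑ T ∈ N, ∑ r ∈ Finset.Icc 1 (n ^ 2), ((Bd S T r).card : ℝ) := by
    have h1 := Finset.card_le_card hsub
    have h2 : (N.biUnion fun S => N.biUnion fun T => (Finset.Icc 1 (n ^ 2)).biUnion
        fun r => Bd S T r).card ≤ ∑ S ∈ N, ∑ T ∈ N, ∑ r ∈ Finset.Icc 1 (n ^ 2), (Bd S T r).card :=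
      Finset.card_biUnion_le.trans (Finset.sum_le_sum fun S _ => Finset.card_biUnion_le.trans
        (Finset.sum_le_sum fun T _ => Finset.card_biUnion_le))
    exact_mod_cast h1.trans h2
  refine hb.trans ?_
  have hss := sum_sets hn c (by rw [hc]; linarith)
  rw [← hN] at hss
  have hs0 : 0 ≤ ∑ S ∈ N, Real.exp (-(c * LL n S.card)) :=
    Finset.sum_nonneg fun _ _ => (Real.exp_pos _).le
  calc ∑ S ∈ N, ∑ T ∈ N, ∑ r ∈ Finset.Icc 1 (n ^ 2), ((Bd S T r).card : ℝ)
      ≤ ∑ S ∈ N, ∑ T ∈ N, ∑ r ∈ Finset.Icc 1 (n ^ 2),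
        Real.exp (-(c * LL n S.card)) * Real.exp (-(c * LL n T.card)) * Z :=
        Finset.sum_le_sum fun S hS => Finset.sum_le_sum fun T hT => Finset.sum_le_sum fun r hr =>
          hone S hS T hT r hr
    _ = (n : ℝ) ^ 2 * (∑ S ∈ N, Real.exp (-(c * LL n S.card))) ^ 2 * Z := by
        simp only [Finset.sum_const, Nat.card_Icc, nsmul_eq_mul, ← Finset.mul_sum, ← Finset.sum_mul]
        push_cast [Nat.add_sub_cancel]
        ring
    _ ≤ (n : ℝ) ^ 2 * ((n : ℝ) * (n : ℝ) ^ (-(c - 1))) ^ 2 * Z := by gcongr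
    _ = _ := by
        congr 1
        rw [mul_pow, ← Real.rpow_natCast ((n : ℝ) ^ (-(c - 1))), ← Real.rpow_mul hn'.le,
          ← Real.rpow_natCast (n : ℝ) 2, ← Real.rpow_add hn', ← Real.rpow_add hn']
        congr 1
        rw [hc]; push_cast; ring
end disc

section heavy

lemma geo_nat (N : ℕ) : ∑ k ∈ Finset.range N, ((1 : ℝ) / 2) ^ k ≤ 2 := sum_geometric_two_le N

lemma geo_int (I : Finset ℤ) (R : ℝ) (hR : 0 < R) :
    ∑ i ∈ I, (if (2 : ℝ) ^ i ≤ R then (2 : ℝ) ^ i else 0) ≤ 2 * R := by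
  rw [← Finset.sum_filter]
  set F := I.filter (fun i => (2 : ℝ) ^ i ≤ R) with hF
  rcases F.eq_empty_or_nonempty with h | h
  · rw [h]; simp; positivity
  · set m := F.max' h with hm
    have hmF : m ∈ F := F.max'_mem h
    have hmR : (2 : ℝ) ^ m ≤ R := (Finset.mem_filter.1 hmF).2
    have hle : ∀ i ∈ F, i ≤ m := fun i hi => F.le_max' i hi
    have e1 : ∑ i ∈ F, (2 : ℝ) ^ i = 2 ^ m * ∑ k ∈ F.image (fun i => (m - i).toNat), ((1 : ℝ) / 2) ^ k := by
      rw [Finset.sum_image, Finset.mul_sum]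
      · refine Finset.sum_congr rfl fun i hi => ?_
        have := hle i hi
        rw [← zpow_natCast, Int.toNat_of_nonneg (by omega), one_div, inv_zpow, ← zpow_neg,
          ← zpow_add₀ (by norm_num)]
        congr 1; ring
      · intro i hi j hj hij
        have h1 := hle i hi
        have h2 := hle j hj
        simp only at hij
        omega
    rw [e1]
    have h3 : ∑ k ∈ F.image (fun i => (m - i).toNat), ((1 : ℝ) / 2) ^ k ≤ 2 := by
      set W := F.image (fun i => (m - i).toNat)
      refine le_trans ?_ (geo_nat (W.sup id + 1))
      refine Finset.sum_le_sum_of_subset_of_nonneg ?_ fun _ _ _ => by positivity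
      intro k hk
      exact Finset.mem_range.2 (Nat.lt_succ_of_le (Finset.le_sup (f := id) hk))
    have h4 : (0 : ℝ) < 2 ^ m := by positivity
    nlinarith

lemma geo_int' (I : Finset ℤ) (R : ℝ) (hR : 0 < R) :
    ∑ i ∈ I, (if 1 ≤ R * (2 : ℝ) ^ i then ((2 : ℝ) ^ i)⁻¹ else 0) ≤ 2 * R := by
  have h := geo_int (I.image (fun i => -i)) R hR
  rw [Finset.sum_image (fun a _ b _ hab => neg_injective hab)] at h
  refine le_trans (le_of_eq ?_) h
  refine Finset.sum_congr rfl fun i _ => ?_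
  have hp : (0 : ℝ) < 2 ^ i := by positivity
  rw [zpow_neg]
  have : (1 ≤ R * (2 : ℝ) ^ i) ↔ ((2 : ℝ) ^ i)⁻¹ ≤ R := by
    rw [inv_le_iff_one_le_mul₀ hp]
  simp only [this]

/-- bounding function for one dyadic pair -/
def GG (κ D s t A B : ℝ) : ℝ :=
  (if A ≤ D * B then 4 * κ * B * t * A else 0) + (if A ≤ D then 4 * κ * A * B ^ 2 * t else 0)
    + (if D ≤ 4 * (A * B) then 3 * A * s * D ^ 2 * B⁻¹ else 0)

lemma GG_nonneg {κ D s t A B : ℝ} (hκ : 0 ≤ κ) (hs : 0 ≤ s) (ht : 0 ≤ t)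
    (hA : 0 < A) (hB : 0 < B) : 0 ≤ GG κ D s t A B := by
  unfold GG
  refine add_nonneg (add_nonneg ?_ ?_) ?_ <;> split_ifs <;> positivity

lemma half_bound {κ D s t A B n e : ℝ} (hκ : 0 ≤ κ) (hD : 0 < D) (hs : 0 < s) (ht : 0 < t)
    (htn : t ≤ n) (hA : 0 < A) (hB : 0 < B) (he : 0 < e)
    (hAB : D ≤ 4 * (A * B)) (h1 : 64 * (s * t * D ^ 2 / n) < e)
    (h2 : e * Real.log (e / (s * t * D ^ 2 / n)) ≤ κ * (t * (1 + Real.log (n / t))))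
    (h3 : 256 * (A * B) < e / (s * t * D ^ 2 / n) * D) (h4 : A ≤ D * B) :
    A * B * e ≤ GG κ D s t A B := by
  have hn : 0 < n := lt_of_lt_of_le ht htn
  set μ := s * t * D ^ 2 / n with hμ
  have hμ0 : 0 < μ := by positivity
  set r := e / μ with hr
  have her : e = r * μ := by rw [hr]; field_simp
  have hr64 : 64 < r := by rw [hr, lt_div_iff₀ hμ0]; exact h1
  have hr0 : 0 < r := by linarith
  have hlr : 1 ≤ Real.log r := by
    rw [Real.le_log_iff_exp_le hr0]
    have := Real.exp_one_lt_d9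
    linarith
  set L := 1 + Real.log (n / t) with hL
  have hL1 : 1 ≤ L := by
    have : 0 ≤ Real.log (n / t) := Real.log_nonneg (by rw [le_div_iff₀ ht]; linarith)
    linarith
  have g1 : (0:ℝ) ≤ (if A ≤ D * B then 4 * κ * B * t * A else 0) := by split_ifs <;> positivity
  have g2 : (0:ℝ) ≤ (if A ≤ D then 4 * κ * A * B ^ 2 * t else 0) := by split_ifs <;> positivity
  have g3 : (0:ℝ) ≤ (if D ≤ 4 * (A * B) then 3 * A * s * D ^ 2 * B⁻¹ else 0) := by
    split_ifs <;> positivity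
  unfold GG
  by_cases c1 : L ≤ 4 * Real.log r
  · have : e * L ≤ (4 * κ * t) * L := by nlinarith
    have he' : e ≤ 4 * κ * t := le_of_mul_le_mul_right this (by linarith)
    rw [if_pos h4] at g1 ⊢
    have : A * B * e ≤ 4 * κ * B * t * A := by
      calc A * B * e ≤ A * B * (4 * κ * t) := by gcongr
        _ = _ := by ring
    linarith
  · push Not at c1
    by_cases c2 : L ≤ 4 * Real.log B
    · have hrB : r < B := by
        have : Real.log r < Real.log B := by linarith
        exact (Real.log_lt_log_iff hr0 hB).1 this
      have hAD : A ≤ D := by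
        by_contra hc
        push Not at hc
        have : r * D < A * B := by nlinarith
        nlinarith
      have hlB : Real.log B ≤ B := (Real.log_le_sub_one_of_pos hB).trans (by linarith)
      have he' : e ≤ 4 * κ * t * B := by
        calc e ≤ e * Real.log r := by nlinarith
          _ ≤ κ * (t * L) := h2
          _ ≤ κ * (t * (4 * B)) := by gcongr; linarith
          _ = _ := by ring
      rw [if_pos hAD] at g2 ⊢
      have : A * B * e ≤ 4 * κ * A * B ^ 2 * t := by
        calc A * B * e ≤ A * B * (4 * κ * t * B) := by gcongr
          _ = _ := by ring
      linarith
    · push Not at c2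
      have hBx : B ≤ Real.exp (L / 4) := by
        rw [← Real.log_le_iff_le_exp hB]; linarith
      have hrx : r ≤ Real.exp (L / 4) := by
        rw [← Real.log_le_iff_le_exp hr0]; linarith
      have htx : t / n = Real.exp (1 - L) := by
        rw [hL, show 1 - (1 + Real.log (n / t)) = Real.log (t / n) by
          rw [Real.log_div hn.ne' ht.ne', Real.log_div ht.ne' hn.ne']; ring]
        rw [Real.exp_log (by positivity)]
      have key : B ^ 2 * r * (t / n) ≤ 3 := by
        calc B ^ 2 * r * (t / n) ≤ Real.exp (L / 4) ^ 2 * Real.exp (L / 4) * Real.exp (1 - L) := by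
              rw [htx]; gcongr
          _ = Real.exp (1 - L / 4) := by
              rw [← Real.exp_nat_mul, ← Real.exp_add, ← Real.exp_add]; congr 1; push_cast; ring
          _ ≤ Real.exp 1 := Real.exp_le_exp.2 (by linarith)
          _ ≤ 3 := by have := Real.exp_one_lt_d9; linarith
      rw [if_pos hAB] at g3 ⊢
      have : A * B * e ≤ 3 * A * s * D ^ 2 * B⁻¹ := by
        calc A * B * e = (B ^ 2 * r * (t / n)) * (A * s * D ^ 2 * B⁻¹) := by
              rw [her, hμ]; field_simp
          _ ≤ 3 * (A * s * D ^ 2 * B⁻¹) := by gcongr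
          _ = _ := by ring
      linarith

/-- the full bounding function -/
def FF (κ D n s t A B e : ℝ) : ℝ :=
  256 * D / n * (A ^ 2 * s) * (B ^ 2 * t) + A ^ 2 / D * e + B ^ 2 / D * e
    + GG κ D s t A B + GG κ D t s B A

lemma full_bound {κ D s t A B n e : ℝ} (hκ : 0 ≤ κ) (hD : 0 < D) (hs : 0 < s) (ht : 0 < t)
    (hsn : s ≤ n) (htn : t ≤ n) (hA : 0 < A) (hB : 0 < B) (he : 0 ≤ e)
    (hAB : D ≤ 4 * (A * B))
    (h : e ≤ 64 * (s * t * D ^ 2 / n) ∨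
      e * Real.log (e / (s * t * D ^ 2 / n)) ≤ κ * (max s t * (1 + Real.log (n / max s t)))) :
    A * B * e ≤ FF κ D n s t A B e := by
  have hn : 0 < n := lt_of_lt_of_le ht htn
  have t1 : 0 ≤ 256 * D / n * (A ^ 2 * s) * (B ^ 2 * t) := by positivity
  have t2 : 0 ≤ A ^ 2 / D * e := by positivity
  have t3 : 0 ≤ B ^ 2 / D * e := by positivity
  have t4 : 0 ≤ GG κ D s t A B := GG_nonneg hκ hs.le ht.le hA hB
  have t5 : 0 ≤ GG κ D t s B A := GG_nonneg hκ ht.le hs.le hB hA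
  unfold FF
  have hμ0 : 0 < s * t * D ^ 2 / n := by positivity
  by_cases c1 : e * D ≤ 256 * (A * B) * (s * t * D ^ 2 / n)
  · have : A * B * e ≤ 256 * D / n * (A ^ 2 * s) * (B ^ 2 * t) := by
      have : A * B * (e * D) ≤ A * B * (256 * (A * B) * (s * t * D ^ 2 / n)) := by gcongr
      have e2 : A * B * (256 * (A * B) * (s * t * D ^ 2 / n)) =
        256 * D / n * (A ^ 2 * s) * (B ^ 2 * t) * D := by field_simp
      rw [e2, ← mul_assoc] at this
      exact le_of_mul_le_mul_right this hD
    linarith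
  push Not at c1
  have c0 : 64 * (s * t * D ^ 2 / n) < e := by
    have : 64 * D * (s * t * D ^ 2 / n) ≤ 256 * (A * B) * (s * t * D ^ 2 / n) :=
      mul_le_mul_of_nonneg_right (by linarith) hμ0.le
    nlinarith
  have he' : 0 < e := by linarith
  have h' := h.resolve_left (not_le.2 c0)
  have c3 : 256 * (A * B) < e / (s * t * D ^ 2 / n) * D := by
    rw [div_mul_eq_mul_div, lt_div_iff₀ hμ0]; exact c1
  by_cases c4 : A ≤ D * B
  · by_cases c5 : B ≤ D * A
    · rcases le_total s t with hst | hst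
      · rw [max_eq_right hst] at h'
        have := half_bound hκ hD hs ht htn hA hB he' hAB c0 h' c3 c4
        linarith
      · rw [max_eq_left hst] at h'
        rw [mul_comm s t] at h' c0 c3
        rw [mul_comm A B] at c3 hAB
        have := half_bound hκ hD ht hs hsn hB hA he' hAB c0 h' c3 c5
        rw [mul_comm A B]
        linarith
    · push Not at c5
      have : A * B * e ≤ B ^ 2 / D * e := by
        gcongr
        rw [le_div_iff₀ hD]; nlinarith
      linarith
  · push Not at c4
    have : A * B * e ≤ A ^ 2 / D * e := by
      gcongr
      rw [le_div_iff₀ hD]; nlinarith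
    linarith

lemma sumG {κ D n : ℝ} (hκ : 0 ≤ κ) (hD : 0 < D) (I J : Finset ℤ) (s t : ℤ → ℝ)
    (hs : ∀ i, 0 ≤ s i) (ht : ∀ j, 0 ≤ t j)
    (hsI : ∑ i ∈ I, ((2 : ℝ) ^ i) ^ 2 * s i ≤ 2 * n)
    (htJ : ∑ j ∈ J, ((2 : ℝ) ^ j) ^ 2 * t j ≤ 2 * n) :
    ∑ i ∈ I, ∑ j ∈ J, GG κ D (s i) (t j) (2 ^ i) (2 ^ j) ≤ (32 * κ + 48) * n * D := by
  unfold GG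
  simp only [Finset.sum_add_distrib]
  have a1 : ∑ i ∈ I, ∑ j ∈ J, (if (2 : ℝ) ^ i ≤ D * 2 ^ j then 4 * κ * 2 ^ j * t j * 2 ^ i else 0)
      ≤ 16 * κ * n * D := by
    rw [Finset.sum_comm]
    calc ∑ j ∈ J, ∑ i ∈ I, (if (2 : ℝ) ^ i ≤ D * 2 ^ j then 4 * κ * 2 ^ j * t j * 2 ^ i else 0)
        = ∑ j ∈ J, 4 * κ * 2 ^ j * t j * ∑ i ∈ I, (if (2 : ℝ) ^ i ≤ D * 2 ^ j then (2 : ℝ) ^ i else 0) := by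
          refine Finset.sum_congr rfl fun j _ => ?_
          rw [Finset.mul_sum]
          refine Finset.sum_congr rfl fun i _ => ?_
          split_ifs <;> ring
      _ ≤ ∑ j ∈ J, 4 * κ * 2 ^ j * t j * (2 * (D * 2 ^ j)) := by
          refine Finset.sum_le_sum fun j _ => ?_
          have := ht j
          have := geo_int I (D * 2 ^ j) (by positivity)
          gcongr
      _ = 8 * κ * D * ∑ j ∈ J, ((2 : ℝ) ^ j) ^ 2 * t j := by
          rw [Finset.mul_sum]; refine Finset.sum_congr rfl fun j _ => ?_; ring
      _ ≤ 8 * κ * D * (2 * n) := by gcongr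
      _ = _ := by ring
  have a2 : ∑ i ∈ I, ∑ j ∈ J, (if (2 : ℝ) ^ i ≤ D then 4 * κ * 2 ^ i * (2 ^ j) ^ 2 * t j else 0)
      ≤ 16 * κ * n * D := by
    rw [Finset.sum_comm]
    calc ∑ j ∈ J, ∑ i ∈ I, (if (2 : ℝ) ^ i ≤ D then 4 * κ * 2 ^ i * (2 ^ j) ^ 2 * t j else 0)
        = ∑ j ∈ J, 4 * κ * ((2 ^ j) ^ 2 * t j) * ∑ i ∈ I, (if (2 : ℝ) ^ i ≤ D then (2 : ℝ) ^ i else 0) := by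
          refine Finset.sum_congr rfl fun j _ => ?_
          rw [Finset.mul_sum]
          refine Finset.sum_congr rfl fun i _ => ?_
          split_ifs <;> ring
      _ ≤ ∑ j ∈ J, 4 * κ * ((2 ^ j) ^ 2 * t j) * (2 * D) := by
          refine Finset.sum_le_sum fun j _ => ?_
          have := ht j
          have := geo_int I D hD
          gcongr
      _ = 8 * κ * D * ∑ j ∈ J, ((2 : ℝ) ^ j) ^ 2 * t j := by
          rw [Finset.mul_sum]; refine Finset.sum_congr rfl fun j _ => ?_; ring
      _ ≤ 8 * κ * D * (2 * n) := by gcongr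
      _ = _ := by ring
  have a3 : ∑ i ∈ I, ∑ j ∈ J, (if D ≤ 4 * ((2 : ℝ) ^ i * 2 ^ j) then
      3 * 2 ^ i * s i * D ^ 2 * ((2 : ℝ) ^ j)⁻¹ else 0) ≤ 48 * n * D := by
    calc ∑ i ∈ I, ∑ j ∈ J, (if D ≤ 4 * ((2 : ℝ) ^ i * 2 ^ j) then
      3 * 2 ^ i * s i * D ^ 2 * ((2 : ℝ) ^ j)⁻¹ else 0)
        = ∑ i ∈ I, 3 * 2 ^ i * s i * D ^ 2 * ∑ j ∈ J,
          (if 1 ≤ (4 * 2 ^ i / D) * (2 : ℝ) ^ j then ((2 : ℝ) ^ j)⁻¹ else 0) := by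
          refine Finset.sum_congr rfl fun i _ => ?_
          rw [Finset.mul_sum]
          refine Finset.sum_congr rfl fun j _ => ?_
          have : (1 ≤ (4 * 2 ^ i / D) * (2 : ℝ) ^ j) ↔ D ≤ 4 * ((2 : ℝ) ^ i * 2 ^ j) := by
            rw [div_mul_eq_mul_div, le_div_iff₀ hD, one_mul, mul_assoc]
          simp only [this]
          split_ifs <;> ring
      _ ≤ ∑ i ∈ I, 3 * 2 ^ i * s i * D ^ 2 * (2 * (4 * 2 ^ i / D)) := by
          refine Finset.sum_le_sum fun i _ => ?_
          have := hs i
          have := geo_int' J (4 * 2 ^ i / D) (by positivity)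
          gcongr
      _ = 24 * D * ∑ i ∈ I, ((2 : ℝ) ^ i) ^ 2 * s i := by
          rw [Finset.mul_sum]; refine Finset.sum_congr rfl fun j _ => ?_; field_simp; ring
      _ ≤ 24 * D * (2 * n) := by gcongr
      _ = _ := by ring
  linarith

lemma heavy_sum {κ D n : ℝ} (hκ : 0 ≤ κ) (hD : 0 < D) (hn : 0 < n) (I J : Finset ℤ) (s t : ℤ → ℝ)
    (e : ℤ → ℤ → ℝ)
    (hs : ∀ i, 0 ≤ s i) (ht : ∀ j, 0 ≤ t j) (he : ∀ i j, 0 ≤ e i j)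
    (hsI : ∑ i ∈ I, ((2 : ℝ) ^ i) ^ 2 * s i ≤ 2 * n)
    (htJ : ∑ j ∈ J, ((2 : ℝ) ^ j) ^ 2 * t j ≤ 2 * n)
    (hei : ∀ i, ∑ j ∈ J, e i j ≤ D ^ 2 * s i)
    (hej : ∀ j, ∑ i ∈ I, e i j ≤ D ^ 2 * t j)
    (hb : ∀ i ∈ I, ∀ j ∈ J, D ≤ 4 * ((2 : ℝ) ^ i * 2 ^ j) →
      2 ^ i * 2 ^ j * e i j ≤ FF κ D n (s i) (t j) (2 ^ i) (2 ^ j) (e i j)) :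
    ∑ i ∈ I, ∑ j ∈ J, (if D ≤ 4 * ((2 : ℝ) ^ i * 2 ^ j) then 2 ^ i * 2 ^ j * e i j else 0)
      ≤ (1124 + 64 * κ) * n * D := by
  have hFF : ∀ i j, 0 ≤ FF κ D n (s i) (t j) (2 ^ i) (2 ^ j) (e i j) := by
    intro i j
    have := hs i
    have := ht j
    have := he i j
    unfold FF
    have := GG_nonneg (D := D) hκ (hs i) (ht j) (A := 2 ^ i) (B := 2 ^ j) (by positivity) (by positivity)
    have := GG_nonneg (D := D) hκ (ht j) (hs i) (A := 2 ^ j) (B := 2 ^ i) (by positivity) (by positivity)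
    positivity
  calc ∑ i ∈ I, ∑ j ∈ J, (if D ≤ 4 * ((2 : ℝ) ^ i * 2 ^ j) then 2 ^ i * 2 ^ j * e i j else 0)
      ≤ ∑ i ∈ I, ∑ j ∈ J, FF κ D n (s i) (t j) (2 ^ i) (2 ^ j) (e i j) := by
        refine Finset.sum_le_sum fun i hi => Finset.sum_le_sum fun j hj => ?_
        split_ifs with h
        · exact hb i hi j hj h
        · exact hFF i j
    _ ≤ _ := by
        unfold FF
        simp only [Finset.sum_add_distrib]
        have b1 : ∑ i ∈ I, ∑ j ∈ J, 256 * D / n * (((2 : ℝ) ^ i) ^ 2 * s i) * ((2 ^ j) ^ 2 * t j)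
            ≤ 1024 * n * D := by
          simp only [← Finset.mul_sum, ← Finset.sum_mul]
          have p1 : 0 ≤ ∑ i ∈ I, ((2 : ℝ) ^ i) ^ 2 * s i :=
            Finset.sum_nonneg fun i _ => mul_nonneg (by positivity) (hs i)
          have p2 : 0 ≤ ∑ j ∈ J, ((2 : ℝ) ^ j) ^ 2 * t j :=
            Finset.sum_nonneg fun i _ => mul_nonneg (by positivity) (ht i)
          calc _ ≤ 256 * D / n * (2 * n) * (2 * n) := by gcongr
            _ = _ := by field_simp; ring
        have b2 : ∑ i ∈ I, ∑ j ∈ J, ((2 : ℝ) ^ i) ^ 2 / D * e i j ≤ 2 * n * D := by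
          simp only [← Finset.mul_sum]
          calc _ ≤ ∑ i ∈ I, ((2 : ℝ) ^ i) ^ 2 / D * (D ^ 2 * s i) := by
                refine Finset.sum_le_sum fun i _ => ?_
                have := hei i
                gcongr
            _ = D * ∑ i ∈ I, ((2 : ℝ) ^ i) ^ 2 * s i := by
                rw [Finset.mul_sum]; refine Finset.sum_congr rfl fun i _ => ?_; field_simp
            _ ≤ D * (2 * n) := by gcongr
            _ = _ := by ring
        have b3 : ∑ i ∈ I, ∑ j ∈ J, ((2 : ℝ) ^ j) ^ 2 / D * e i j ≤ 2 * n * D := by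
          rw [Finset.sum_comm]
          simp only [← Finset.mul_sum]
          calc _ ≤ ∑ i ∈ J, ((2 : ℝ) ^ i) ^ 2 / D * (D ^ 2 * t i) := by
                refine Finset.sum_le_sum fun i _ => ?_
                have := hej i
                gcongr
            _ = D * ∑ i ∈ J, ((2 : ℝ) ^ i) ^ 2 * t i := by
                rw [Finset.mul_sum]; refine Finset.sum_congr rfl fun i _ => ?_; field_simp
            _ ≤ D * (2 * n) := by gcongr
            _ = _ := by ring
        have b4 := sumG hκ hD I J s t hs ht hsI htJ
        have b5 := sumG hκ hD J I t s ht hs htJ hsI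
        rw [Finset.sum_comm] at b5
        linarith
end heavy

section heavydet
variable {n d : ℕ}

/-- support -/
def PS (p : Fin n → ℝ) : Finset (Fin n) := Finset.univ.filter fun u => 0 < p u
/-- dyadic levels in use -/
def IV (p : Fin n → ℝ) : Finset ℤ := (PS p).image fun u => Int.log 2 (p u)
/-- dyadic level set -/
def SV (p : Fin n → ℝ) (i : ℤ) : Finset (Fin n) := (PS p).filter fun u => Int.log 2 (p u) = i

lemma mem_SV {p : Fin n → ℝ} {i : ℤ} {u : Fin n} (h : u ∈ SV p i) :
    0 < p u ∧ (2 : ℝ) ^ i ≤ p u ∧ p u < 2 * 2 ^ i := by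
  unfold SV PS at h
  simp only [Finset.mem_filter, Finset.mem_univ, true_and] at h
  obtain ⟨h1, h2⟩ := h
  have a := Int.zpow_log_le_self (b := 2) (r := p u) one_lt_two h1
  have b := Int.lt_zpow_succ_log_self (b := 2) one_lt_two (p u)
  rw [h2] at a b
  rw [zpow_add_one₀ (by norm_num)] at b
  push_cast at a b
  exact ⟨h1, a, by linarith⟩

lemma SV_nonempty {p : Fin n → ℝ} {i : ℤ} (h : i ∈ IV p) : (SV p i).Nonempty := by
  unfold IV at h
  obtain ⟨u, hu, rfl⟩ := Finset.mem_image.1 h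
  exact ⟨u, Finset.mem_filter.2 ⟨hu, rfl⟩⟩

lemma lvl_sum (p : Fin n → ℝ) (f : Fin n → ℝ) :
    ∑ i ∈ IV p, ∑ u ∈ SV p i, f u = ∑ u ∈ PS p, f u := by
  unfold SV
  exact Finset.sum_fiberwise_of_maps_to (fun u hu => Finset.mem_image_of_mem _ hu) f

lemma lvl_sum_le (p : Fin n → ℝ) (f : Fin n → ℝ) (hf : ∀ u, 0 ≤ f u) :
    ∑ i ∈ IV p, ∑ u ∈ SV p i, f u ≤ ∑ u, f u := by
  rw [lvl_sum]
  exact Finset.sum_le_sum_of_subset_of_nonneg (Finset.subset_univ _) fun u _ _ => hf u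

lemma lvl_sum_eq (p : Fin n → ℝ) (f : Fin n → ℝ) (hf : ∀ u, p u ≤ 0 → f u = 0) :
    ∑ u, f u = ∑ i ∈ IV p, ∑ u ∈ SV p i, f u := by
  rw [lvl_sum]
  symm
  refine Finset.sum_subset (Finset.subset_univ _) fun u _ hu => hf u ?_
  unfold PS at hu
  simpa using hu

lemma lvl_sq (p : Fin n → ℝ) (m : ℝ) (hp : ∑ u, p u ^ 2 ≤ m) :
    ∑ i ∈ IV p, ((2 : ℝ) ^ i) ^ 2 * ((SV p i).card : ℝ) ≤ m := by
  refine le_trans ?_ hp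
  refine le_trans ?_ (lvl_sum_le p (fun u => p u ^ 2) fun u => sq_nonneg _)
  refine Finset.sum_le_sum fun i _ => ?_
  rw [mul_comm, ← nsmul_eq_mul]
  refine Finset.card_nsmul_le_sum _ _ _ fun u hu => ?_
  have := mem_SV hu
  have h0 : (0 : ℝ) < 2 ^ i := by positivity
  gcongr
  exact this.2.1

lemma heavy_det (hd : 0 < d) (h8 : 8 * d ^ 3 ≤ n ^ 2) {X : Fin n → Fin n → Bool}
    (hX : X ∈ RegDigraph n d) (κ : ℝ) (hκ : 0 ≤ κ) (hdisc : Disc κ d X) (x y : Fin n → ℝ)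
    (hx : ∑ u, x u ^ 2 ≤ 2) (hy : ∑ u, y u ^ 2 ≤ 2) :
    ∑ u, ∑ v, (if |x u * y v| ≤ Real.sqrt d / n then 0 else |x u * y v| * ent X u v)
      ≤ 4 * (1124 + 64 * κ) * Real.sqrt d := by
  have hn := n_pos_of hd h8
  have hd' : (0 : ℝ) < d := by exact_mod_cast hd
  set D := Real.sqrt d with hD
  have hD0 : 0 < D := Real.sqrt_pos.2 hd'
  have hD2 : D ^ 2 = d := Real.sq_sqrt hd'.le
  set m := Real.sqrt n with hm
  have hm0 : 0 < m := Real.sqrt_pos.2 hn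
  have hm2 : m ^ 2 = n := Real.sq_sqrt hn.le
  set p : Fin n → ℝ := fun u => |x u| * m with hp
  set q : Fin n → ℝ := fun u => |y u| * m with hq
  have hps : ∑ u, p u ^ 2 ≤ 2 * n := by
    simp only [hp, mul_pow, sq_abs, hm2, ← Finset.sum_mul]; gcongr
  have hqs : ∑ u, q u ^ 2 ≤ 2 * n := by
    simp only [hq, mul_pow, sq_abs, hm2, ← Finset.sum_mul]; gcongr
  have hpq : ∀ u v, |x u * y v| = p u * q v / n := by
    intro u v
    rw [abs_mul, ← hm2]; simp only [hp, hq]; field_simp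
  have hx0 : ∀ u, p u ≤ 0 → x u = 0 := by
    intro u hu
    by_contra hc
    have : 0 < p u := mul_pos (abs_pos.2 hc) hm0
    linarith
  have hy0 : ∀ u, q u ≤ 0 → y u = 0 := by
    intro u hu
    by_contra hc
    have : 0 < q u := mul_pos (abs_pos.2 hc) hm0
    linarith
  have e0 : ∀ S T : Finset (Fin n), 0 ≤ eST S T X := fun S T =>
    Finset.sum_nonneg fun u _ => Finset.sum_nonneg fun v _ => ent_nonneg X u v
  have main := heavy_sum (κ := κ) (D := D) (n := n) hκ hD0 hn (IV p) (IV q)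
    (fun i => ((SV p i).card : ℝ)) (fun i => ((SV q i).card : ℝ))
    (fun i j => eST (SV p i) (SV q j) X) (fun i => Nat.cast_nonneg _) (fun i => Nat.cast_nonneg _)
    (fun i j => e0 _ _) (lvl_sq p _ hps) (lvl_sq q _ hqs)
    (by
      intro i
      simp only [eST]
      rw [Finset.sum_comm, hD2]
      calc _ ≤ ∑ u ∈ SV p i, (d : ℝ) := by
            refine Finset.sum_le_sum fun u _ => ?_
            rw [← row_sum hX u]
            exact lvl_sum_le q _ fun v => ent_nonneg X u v
        _ = _ := by simp [mul_comm])
    (by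
      intro j
      simp only [eST]
      rw [hD2]
      calc _ ≤ ∑ u, ∑ v ∈ SV q j, ent X u v :=
            lvl_sum_le p _ fun u => Finset.sum_nonneg fun v _ => ent_nonneg X u v
        _ = ∑ v ∈ SV q j, (d : ℝ) := by
            rw [Finset.sum_comm]
            exact Finset.sum_congr rfl fun v _ => col_sum hX v
        _ = _ := by simp [mul_comm])
    (by
      intro i hi j hj hij
      have hS := SV_nonempty hi
      have hT := SV_nonempty hj
      have hs : (0 : ℝ) < (SV p i).card := by exact_mod_cast hS.card_pos
      have ht : (0 : ℝ) < (SV q j).card := by exact_mod_cast hT.card_pos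
      have hsn : ((SV p i).card : ℝ) ≤ n := by
        have := Finset.card_le_univ (SV p i); rw [Fintype.card_fin] at this; exact_mod_cast this
      have htn : ((SV q j).card : ℝ) ≤ n := by
        have := Finset.card_le_univ (SV q j); rw [Fintype.card_fin] at this; exact_mod_cast this
      refine full_bound hκ hD0 hs ht hsn htn (by positivity) (by positivity) (e0 _ _) hij ?_
      have := hdisc _ _ hS hT
      unfold mu LL at this
      rw [hD2]
      push_cast at this
      exact this)
  have hterm : ∀ i j, ∀ u ∈ SV p i, ∀ v ∈ SV q j,
      (if |x u * y v| ≤ D / n then 0 else |x u * y v| * ent X u v) ≤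
      (4 / n : ℝ) * (if D ≤ 4 * ((2 : ℝ) ^ i * 2 ^ j) then 2 ^ i * 2 ^ j * ent X u v else 0) := by
    intro i j u hu v hv
    obtain ⟨u1, u2, u3⟩ := mem_SV hu
    obtain ⟨v1, v2, v3⟩ := mem_SV hv
    have h2i : (0 : ℝ) < 2 ^ i := by positivity
    have h2j : (0 : ℝ) < 2 ^ j := by positivity
    have hen := ent_nonneg X u v
    have hlt : p u * q v ≤ 4 * ((2 : ℝ) ^ i * 2 ^ j) := by
      calc p u * q v ≤ (2 * 2 ^ i) * (2 * 2 ^ j) := by gcongr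
        _ = _ := by ring
    by_cases hc : |x u * y v| ≤ D / n
    · rw [if_pos hc]
      split_ifs <;> positivity
    · rw [if_neg hc]
      push Not at hc
      rw [hpq] at hc ⊢
      have h1 : D < p u * q v := (div_lt_div_iff_of_pos_right hn).1 hc
      rw [if_pos (by linarith)]
      calc p u * q v / n * ent X u v ≤ (4 * ((2 : ℝ) ^ i * 2 ^ j)) / n * ent X u v := by gcongr
        _ = _ := by ring
  calc ∑ u, ∑ v, (if |x u * y v| ≤ D / n then 0 else |x u * y v| * ent X u v)
      = ∑ i ∈ IV p, ∑ u ∈ SV p i, ∑ j ∈ IV q, ∑ v ∈ SV q j,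
        (if |x u * y v| ≤ D / n then 0 else |x u * y v| * ent X u v) := by
        rw [lvl_sum_eq p]
        · refine Finset.sum_congr rfl fun i _ => Finset.sum_congr rfl fun u _ => ?_
          exact lvl_sum_eq q _ fun v hv => by simp [hy0 v hv]
        · intro u hu
          simp [hx0 u hu]
    _ = ∑ i ∈ IV p, ∑ j ∈ IV q, ∑ u ∈ SV p i, ∑ v ∈ SV q j,
        (if |x u * y v| ≤ D / n then 0 else |x u * y v| * ent X u v) := by
        refine Finset.sum_congr rfl fun i _ => Finset.sum_comm
    _ ≤ ∑ i ∈ IV p, ∑ j ∈ IV q, ∑ u ∈ SV p i, ∑ v ∈ SV q j,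
        (4 / n : ℝ) * (if D ≤ 4 * ((2 : ℝ) ^ i * 2 ^ j) then 2 ^ i * 2 ^ j * ent X u v else 0) :=
        Finset.sum_le_sum fun i _ => Finset.sum_le_sum fun j _ => Finset.sum_le_sum fun u hu =>
          Finset.sum_le_sum fun v hv => hterm i j u hu v hv
    _ = (4 / n : ℝ) * ∑ i ∈ IV p, ∑ j ∈ IV q, (if D ≤ 4 * ((2 : ℝ) ^ i * 2 ^ j) then
          2 ^ i * 2 ^ j * eST (SV p i) (SV q j) X else 0) := by
        rw [Finset.mul_sum]
        refine Finset.sum_congr rfl fun i _ => ?_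
        rw [Finset.mul_sum]
        refine Finset.sum_congr rfl fun j _ => ?_
        split_ifs
        · simp only [eST, Finset.mul_sum]
        · simp
    _ ≤ (4 / n : ℝ) * ((1124 + 64 * κ) * n * D) := by gcongr
    _ = _ := by field_simp
end heavydet

section net
variable {n d : ℕ}

/-- integer points of the net -/
def NK (n : ℕ) : Finset (Fin n → ℤ) :=
  (Fintype.piFinset fun _ : Fin n => Finset.Icc (-(8 * n : ℤ)) (8 * n)).filter
    fun k => ∑ u, k u ^ 2 ≤ 8 * (n : ℤ)

/-- net vector -/
def nv (n : ℕ) (k : Fin n → ℤ) (u : Fin n) : ℝ := (k u : ℝ) / (2 * Real.sqrt n)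

lemma abs_le_sq_int (a : ℤ) : |a| ≤ a ^ 2 := by
  rw [← sq_abs]
  have := abs_nonneg a
  rcases this.eq_or_lt with h | h
  · rw [← h]; norm_num
  · nlinarith

lemma mem_NK {k : Fin n → ℤ} (h : ∑ u, k u ^ 2 ≤ 8 * (n : ℤ)) : k ∈ NK n := by
  unfold NK
  rw [Finset.mem_filter, Fintype.mem_piFinset]
  refine ⟨fun u => ?_, h⟩
  have h1 : k u ^ 2 ≤ 8 * (n : ℤ) :=
    (Finset.single_le_sum (f := fun u => k u ^ 2) (fun _ _ => sq_nonneg _) (Finset.mem_univ u)).trans h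
  have h2 := abs_le_sq_int (k u)
  have h3 := abs_le.1 (h2.trans h1)
  exact Finset.mem_Icc.2 h3

lemma geo_abs (I : Finset ℤ) : ∑ j ∈ I, ((2 : ℝ) ^ |j|)⁻¹ ≤ 4 := by
  have h1 := geo_int I 1 one_pos
  have h2 := geo_int' I 1 one_pos
  calc ∑ j ∈ I, ((2 : ℝ) ^ |j|)⁻¹ ≤ ∑ j ∈ I, ((if (2 : ℝ) ^ j ≤ 1 then (2 : ℝ) ^ j else 0) +
        (if 1 ≤ 1 * (2 : ℝ) ^ j then ((2 : ℝ) ^ j)⁻¹ else 0)) := by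
        refine Finset.sum_le_sum fun j _ => ?_
        have hp : (0 : ℝ) < 2 ^ j := by positivity
        rcases le_total 0 j with h | h
        · rw [abs_of_nonneg h]
          have : (1 : ℝ) ≤ 2 ^ j := one_le_zpow₀ (by norm_num) h
          rw [one_mul, if_pos this]
          split_ifs <;> linarith
        · rw [abs_of_nonpos h, zpow_neg, inv_inv]
          have : (2 : ℝ) ^ j ≤ 1 := zpow_le_one_of_nonpos₀ (by norm_num) h
          rw [if_pos this]
          split_ifs
          · have : (0 : ℝ) < (2 ^ j)⁻¹ := by positivity
            linarith
          · linarith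
    _ ≤ 4 := by rw [Finset.sum_add_distrib]; linarith

lemma NK_card : ((NK n).card : ℝ) ≤ Real.exp (7 * n) := by
  have h1 : ∀ k ∈ NK n, (1 : ℝ) ≤ 2 ^ (8 * n) * ∏ u, ((2 : ℝ) ^ |k u|)⁻¹ := by
    intro k hk
    have h := (Finset.mem_filter.1 hk).2
    have hs : ∑ u, |k u| ≤ 8 * (n : ℤ) :=
      (Finset.sum_le_sum fun u _ => abs_le_sq_int (k u)).trans h
    have e1 : ∏ u, ((2 : ℝ) ^ |k u|)⁻¹ = ((2 : ℝ) ^ (∑ u, |k u|))⁻¹ := by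
      rw [Finset.prod_inv_distrib]
      congr 1
      induction (Finset.univ : Finset (Fin n)) using Finset.induction_on with
      | empty => simp
      | insert a s ha ih => rw [Finset.prod_insert ha, Finset.sum_insert ha, ih,
          zpow_add₀ (by norm_num)]
    rw [e1, ← div_eq_mul_inv, le_div_iff₀ (by positivity), one_mul, ← zpow_natCast]
    refine zpow_le_zpow_right₀ (by norm_num) ?_
    push_cast; exact hs
  calc ((NK n).card : ℝ) = ∑ k ∈ NK n, (1 : ℝ) := by simp
    _ ≤ ∑ k ∈ NK n, 2 ^ (8 * n) * ∏ u, ((2 : ℝ) ^ |k u|)⁻¹ := Finset.sum_le_sum h1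
    _ ≤ ∑ k ∈ Fintype.piFinset fun _ : Fin n => Finset.Icc (-(8 * n : ℤ)) (8 * n),
          2 ^ (8 * n) * ∏ u, ((2 : ℝ) ^ |k u|)⁻¹ :=
        Finset.sum_le_sum_of_subset_of_nonneg (Finset.filter_subset _ _) fun _ _ _ => by positivity
    _ = 2 ^ (8 * n) * ∏ u : Fin n, ∑ j ∈ Finset.Icc (-(8 * n : ℤ)) (8 * n), ((2 : ℝ) ^ |j|)⁻¹ := by
        rw [Finset.prod_univ_sum, Finset.mul_sum]
    _ ≤ 2 ^ (8 * n) * ∏ u : Fin n, (4 : ℝ) := by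
        gcongr
        exact geo_abs _
    _ = (1024 : ℝ) ^ n := by
        rw [Finset.prod_const, Finset.card_univ, Fintype.card_fin, pow_mul, ← mul_pow]; norm_num
    _ ≤ Real.exp 7 ^ n := by
        gcongr
        have h2 : (2.718 : ℝ) ≤ Real.exp 1 := by have := Real.exp_one_gt_d9; linarith
        calc (1024 : ℝ) ≤ 2.718 ^ 7 := by norm_num
          _ ≤ Real.exp 1 ^ 7 := by gcongr
          _ = Real.exp 7 := by rw [← Real.exp_nat_mul]; norm_num
    _ = _ := by rw [← Real.exp_nat_mul, mul_comm]

lemma nv_sq (hn : (0 : ℝ) < n) {k : Fin n → ℤ} (h : k ∈ NK n) : ∑ u, nv n k u ^ 2 ≤ 2 := by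
  have h := (Finset.mem_filter.1 h).2
  have h' : ∑ u, (k u : ℝ) ^ 2 ≤ 8 * n := by exact_mod_cast h
  unfold nv
  simp only [div_pow, mul_pow, Real.sq_sqrt hn.le, ← Finset.sum_div]
  rw [div_le_iff₀ (by positivity)]
  linarith

lemma net_exists (hn : (0 : ℝ) < n) (x : EuclideanSpace ℝ (Fin n)) (hx : ‖x‖ ≤ 1) :
    ∃ k ∈ NK n, ‖x - WithLp.toLp 2 (nv n k)‖ ≤ 1 / 4 ∧ ‖WithLp.toLp 2 (nv n k)‖ ≤ 5 / 4 := by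
  set m := Real.sqrt n with hm
  have hm0 : 0 < m := Real.sqrt_pos.2 hn
  have hm2 : m ^ 2 = n := Real.sq_sqrt hn.le
  set k : Fin n → ℤ := fun u => round (2 * m * x u) with hk
  have h1 : ‖x - WithLp.toLp 2 (nv n k)‖ ≤ 1 / 4 := by
    refine abs_le_of_sq_le_sq' ?_ (by norm_num) |>.2
    rw [EuclideanSpace.real_norm_sq_eq]
    calc ∑ u, (x - WithLp.toLp 2 (nv n k)).ofLp u ^ 2 ≤ ∑ u : Fin n, 1 / (16 * (n : ℝ)) := by
          refine Finset.sum_le_sum fun u _ => ?_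
          have h := abs_sub_round (2 * m * x u)
          have e : (x - WithLp.toLp 2 (nv n k)).ofLp u = (2 * m * x u - k u) / (2 * m) := by
            simp only [PiLp.sub_apply, nv, ← hm]
            field_simp
          rw [e, div_pow, mul_pow, hm2, div_le_div_iff₀ (by positivity) (by positivity)]
          have h' := sq_le_sq' (abs_le.1 h).1 (abs_le.1 h).2
          simp only [hk]
          nlinarith
      _ = (1 / 4) ^ 2 := by
          rw [Finset.sum_const, Finset.card_univ, Fintype.card_fin, nsmul_eq_mul]
          field_simp; norm_num
  have h2 : ‖WithLp.toLp 2 (nv n k)‖ ≤ 5 / 4 := by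
    have := norm_sub_norm_le (WithLp.toLp 2 (nv n k)) x
    rw [norm_sub_rev] at this
    linarith
  refine ⟨k, mem_NK ?_, h1, h2⟩
  have h3 : ‖WithLp.toLp 2 (nv n k)‖ ^ 2 ≤ 2 := by nlinarith [norm_nonneg (WithLp.toLp 2 (nv n k))]
  rw [EuclideanSpace.real_norm_sq_eq] at h3
  simp only [nv, div_pow, mul_pow, ← hm, hm2, ← Finset.sum_div] at h3
  rw [div_le_iff₀ (by positivity)] at h3
  have : ∑ u, (k u : ℝ) ^ 2 ≤ 8 * n := by linarith
  exact_mod_cast this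

/-- light event on the whole net -/
def Lgt (d : ℕ) (X : Fin n → Fin n → Bool) : Prop :=
  ∀ k ∈ NK n, ∀ l ∈ NK n, ff (lt n d (nv n k) (nv n l)) X
    - (d / n : ℝ) * ∑ u, ∑ v, lt n d (nv n k) (nv n l) u v < 300 * Real.sqrt d

lemma light_prob (hd : 0 < d) (h8 : 8 * d ^ 3 ≤ n ^ 2) :
    (((RegDigraph n d).filter fun X => ¬ Lgt d X).card : ℝ)
      ≤ Real.exp (-(n : ℝ)) * (RegDigraph n d).card := by
  have hn := n_pos_of hd h8
  set Bd : (Fin n → ℤ) → (Fin n → ℤ) → Finset (Fin n → Fin n → Bool) := fun k l =>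
    (RegDigraph n d).filter fun X => 300 * Real.sqrt d ≤ ff (lt n d (nv n k) (nv n l)) X
      - (d / n : ℝ) * ∑ u, ∑ v, lt n d (nv n k) (nv n l) u v with hBd
  have hsub : ((RegDigraph n d).filter fun X => ¬ Lgt d X) ⊆
      (NK n).biUnion fun k => (NK n).biUnion fun l => Bd k l := by
    intro X hX
    rw [Finset.mem_filter] at hX
    obtain ⟨hX1, hX2⟩ := hX
    unfold Lgt at hX2
    push Not at hX2
    obtain ⟨k, hk, l, hl, h⟩ := hX2
    simp only [Finset.mem_biUnion]
    exact ⟨k, hk, l, hl, Finset.mem_filter.2 ⟨hX1, h⟩⟩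
  have h1 : (((RegDigraph n d).filter fun X => ¬ Lgt d X).card : ℝ) ≤
      ∑ k ∈ NK n, ∑ l ∈ NK n, ((Bd k l).card : ℝ) := by
    have h2 : ((NK n).biUnion fun k => (NK n).biUnion fun l => Bd k l).card ≤
        ∑ k ∈ NK n, ∑ l ∈ NK n, (Bd k l).card :=
      Finset.card_biUnion_le.trans (Finset.sum_le_sum fun S _ => Finset.card_biUnion_le)
    exact_mod_cast (Finset.card_le_card hsub).trans h2
  refine h1.trans ?_
  calc ∑ k ∈ NK n, ∑ l ∈ NK n, ((Bd k l).card : ℝ)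
      ≤ ∑ k ∈ NK n, ∑ l ∈ NK n, (Real.exp ((52 - 300 / 4) * n) * (RegDigraph n d).card) :=
        Finset.sum_le_sum fun k hk => Finset.sum_le_sum fun l hl =>
          light_tail hd h8 _ _ (nv_sq hn hk) (nv_sq hn hl) 300
    _ = (NK n).card * ((NK n).card * (Real.exp ((52 - 300 / 4) * n) * (RegDigraph n d).card)) := by
        simp only [Finset.sum_const, nsmul_eq_mul]
    _ ≤ Real.exp (7 * n) * (Real.exp (7 * n) * (Real.exp ((52 - 300 / 4) * n) * (RegDigraph n d).card)) := by
        have := NK_card (n := n)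
        gcongr
    _ = Real.exp (-9 * n) * (RegDigraph n d).card := by
        rw [← mul_assoc, ← mul_assoc, ← Real.exp_add, ← Real.exp_add]; congr 2; ring
    _ ≤ _ := by
        gcongr
        nlinarith

/-- total constant -/
def CC (κ : ℝ) : ℝ := 304 + 4 * (1124 + 64 * κ)

lemma mid_bound (hd : 0 < d) (h8 : 8 * d ^ 3 ≤ n ^ 2) {X : Fin n → Fin n → Bool}
    (hX : X ∈ RegDigraph n d) (κ : ℝ) (hκ : 0 ≤ κ) (hdisc : Disc κ d X) (x y : Fin n → ℝ)
    (hx : ∑ u, x u ^ 2 ≤ 2) (hy : ∑ u, y u ^ 2 ≤ 2)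
    (hl : ff (lt n d x y) X - (d / n : ℝ) * ∑ u, ∑ v, lt n d x y u v < 300 * Real.sqrt d) :
    ∑ u, ∑ v, x u * y v * (ent X u v - d / n) ≤ CC κ * Real.sqrt d := by
  have hn := n_pos_of hd h8
  have hd' : (0 : ℝ) < d := by exact_mod_cast hd
  have hh := heavy_det hd h8 hX κ hκ hdisc x y hx hy
  have hsq := sum_prod_sq x y hx hy
  set D := Real.sqrt d with hD
  have hD0 : 0 < D := Real.sqrt_pos.2 hd'
  have hD2 : D ^ 2 = d := Real.sq_sqrt hd'.le
  have hpt : ∀ u v, x u * y v * (ent X u v - d / n) ≤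
      lt n d x y u v * ent X u v - (d / n : ℝ) * lt n d x y u v +
      (if |x u * y v| ≤ D / n then 0 else |x u * y v| * ent X u v) + D * (x u * y v) ^ 2 := by
    intro u v
    unfold lt
    rw [← hD]
    have hq : 0 ≤ D * (x u * y v) ^ 2 := by positivity
    by_cases hc : |x u * y v| ≤ D / n
    · rw [if_pos hc, if_pos hc]
      linarith
    · rw [if_neg hc, if_neg hc]
      push Not at hc
      have h1 : x u * y v * ent X u v ≤ |x u * y v| * ent X u v :=
        mul_le_mul_of_nonneg_right (le_abs_self _) (ent_nonneg X u v)
      have h2 : -(x u * y v * (d / n)) ≤ |x u * y v| * (d / n) := by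
        rw [← neg_mul]
        exact mul_le_mul_of_nonneg_right (neg_le_abs _) (by positivity)
      have h3 : |x u * y v| * (d / n) ≤ D * (x u * y v) ^ 2 := by
        rw [← sq_abs (x u * y v), ← hD2]
        calc |x u * y v| * (D ^ 2 / n) = D * |x u * y v| * (D / n) := by ring
          _ ≤ D * |x u * y v| * |x u * y v| := by gcongr
          _ = _ := by ring
      linarith
  calc ∑ u, ∑ v, x u * y v * (ent X u v - d / n)
      ≤ ∑ u, ∑ v, (lt n d x y u v * ent X u v - (d / n : ℝ) * lt n d x y u v +
      (if |x u * y v| ≤ D / n then 0 else |x u * y v| * ent X u v) + D * (x u * y v) ^ 2) :=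
        Finset.sum_le_sum fun u _ => Finset.sum_le_sum fun v _ => hpt u v
    _ = (ff (lt n d x y) X - (d / n : ℝ) * ∑ u, ∑ v, lt n d x y u v)
        + ∑ u, ∑ v, (if |x u * y v| ≤ D / n then 0 else |x u * y v| * ent X u v)
        + D * ∑ u, ∑ v, (x u * y v) ^ 2 := by
        unfold ff
        simp only [Finset.sum_add_distrib, Finset.sum_sub_distrib, Finset.mul_sum]
    _ ≤ _ := by unfold CC; nlinarith

/-- centered matrix -/
def MM (d : ℕ) (X : Fin n → Fin n → Bool) : Matrix (Fin n) (Fin n) ℝ :=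
  Matrix.of fun u v => ent X u v - d / n

lemma inner_MM (X : Fin n → Fin n → Bool) (x y : Fin n → ℝ) :
    inner ℝ (WithLp.toLp 2 x) (Matrix.toEuclideanCLM (𝕜 := ℝ) (MM d X) (WithLp.toLp 2 y))
      = ∑ u, ∑ v, x u * y v * (ent X u v - d / n) := by
  rw [Matrix.inner_toEuclideanCLM]
  simp only [dotProduct, Matrix.mulVec, Finset.mul_sum, MM, Matrix.of_apply]
  refine Finset.sum_congr rfl fun u _ => Finset.sum_congr rfl fun v _ => ?_
  ring

lemma op_bound (hd : 0 < d) (h8 : 8 * d ^ 3 ≤ n ^ 2) {X : Fin n → Fin n → Bool}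
    (hX : X ∈ RegDigraph n d) (κ : ℝ) (hκ : 0 ≤ κ) (hdisc : Disc κ d X) (hl : Lgt d X) :
    ‖Matrix.toEuclideanCLM (𝕜 := ℝ) (MM d X)‖ ≤ 16 / 7 * CC κ * Real.sqrt d := by
  have hn := n_pos_of hd h8
  set T := Matrix.toEuclideanCLM (𝕜 := ℝ) (MM d X) with hT
  have hC : 0 ≤ CC κ := by unfold CC; positivity
  have hin : ∀ x y : EuclideanSpace ℝ (Fin n), ‖x‖ ≤ 1 → ‖y‖ ≤ 1 →
      inner ℝ x (T y) ≤ CC κ * Real.sqrt d + 9 / 16 * ‖T‖ := by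
    intro x y hx hy
    obtain ⟨k, hk, k1, k2⟩ := net_exists hn x hx
    obtain ⟨l, hl', l1, l2⟩ := net_exists hn y hy
    have hm := mid_bound hd h8 hX κ hκ hdisc _ _ (nv_sq hn hk) (nv_sq hn hl') (hl k hk l hl')
    rw [← inner_MM, ← hT] at hm
    set x' : EuclideanSpace ℝ (Fin n) := WithLp.toLp 2 (nv n k)
    set y' : EuclideanSpace ℝ (Fin n) := WithLp.toLp 2 (nv n l)
    have e : inner ℝ x (T y) = inner ℝ x' (T y') + inner ℝ (x - x') (T y) + inner ℝ x' (T (y - y')) := by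
      rw [map_sub, inner_sub_left, inner_sub_right]; ring
    have hT0 := norm_nonneg T
    have b1 : inner ℝ (x - x') (T y) ≤ 1 / 4 * ‖T‖ := by
      calc _ ≤ ‖x - x'‖ * ‖T y‖ := real_inner_le_norm _ _
        _ ≤ ‖x - x'‖ * (‖T‖ * ‖y‖) := by gcongr; exact T.le_opNorm y
        _ ≤ 1 / 4 * (‖T‖ * 1) := by gcongr
        _ = _ := by ring
    have b2 : inner ℝ x' (T (y - y')) ≤ 5 / 16 * ‖T‖ := by
      calc _ ≤ ‖x'‖ * ‖T (y - y')‖ := real_inner_le_norm _ _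
        _ ≤ ‖x'‖ * (‖T‖ * ‖y - y'‖) := by gcongr; exact T.le_opNorm _
        _ ≤ 5 / 4 * (‖T‖ * (1 / 4)) := by gcongr
        _ = _ := by ring
    linarith
  have hop : ‖T‖ ≤ CC κ * Real.sqrt d + 9 / 16 * ‖T‖ := by
    refine ContinuousLinearMap.opNorm_le_of_unit_norm (by positivity) fun y hy => ?_
    by_cases h0 : T y = 0
    · rw [h0, norm_zero]; positivity
    · have hp : 0 < ‖T y‖ := norm_pos_iff.2 h0
      have := hin (‖T y‖⁻¹ • T y) y (by rw [norm_smul, norm_inv, norm_norm]; field_simp; rfl) hy.le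
      rw [real_inner_smul_left, real_inner_self_eq_norm_sq] at this
      calc ‖T y‖ = ‖T y‖⁻¹ * ‖T y‖ ^ 2 := by field_simp
        _ ≤ _ := this
  linarith
end net

section final
variable {n d : ℕ}

lemma eig_bound {X : Fin n → Fin n → Bool} (N : ℝ)
    (hN : ‖Matrix.toEuclideanCLM (𝕜 := ℝ) (MM d X)‖ ≤ N)
    (hH : ((adjR X).transpose * adjR X).IsHermitian) (σ : Equiv.Perm (Fin n))
    (hσ : Antitone (fun i => hH.eigenvalues (σ i))) (i : Fin n) (hi : (i : ℕ) = 1) :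
    Real.sqrt (hH.eigenvalues (σ i)) ≤ N := by
  have hn1 : 1 < n := by have := i.2; omega
  set i0 : Fin n := ⟨0, by omega⟩ with hi0
  have hne : i0 ≠ i := by
    intro h; rw [← h] at hi; simp [hi0] at hi
  have hle : hH.eigenvalues (σ i) ≤ hH.eigenvalues (σ i0) := hσ (by
    rw [Fin.le_def]; simp [hi0])
  set a := hH.eigenvectorBasis (σ i0) with ha
  set b := hH.eigenvectorBasis (σ i) with hb
  set T := Matrix.toEuclideanCLM (𝕜 := ℝ) (MM d X) with hT
  set TA := Matrix.toEuclideanCLM (𝕜 := ℝ) (adjR X) with hTA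
  have hN0 : 0 ≤ N := (norm_nonneg _).trans hN
  have haa : inner ℝ a a = (1 : ℝ) := by
    rw [real_inner_self_eq_norm_sq, ha, hH.eigenvectorBasis.norm_eq_one]; norm_num
  have hbb : inner ℝ b b = (1 : ℝ) := by
    rw [real_inner_self_eq_norm_sq, hb, hH.eigenvectorBasis.norm_eq_one]; norm_num
  have hab : inner ℝ a b = (0 : ℝ) :=
    hH.eigenvectorBasis.orthonormal.2 (fun h => hne (σ.injective h))
  have hba : inner ℝ b a = (0 : ℝ) := by rw [real_inner_comm]; exact hab
  have hadj : ∀ z, ContinuousLinearMap.adjoint TA (TA z) =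
      Matrix.toEuclideanCLM (𝕜 := ℝ) ((adjR X).transpose * adjR X) z := by
    intro z
    have : Matrix.toEuclideanCLM (𝕜 := ℝ) ((adjR X).transpose * adjR X) = star TA * TA := by
      rw [map_mul, hTA, ← map_star]
      congr 2
    rw [this, ContinuousLinearMap.star_eq_adjoint]
    rfl
  have hea : ContinuousLinearMap.adjoint TA (TA a) = hH.eigenvalues (σ i0) • a := by
    rw [hadj]
    apply WithLp.ofLp_injective
    rw [Matrix.ofLp_toEuclideanCLM, ha, hH.mulVec_eigenvectorBasis]
    rfl
  have heb : ContinuousLinearMap.adjoint TA (TA b) = hH.eigenvalues (σ i) • b := by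
    rw [hadj]
    apply WithLp.ofLp_injective
    rw [Matrix.ofLp_toEuclideanCLM, hb, hH.mulVec_eigenvectorBasis]
    rfl
  obtain ⟨c1, c2, hc, hz⟩ : ∃ c1 c2 : ℝ, 0 < c1 ^ 2 + c2 ^ 2 ∧
      c1 * ∑ u, a u + c2 * ∑ u, b u = 0 := by
    by_cases h : ∑ u, a u = 0
    · exact ⟨1, 0, by norm_num, by rw [h]; ring⟩
    · refine ⟨∑ u, b u, -∑ u, a u, ?_, by ring⟩
      have : 0 < (∑ u, a u) ^ 2 := by positivity
      nlinarith [sq_nonneg (∑ u, b u)]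
  set z : EuclideanSpace ℝ (Fin n) := c1 • a + c2 • b with hzd
  have hz0 : ∑ u, z u = 0 := by
    rw [← hz, Finset.mul_sum, Finset.mul_sum, ← Finset.sum_add_distrib]
    rfl
  have hzn : ‖z‖ ^ 2 = c1 ^ 2 + c2 ^ 2 := by
    rw [← real_inner_self_eq_norm_sq, hzd]
    simp only [inner_add_left, inner_add_right, real_inner_smul_left, real_inner_smul_right,
      haa, hbb, hab, hba]
    ring
  have hTAT : TA z = T z := by
    apply WithLp.ofLp_injective
    rw [hTA, hT, Matrix.ofLp_toEuclideanCLM, Matrix.ofLp_toEuclideanCLM]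
    funext u
    simp only [Matrix.mulVec, dotProduct, MM, adjR, Matrix.of_apply, ent, sub_mul,
      Finset.sum_sub_distrib, ← Finset.mul_sum]
    rw [hz0]; ring
  have hTAz : ‖TA z‖ ^ 2 = c1 ^ 2 * hH.eigenvalues (σ i0) + c2 ^ 2 * hH.eigenvalues (σ i) := by
    rw [← real_inner_self_eq_norm_sq, ← ContinuousLinearMap.adjoint_inner_right]
    have : ContinuousLinearMap.adjoint TA (TA z) =
        (c1 * hH.eigenvalues (σ i0)) • a + (c2 * hH.eigenvalues (σ i)) • b := by
      rw [hzd, map_add, map_add, map_smul, map_smul, map_smul, map_smul, hea, heb, smul_smul, smul_smul]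
    rw [this, hzd]
    simp only [inner_add_left, inner_add_right, real_inner_smul_left, real_inner_smul_right,
      haa, hbb, hab, hba]
    ring
  have hTz : ‖T z‖ ^ 2 ≤ N ^ 2 * (c1 ^ 2 + c2 ^ 2) := by
    rw [← hzn, ← mul_pow]
    have h1 : ‖T z‖ ≤ N * ‖z‖ := (T.le_opNorm z).trans (by gcongr)
    gcongr
  rw [← hTAT, hTAz] at hTz
  have hfin : hH.eigenvalues (σ i) ≤ N ^ 2 := by
    have : hH.eigenvalues (σ i) * (c1 ^ 2 + c2 ^ 2) ≤ N ^ 2 * (c1 ^ 2 + c2 ^ 2) := by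
      nlinarith [mul_le_mul_of_nonneg_left hle (sq_nonneg c1)]
    exact le_of_mul_le_mul_right this hc
  exact Real.sqrt_le_iff.2 ⟨hN0, hfin⟩

lemma h8_of (h : (d : ℝ) ≤ (1 / 2) * (n : ℝ) ^ ((2 : ℝ) / 3)) : 8 * d ^ 3 ≤ n ^ 2 := by
  have h1 : (d : ℝ) ^ 3 ≤ ((1 / 2) * (n : ℝ) ^ ((2 : ℝ) / 3)) ^ 3 := by gcongr
  rw [mul_pow, ← Real.rpow_natCast ((n : ℝ) ^ ((2 : ℝ) / 3)), ← Real.rpow_mul (Nat.cast_nonneg n)] at h1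
  have e : (2 : ℝ) / 3 * ((3 : ℕ) : ℝ) = ((2 : ℕ) : ℝ) := by norm_num
  rw [e, Real.rpow_natCast] at h1
  have : (8 : ℝ) * d ^ 3 ≤ n ^ 2 := by linarith
  exact_mod_cast this
end final

theorem second_singular_value_regular_digraph :
    ∀ K : ℝ, 0 < K → ∃ α : ℝ, 0 < α ∧
      ∀ (n d : ℕ), 0 < n → 0 < d →
        (d : ℝ) ≤ (1 / 2) * (n : ℝ) ^ ((2 : ℝ) / 3) →
        (RegDigraph n d).Nonempty →
        (1 : ℝ) - (n : ℝ) ^ (-K) - Real.exp (-(n : ℝ)) ≤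
          (((RegDigraph n d).filter fun X =>
              ∀ (hH : ((adjR X).transpose * adjR X).IsHermitian)
                (σ : Equiv.Perm (Fin n)),
                Antitone (fun i => hH.eigenvalues (σ i)) →
                ∀ i : Fin n, (i : ℕ) = 1 →
                  Real.sqrt (hH.eigenvalues (σ i)) ≤ α * Real.sqrt d).card : ℝ) /
            ((RegDigraph n d).card : ℝ) := by
  intro K hK
  refine ⟨16 / 7 * CC (8 * (K + 6)), by unfold CC; positivity, ?_⟩
  intro n d hn hd hdn hne
  have h8 := h8_of hdn
  have hZ : (0 : ℝ) < (RegDigraph n d).card := by exact_mod_cast hne.card_pos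
  rw [le_div_iff₀ hZ]
  have h1 := disc_prob hd h8 K hK
  have h2 := light_prob hd h8
  have hsub : (RegDigraph n d) ⊆
      ((RegDigraph n d).filter fun X =>
              ∀ (hH : ((adjR X).transpose * adjR X).IsHermitian)
                (σ : Equiv.Perm (Fin n)),
                Antitone (fun i => hH.eigenvalues (σ i)) →
                ∀ i : Fin n, (i : ℕ) = 1 →
                  Real.sqrt (hH.eigenvalues (σ i)) ≤ 16 / 7 * CC (8 * (K + 6)) * Real.sqrt d) ∪
      (((RegDigraph n d).filter fun X => ¬ Disc (8 * (K + 6)) d X) ∪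
        ((RegDigraph n d).filter fun X => ¬ Lgt d X)) := by
    intro X hX
    by_cases hD : Disc (8 * (K + 6)) d X
    · by_cases hL : Lgt d X
      · refine Finset.mem_union_left _ (Finset.mem_filter.2 ⟨hX, ?_⟩)
        intro hH σ hσ i hi
        exact eig_bound _ (op_bound hd h8 hX _ (by positivity) hD hL) hH σ hσ i hi
      · exact Finset.mem_union_right _ (Finset.mem_union_right _ (Finset.mem_filter.2 ⟨hX, hL⟩))
    · exact Finset.mem_union_right _ (Finset.mem_union_left _ (Finset.mem_filter.2 ⟨hX, hD⟩))
  have h3 := (Finset.card_le_card hsub).trans ((Finset.card_union_le _ _).trans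
    (Nat.add_le_add_left (Finset.card_union_le _ _) _))
  have h4 : ((RegDigraph n d).card : ℝ) ≤ _ := Nat.cast_le.2 h3
  push_cast at h4
  linarith
end
end

section
/- Let X be drawn uniformly from the nonempty set 𝒢(n,m,d₁,d₂), with d₁ < m. Let a > 0 and let Q be an n×m real matrix, not identically zero, with all entries in [0,a]. Set f_Q(X) = Σ_{u∈[n], v∈[m]} Q_{uv}·X_{uv}, μ = (d₁/m)·Σ_{u,v} Q_{uv}, σ̃² = (d₁/m)·Σ_{u,v} Q_{uv}², p = 1 − d₁/m, and p′ = 1 − d₁/(m−d₁). Then for all t ≥ 0: ℙ( f_Q(X) − μ/p ≥ t ) ≤ exp( −(σ̃²/(3·p·a²))·h(p·a·t/σ̃²) ) and ℙ( f_Q(X) − p′·μ ≤ −t ) ≤ exp( −(σ̃²/(3·a²))·h(a·t/σ̃²) ), where h(x) = (1+x)·log(1+x) − x for x ≥ −1. -/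
open scoped Classical BigOperators

noncomputable section

/-- The set of biadjacency matrices of `(n,m,d₁,d₂)`-bipartite biregular graphs. -/
def BBG (n m d₁ d₂ : ℕ) : Finset (Fin n → Fin m → Bool) :=
  Finset.univ.filter fun X =>
    (∀ u, (∑ v, if X u v then 1 else 0) = d₁) ∧
    (∀ v, (∑ u, if X u v then 1 else 0) = d₂)

/-- `h(x) = (1+x)·log(1+x) − x`. -/
def hfun (x : ℝ) : ℝ := (1 + x) * Real.log (1 + x) - x

/-- The linear function `f_Q(X) = Σ_{u,v} Q_{uv} X_{uv}`. -/
def fQ {n m : ℕ} (Q : Matrix (Fin n) (Fin m) ℝ) (X : Fin n → Fin m → Bool) : ℝ :=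
  ∑ u, ∑ v, Q u v * (if X u v then (1 : ℝ) else 0)

/-- real indicator of an entry -/
def ind {n m : ℕ} (X : Fin n → Fin m → Bool) (u : Fin n) (v : Fin m) : ℝ :=
  if X u v then (1 : ℝ) else 0

lemma ind_nonneg {n m : ℕ} (X : Fin n → Fin m → Bool) (u v) : 0 ≤ ind X u v := by
  unfold ind; split_ifs <;> norm_num

lemma ind_le {n m : ℕ} (X : Fin n → Fin m → Bool) (u v) : ind X u v ≤ 1 := by
  unfold ind; split_ifs <;> norm_num

lemma fQ_eq {n m : ℕ} (Q : Matrix (Fin n) (Fin m) ℝ) (X : Fin n → Fin m → Bool) :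
    fQ Q X = ∑ u, ∑ v, Q u v * ind X u v := rfl

lemma ind_row {n m d₁ d₂ : ℕ} {X : Fin n → Fin m → Bool} (h : X ∈ BBG n m d₁ d₂) (u : Fin n) :
    ∑ v, ind X u v = d₁ := by
  have := (Finset.mem_filter.1 h).2.1 u
  rw [← this]; push_cast; rfl

lemma ind_col {n m d₁ d₂ : ℕ} {X : Fin n → Fin m → Bool} (h : X ∈ BBG n m d₁ d₂) (v : Fin m) :
    ∑ u, ind X u v = d₂ := by
  have := (Finset.mem_filter.1 h).2.2 v
  rw [← this]; push_cast; rfl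

/-- toggle entries -/
def tog {n m : ℕ} (S X : Fin n → Fin m → Bool) : Fin n → Fin m → Bool :=
  fun u v => xor (X u v) (S u v)

lemma tog_tog {n m : ℕ} (S X : Fin n → Fin m → Bool) : tog S (tog S X) = X := by
  funext u v; simp [tog]

lemma sum_toggle {k : ℕ} (x s : Fin k → Bool)
    (h : (∀ z, s z = false) ∨ ∃ a b, x a ≠ x b ∧ ∀ z, s z = true ↔ (z = a ∨ z = b)) :
    (∑ z, if xor (x z) (s z) then 1 else 0) = ∑ z, if x z then 1 else 0 := by
  rcases h with h | ⟨a, b, hab, h⟩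
  · simp [h]
  · rw [← Equiv.sum_comp (Equiv.swap a b) (fun z => if x z then 1 else 0)]
    apply Finset.sum_congr rfl
    intro z _
    have key : xor (x z) (s z) = x (Equiv.swap a b z) := by
      by_cases hza : z = a
      · subst hza
        have : s z = true := (h z).2 (Or.inl rfl)
        rw [this, Equiv.swap_apply_left]
        revert hab; cases x z <;> cases x b <;> simp
      · by_cases hzb : z = b
        · subst hzb
          have : s z = true := (h z).2 (Or.inr rfl)
          rw [this, Equiv.swap_apply_right]
          revert hab; cases x z <;> cases x a <;> simp
        · rw [Equiv.swap_apply_of_ne_of_ne hza hzb]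
          have : s z = false := by
            rw [← Bool.not_eq_true, h z]; tauto
          simp [this]
    rw [key]

lemma tog_mem {n m d₁ d₂ : ℕ} {S X : Fin n → Fin m → Bool} (hX : X ∈ BBG n m d₁ d₂)
    (hr : ∀ u, (∀ z, S u z = false) ∨
      ∃ a b, X u a ≠ X u b ∧ ∀ z, S u z = true ↔ (z = a ∨ z = b))
    (hc : ∀ v, (∀ z, S z v = false) ∨
      ∃ a b, X a v ≠ X b v ∧ ∀ z, S z v = true ↔ (z = a ∨ z = b)) :
    tog S X ∈ BBG n m d₁ d₂ := by
  unfold BBG at hX ⊢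
  rw [Finset.mem_filter] at hX ⊢
  refine ⟨Finset.mem_univ _, fun u => ?_, fun v => ?_⟩
  · rw [← hX.2.1 u]; exact sum_toggle (X u) (S u) (hr u)
  · rw [← hX.2.2 v]; exact sum_toggle (fun z => X z v) (fun z => S z v) (hc v)

/-- reindexing along toggles -/
lemma sum_tog {n m d₁ d₂ : ℕ} (S : Fin n → Fin m → Bool) (A B g : (Fin n → Fin m → Bool) → ℝ)
    (hAB : ∀ Y, A Y = B (tog S Y))
    (hA : ∀ Y ∈ BBG n m d₁ d₂, A Y ≠ 0 → tog S Y ∈ BBG n m d₁ d₂)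
    (hB : ∀ Y ∈ BBG n m d₁ d₂, B Y ≠ 0 → tog S Y ∈ BBG n m d₁ d₂) :
    ∑ X ∈ BBG n m d₁ d₂, B X * g X = ∑ Y ∈ BBG n m d₁ d₂, A Y * g (tog S Y) := by
  have hBA : ∀ Y, B Y = A (tog S Y) := fun Y => by rw [hAB, tog_tog]
  refine Finset.sum_bij_ne_zero (fun X _ _ => tog S X) ?_ ?_ ?_ ?_
  · intro X hX h
    exact hB X hX (left_ne_zero_of_mul h)
  · intro X _ _ X' _ _ h
    have := congrArg (tog S) h
    simpa [tog_tog] using this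
  · intro Y hY h
    have h1 := left_ne_zero_of_mul h
    refine ⟨tog S Y, hA Y hY h1, ?_, tog_tog S Y⟩
    rw [← hAB]; exact h
  · intro X _ _
    rw [tog_tog, ← hBA]

lemma fQ_tog {n m : ℕ} (Q : Matrix (Fin n) (Fin m) ℝ) (hQ : ∀ u v, 0 ≤ Q u v)
    (X Y : Fin n → Fin m → Bool) (l : List (Fin n × Fin m))
    (h : ∀ u v, Y u v = true → X u v = true ∨ (u, v) ∈ l) :
    fQ Q Y ≤ fQ Q X + (l.map fun e => Q e.1 e.2).sum := by
  have h1 : (l.map fun e => Q e.1 e.2).sum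
      = ∑ u, ∑ v, (l.map fun e => if e = (u, v) then Q u v else 0).sum := by
    clear h
    induction l with
    | nil => simp
    | cons e l ih =>
      simp only [List.map_cons, List.sum_cons, Finset.sum_add_distrib, ← ih]
      congr 1
      rw [← Fintype.sum_prod_type' (f := fun u v => if e = (u, v) then Q u v else 0)]
      simp
  rw [h1, fQ_eq, fQ_eq, ← Finset.sum_add_distrib]
  refine Finset.sum_le_sum fun u _ => ?_
  rw [← Finset.sum_add_distrib]
  refine Finset.sum_le_sum fun v _ => ?_
  have hnn : ∀ x ∈ (l.map fun e => if e = (u, v) then Q u v else 0), 0 ≤ x := by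
    intro x hx
    obtain ⟨e, _, rfl⟩ := List.mem_map.1 hx
    by_cases he : e = (u, v)
    · rw [if_pos he]; exact hQ u v
    · rw [if_neg he]
  have h0 := List.sum_nonneg hnn
  by_cases hy : Y u v = true
  · rcases h u v hy with hx | hx
    · simp only [ind, hy, hx, if_true]; linarith
    · have : Q u v ≤ (l.map fun e => if e = (u, v) then Q u v else 0).sum := by
        apply List.single_le_sum hnn
        exact List.mem_map.2 ⟨(u, v), hx, by simp⟩
      have h3 := mul_nonneg (hQ u v) (ind_nonneg X u v)
      have h4 : ind Y u v = 1 := by simp [ind, hy]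
      rw [h4]; linarith
  · have h3 := mul_nonneg (hQ u v) (ind_nonneg X u v)
    have h4 : ind Y u v = 0 := by simp [ind, hy]
    rw [h4]; linarith

/-! ### simple switchings -/

def S4 {n m : ℕ} (e f : Fin n × Fin m) : Fin n → Fin m → Bool :=
  fun w z => decide ((w = e.1 ∨ w = f.1) ∧ (z = e.2 ∨ z = f.2))

def A4 {n m : ℕ} (Y : Fin n → Fin m → Bool) (e f : Fin n × Fin m) : ℝ :=
  (1 - ind Y e.1 e.2) * ind Y e.1 f.2 * ind Y f.1 e.2 * (1 - ind Y f.1 f.2)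

def B4 {n m : ℕ} (Y : Fin n → Fin m → Bool) (e f : Fin n × Fin m) : ℝ :=
  ind Y e.1 e.2 * (1 - ind Y e.1 f.2) * (1 - ind Y f.1 e.2) * ind Y f.1 f.2

lemma ind_tog {n m : ℕ} (S Y : Fin n → Fin m → Bool) (u v) (h : S u v = true) :
    ind (tog S Y) u v = 1 - ind Y u v := by
  unfold ind tog; rw [h]; cases Y u v <;> simp

lemma ind_ne_zero {n m : ℕ} {Y : Fin n → Fin m → Bool} {u v} (h : ind Y u v ≠ 0) :
    Y u v = true := by
  unfold ind at h; by_contra h'; simp [h'] at h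

lemma one_sub_ind_ne_zero {n m : ℕ} {Y : Fin n → Fin m → Bool} {u v} (h : 1 - ind Y u v ≠ 0) :
    Y u v = false := by
  unfold ind at h; by_contra h'
  rw [Bool.not_eq_false] at h'
  simp [h'] at h

lemma S4_mem {n m d₁ d₂ : ℕ} {e f : Fin n × Fin m} {Y : Fin n → Fin m → Bool}
    (hY : Y ∈ BBG n m d₁ d₂) (h1 : Y e.1 e.2 ≠ Y e.1 f.2) (h2 : Y f.1 e.2 ≠ Y f.1 f.2)
    (h3 : Y e.1 e.2 ≠ Y f.1 e.2) (h4 : Y e.1 f.2 ≠ Y f.1 f.2) :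
    tog (S4 e f) Y ∈ BBG n m d₁ d₂ := by
  apply tog_mem hY
  · intro u
    by_cases hu : u = e.1
    · right; refine ⟨e.2, f.2, by rw [hu]; exact h1, fun z => by simp [S4, hu]⟩
    · by_cases hu' : u = f.1
      · right; refine ⟨e.2, f.2, by rw [hu']; exact h2, fun z => by simp [S4, hu']⟩
      · left; intro z; simp [S4, hu, hu']
  · intro v
    by_cases hu : v = e.2
    · right; refine ⟨e.1, f.1, by rw [hu]; exact h3, fun z => by simp [S4, hu]⟩
    · by_cases hu' : v = f.2
      · right; refine ⟨e.1, f.1, by rw [hu']; exact h4, fun z => by simp [S4, hu']⟩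
      · left; intro z; simp [S4, hu, hu']

lemma A4_ne {n m : ℕ} {Y : Fin n → Fin m → Bool} {e f : Fin n × Fin m} (h : A4 Y e f ≠ 0) :
    Y e.1 e.2 = false ∧ Y e.1 f.2 = true ∧ Y f.1 e.2 = true ∧ Y f.1 f.2 = false := by
  unfold A4 at h
  exact ⟨one_sub_ind_ne_zero (left_ne_zero_of_mul (left_ne_zero_of_mul (left_ne_zero_of_mul h))),
    ind_ne_zero (right_ne_zero_of_mul (left_ne_zero_of_mul (left_ne_zero_of_mul h))),
    ind_ne_zero (right_ne_zero_of_mul (left_ne_zero_of_mul h)),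
    one_sub_ind_ne_zero (right_ne_zero_of_mul h)⟩

lemma B4_ne {n m : ℕ} {Y : Fin n → Fin m → Bool} {e f : Fin n × Fin m} (h : B4 Y e f ≠ 0) :
    Y e.1 e.2 = true ∧ Y e.1 f.2 = false ∧ Y f.1 e.2 = false ∧ Y f.1 f.2 = true := by
  unfold B4 at h
  exact ⟨ind_ne_zero (left_ne_zero_of_mul (left_ne_zero_of_mul (left_ne_zero_of_mul h))),
    one_sub_ind_ne_zero (right_ne_zero_of_mul (left_ne_zero_of_mul (left_ne_zero_of_mul h))),
    one_sub_ind_ne_zero (right_ne_zero_of_mul (left_ne_zero_of_mul h)),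
    ind_ne_zero (right_ne_zero_of_mul h)⟩

lemma sum_B4 {n m d₁ d₂ : ℕ} (e f : Fin n × Fin m) (g : (Fin n → Fin m → Bool) → ℝ) :
    ∑ X ∈ BBG n m d₁ d₂, B4 X e f * g X
      = ∑ Y ∈ BBG n m d₁ d₂, A4 Y e f * g (tog (S4 e f) Y) := by
  apply sum_tog (S4 e f) (fun Y => A4 Y e f) (fun Y => B4 Y e f)
  · intro Y
    simp only [A4, B4]
    rw [ind_tog _ _ _ _ (by simp [S4]), ind_tog _ _ _ _ (by simp [S4]),
      ind_tog _ _ _ _ (by simp [S4]), ind_tog _ _ _ _ (by simp [S4])]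
    ring
  · intro Y hY h
    obtain ⟨h1, h2, h3, h4⟩ := A4_ne h
    exact S4_mem hY (by simp [*]) (by simp [*]) (by simp [*]) (by simp [*])
  · intro Y hY h
    obtain ⟨h1, h2, h3, h4⟩ := B4_ne h
    exact S4_mem hY (by simp [*]) (by simp [*]) (by simp [*]) (by simp [*])

lemma fQ_S4 {n m : ℕ} (Q : Matrix (Fin n) (Fin m) ℝ) (hQ : ∀ u v, 0 ≤ Q u v)
    (e f : Fin n × Fin m) (Y : Fin n → Fin m → Bool) (h : A4 Y e f ≠ 0) :
    fQ Q (tog (S4 e f) Y) ≤ fQ Q Y + (Q e.1 e.2 + Q f.1 f.2) := by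
  obtain ⟨h1, h2, h3, h4⟩ := A4_ne h
  have := fQ_tog Q hQ Y (tog (S4 e f) Y) [e, f] ?_
  · simpa using this
  · intro u v huv
    by_cases hY : Y u v = true
    · exact Or.inl hY
    right
    have hS : S4 e f u v = true := by
      simp only [tog] at huv; simpa [hY] using huv
    simp only [S4, decide_eq_true_eq] at hS
    obtain ⟨rfl | rfl, rfl | rfl⟩ := hS <;> simp_all

/-! ### hexagonal switchings -/

def S6 {n m : ℕ} (e f g : Fin n × Fin m) : Fin n → Fin m → Bool :=
  fun w z => decide ((w = e.1 ∧ (z = e.2 ∨ z = f.2)) ∨ (w = f.1 ∧ (z = f.2 ∨ z = g.2)) ∨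
    (w = g.1 ∧ (z = g.2 ∨ z = e.2)))

def A6 {n m : ℕ} (Y : Fin n → Fin m → Bool) (e f g : Fin n × Fin m) : ℝ :=
  (1 - ind Y e.1 e.2) * (1 - ind Y f.1 f.2) * (1 - ind Y g.1 g.2) *
    ind Y e.1 f.2 * ind Y f.1 g.2 * ind Y g.1 e.2

def B6 {n m : ℕ} (Y : Fin n → Fin m → Bool) (e f g : Fin n × Fin m) : ℝ :=
  ind Y e.1 e.2 * ind Y f.1 f.2 * ind Y g.1 g.2 *
    (1 - ind Y e.1 f.2) * (1 - ind Y f.1 g.2) * (1 - ind Y g.1 e.2)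

lemma A6_ne {n m : ℕ} {Y : Fin n → Fin m → Bool} {e f g : Fin n × Fin m} (h : A6 Y e f g ≠ 0) :
    Y e.1 e.2 = false ∧ Y f.1 f.2 = false ∧ Y g.1 g.2 = false ∧
    Y e.1 f.2 = true ∧ Y f.1 g.2 = true ∧ Y g.1 e.2 = true := by
  unfold A6 at h
  simp only [mul_ne_zero_iff] at h
  obtain ⟨⟨⟨⟨⟨a, b⟩, c⟩, d⟩, e⟩, f⟩ := h
  exact ⟨one_sub_ind_ne_zero a, one_sub_ind_ne_zero b, one_sub_ind_ne_zero c,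
    ind_ne_zero d, ind_ne_zero e, ind_ne_zero f⟩

lemma B6_ne {n m : ℕ} {Y : Fin n → Fin m → Bool} {e f g : Fin n × Fin m} (h : B6 Y e f g ≠ 0) :
    Y e.1 e.2 = true ∧ Y f.1 f.2 = true ∧ Y g.1 g.2 = true ∧
    Y e.1 f.2 = false ∧ Y f.1 g.2 = false ∧ Y g.1 e.2 = false := by
  unfold B6 at h
  simp only [mul_ne_zero_iff] at h
  obtain ⟨⟨⟨⟨⟨a, b⟩, c⟩, d⟩, e⟩, f⟩ := h
  exact ⟨ind_ne_zero a, ind_ne_zero b, ind_ne_zero c,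
    one_sub_ind_ne_zero d, one_sub_ind_ne_zero e, one_sub_ind_ne_zero f⟩

lemma S6_mem {n m d₁ d₂ : ℕ} {e f g : Fin n × Fin m} {Y : Fin n → Fin m → Bool} (b : Bool)
    (hY : Y ∈ BBG n m d₁ d₂) (h1 : Y e.1 e.2 = b) (h2 : Y f.1 f.2 = b) (h3 : Y g.1 g.2 = b)
    (h4 : Y e.1 f.2 = !b) (h5 : Y f.1 g.2 = !b) (h6 : Y g.1 e.2 = !b) :
    tog (S6 e f g) Y ∈ BBG n m d₁ d₂ := by
  obtain ⟨u, v⟩ := e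
  obtain ⟨u1, v1⟩ := f
  obtain ⟨u2, v2⟩ := g
  dsimp only at *
  have huv : ∀ {w w' : Fin n} {z z' : Fin m}, Y w z = b → Y w' z' = !b → w = w' → z ≠ z' := by
    rintro w w' z z' ha hb rfl rfl; rw [ha] at hb; cases b <;> simp at hb
  have a1 : v ≠ v1 := huv h1 h4 rfl
  have a2 : v1 ≠ v2 := huv h2 h5 rfl
  have a3 : v2 ≠ v := huv h3 h6 rfl
  have b1 : u ≠ u2 := fun h => huv h1 h6 h rfl
  have b2 : u1 ≠ u := fun h => huv h2 h4 h rfl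
  have b3 : u2 ≠ u1 := fun h => huv h3 h5 h rfl
  have hb : b ≠ !b := by cases b <;> simp
  apply tog_mem hY
  · intro w
    by_cases hu : w = u
    · right; subst hu
      exact ⟨v, v1, by rw [h1, h4]; exact hb, fun z => by simp [S6, b1, b2.symm]⟩
    by_cases hu1 : w = u1
    · right; subst hu1
      exact ⟨v1, v2, by rw [h2, h5]; exact hb, fun z => by simp [S6, b2, b3.symm]⟩
    by_cases hu2 : w = u2
    · right; subst hu2
      exact ⟨v2, v, by rw [h3, h6]; exact hb, fun z => by simp [S6, b3, b1.symm]⟩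
    · left; intro z; simp [S6, hu, hu1, hu2]
  · intro z
    by_cases hu : z = v
    · right; subst hu
      exact ⟨u, u2, by rw [h1, h6]; exact hb, fun w => by simp [S6, a1, a3.symm]⟩
    by_cases hu1 : z = v1
    · right; subst hu1
      exact ⟨u, u1, by rw [h2, h4]; exact hb.symm, fun w => by simp [S6, a2, a1.symm]⟩
    by_cases hu2 : z = v2
    · right; subst hu2
      exact ⟨u1, u2, by rw [h3, h5]; exact hb.symm, fun w => by simp [S6, a3, a2.symm]⟩
    · left; intro w; simp [S6, hu, hu1, hu2]

lemma sum_B6 {n m d₁ d₂ : ℕ} (e f k : Fin n × Fin m) (g : (Fin n → Fin m → Bool) → ℝ) :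
    ∑ X ∈ BBG n m d₁ d₂, B6 X e f k * g X
      = ∑ Y ∈ BBG n m d₁ d₂, A6 Y e f k * g (tog (S6 e f k) Y) := by
  apply sum_tog (S6 e f k) (fun Y => A6 Y e f k) (fun Y => B6 Y e f k)
  · intro Y
    simp only [A6, B6]
    rw [ind_tog _ _ e.1 e.2 (by simp [S6]), ind_tog _ _ f.1 f.2 (by simp [S6]),
      ind_tog _ _ k.1 k.2 (by simp [S6]), ind_tog _ _ e.1 f.2 (by simp [S6]),
      ind_tog _ _ f.1 k.2 (by simp [S6]), ind_tog _ _ k.1 e.2 (by simp [S6])]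
    ring
  · intro Y hY h
    obtain ⟨h1, h2, h3, h4, h5, h6⟩ := A6_ne h
    exact S6_mem false hY h1 h2 h3 h4 h5 h6
  · intro Y hY h
    obtain ⟨h1, h2, h3, h4, h5, h6⟩ := B6_ne h
    exact S6_mem true hY h1 h2 h3 h4 h5 h6

lemma fQ_S6 {n m : ℕ} (Q : Matrix (Fin n) (Fin m) ℝ) (hQ : ∀ u v, 0 ≤ Q u v)
    (e f g : Fin n × Fin m) (Y : Fin n → Fin m → Bool) (h : A6 Y e f g ≠ 0) :
    fQ Q (tog (S6 e f g) Y) ≤ fQ Q Y + (Q e.1 e.2 + Q f.1 f.2 + Q g.1 g.2) := by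
  obtain ⟨h1, h2, h3, h4, h5, h6⟩ := A6_ne h
  have := fQ_tog Q hQ Y (tog (S6 e f g) Y) [e, f, g] ?_
  · simpa [add_assoc] using this
  · intro u v huv
    by_cases hY : Y u v = true
    · exact Or.inl hY
    right
    have hS : S6 e f g u v = true := by
      simp only [tog] at huv; simpa [hY] using huv
    simp only [S6, decide_eq_true_eq] at hS
    obtain ⟨rfl, rfl | rfl⟩ | ⟨rfl, rfl | rfl⟩ | ⟨rfl, rfl | rfl⟩ := hS <;> simp_all

/-! ### counting -/

lemma sum_weight_col {n m : ℕ} (x : Fin n → Fin m → ℝ) (c : ℝ) (hc : ∀ v, ∑ u, x u v = c)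
    (α : Fin m → ℝ) : ∑ e : Fin n × Fin m, α e.2 * x e.1 e.2 = (∑ v, α v) * c := by
  rw [Fintype.sum_prod_type_right, Finset.sum_mul]
  refine Finset.sum_congr rfl fun v _ => ?_
  rw [← hc v, Finset.mul_sum]

lemma sum_weight_row {n m : ℕ} (x : Fin n → Fin m → ℝ) (r : ℝ) (hr : ∀ u, ∑ v, x u v = r)
    (β : Fin n → ℝ) : ∑ e : Fin n × Fin m, β e.1 * x e.1 e.2 = (∑ v, β v) * r := by
  rw [Fintype.sum_prod_type, Finset.sum_mul]
  refine Finset.sum_congr rfl fun v _ => ?_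
  rw [← hr v, Finset.mul_sum]

lemma sum_prod_mul {n m : ℕ} (α : Fin m → ℝ) (β : Fin n → ℝ) :
    ∑ e : Fin n × Fin m, α e.2 * β e.1 = (∑ v, α v) * ∑ u, β u := by
  rw [Fintype.sum_prod_type_right, Finset.sum_mul]
  refine Finset.sum_congr rfl fun v _ => ?_
  rw [Finset.mul_sum]

lemma count_lower {n m : ℕ} (x : Fin n → Fin m → ℝ) (r c : ℝ) (hx : ∀ u v, 0 ≤ x u v)
    (hr : ∀ u, ∑ v, x u v = r) (hc : ∀ v, ∑ u, x u v = c)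
    (α : Fin m → ℝ) (β : Fin n → ℝ) (hα : ∀ v, 0 ≤ α v) (hβ : ∀ u, 0 ≤ β u) :
    n * r - (∑ v, α v) * c - (∑ u, β u) * r ≤
      ∑ e : Fin n × Fin m, (1 - α e.2) * (1 - β e.1) * x e.1 e.2 := by
  have h1 := sum_weight_row x r hr (fun _ => 1)
  have h2 := sum_weight_row x r hr β
  have h3 := sum_weight_col x c hc α
  have h4 : 0 ≤ ∑ e : Fin n × Fin m, α e.2 * β e.1 * x e.1 e.2 :=
    Finset.sum_nonneg fun e _ => mul_nonneg (mul_nonneg (hα _) (hβ _)) (hx _ _)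
  have h5 : ∑ e : Fin n × Fin m, (1 - α e.2) * (1 - β e.1) * x e.1 e.2 =
      ∑ e : Fin n × Fin m, 1 * x e.1 e.2 - ∑ e : Fin n × Fin m, α e.2 * x e.1 e.2
      - ∑ e : Fin n × Fin m, β e.1 * x e.1 e.2
      + ∑ e : Fin n × Fin m, α e.2 * β e.1 * x e.1 e.2 := by
    rw [← Finset.sum_sub_distrib, ← Finset.sum_sub_distrib, ← Finset.sum_add_distrib]
    exact Finset.sum_congr rfl fun e _ => by ring
  simp only [Finset.sum_const, Finset.card_univ, Fintype.card_fin, nsmul_eq_mul, mul_one] at h1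
  rw [h5, h1, h2, h3]; linarith

lemma A4_nonneg {n m : ℕ} (Y : Fin n → Fin m → Bool) (e f) : 0 ≤ A4 Y e f := by
  unfold A4
  have h := ind_nonneg Y
  have h' := fun u v => sub_nonneg.2 (ind_le Y u v)
  exact mul_nonneg (mul_nonneg (mul_nonneg (h' _ _) (h _ _)) (h _ _)) (h' _ _)

lemma A6_nonneg {n m : ℕ} (Y : Fin n → Fin m → Bool) (e f g) : 0 ≤ A6 Y e f g := by
  unfold A6
  have h := ind_nonneg Y
  have h' := fun u v => sub_nonneg.2 (ind_le Y u v)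
  exact mul_nonneg (mul_nonneg (mul_nonneg (mul_nonneg (mul_nonneg (h' _ _) (h' _ _)) (h' _ _))
    (h _ _)) (h _ _)) (h _ _)

lemma A4_upper {n m d₁ d₂ : ℕ} {Y : Fin n → Fin m → Bool} (hY : Y ∈ BBG n m d₁ d₂)
    (e : Fin n × Fin m) : ∑ f, A4 Y e f ≤ (1 - ind Y e.1 e.2) * (d₁ * d₂) := by
  have h := sum_prod_mul (fun v => ind Y e.1 v) (fun u => ind Y u e.2)
  rw [ind_row hY, ind_col hY] at h
  rw [← h, Finset.mul_sum]
  refine Finset.sum_le_sum fun f _ => ?_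
  unfold A4
  have h1 : 0 ≤ (1 - ind Y e.1 e.2) * ind Y e.1 f.2 * ind Y f.1 e.2 :=
    mul_nonneg (mul_nonneg (sub_nonneg.2 (ind_le _ _ _)) (ind_nonneg _ _ _)) (ind_nonneg _ _ _)
  have h2 := mul_nonneg h1 (ind_nonneg Y f.1 f.2)
  nlinarith

lemma B4_lower {n m d₁ d₂ : ℕ} {Y : Fin n → Fin m → Bool} (hY : Y ∈ BBG n m d₁ d₂)
    (e : Fin n × Fin m) : ind Y e.1 e.2 * (n * d₁ - d₁ * d₂ - d₁ * d₂) ≤ ∑ f, B4 Y e f := by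
  have h := count_lower (ind Y) d₁ d₂ (ind_nonneg Y) (ind_row hY) (ind_col hY)
    (fun v => ind Y e.1 v) (fun u => ind Y u e.2) (fun _ => ind_nonneg _ _ _)
    (fun _ => ind_nonneg _ _ _)
  rw [ind_row hY, ind_col hY] at h
  have h2 := mul_le_mul_of_nonneg_left h (ind_nonneg Y e.1 e.2)
  rw [Finset.mul_sum] at h2
  calc _ = ind Y e.1 e.2 * (n * d₁ - d₁ * d₂ - d₂ * d₁) := by ring
    _ ≤ _ := h2
    _ = _ := Finset.sum_congr rfl fun f _ => by unfold B4; ring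

lemma reorder {n m : ℕ} (F : Fin n → Fin m → Fin n → Fin m → ℝ) :
    ∑ f : Fin n × Fin m, ∑ g : Fin n × Fin m, F f.1 f.2 g.1 g.2 =
      ∑ v1, ∑ u2, ∑ h : Fin n × Fin m, F h.1 v1 u2 h.2 := by
  simp only [Fintype.sum_prod_type]
  rw [Finset.sum_comm]
  refine Finset.sum_congr rfl fun v1 _ => ?_
  rw [Finset.sum_comm]

lemma A6_upper {n m d₁ d₂ : ℕ} {Y : Fin n → Fin m → Bool} (hY : Y ∈ BBG n m d₁ d₂)
    (e : Fin n × Fin m) :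
    ∑ f, ∑ g, A6 Y e f g ≤ d₁ * d₂ * (n * d₁ - d₁ * d₂) := by
  have h0 := ind_nonneg Y
  have h0' := fun u v => sub_nonneg.2 (ind_le Y u v)
  have key : ∀ v1, ∑ h : Fin n × Fin m, (1 - ind Y h.1 v1) * ind Y h.1 h.2 =
      (n * d₁ - d₁ * d₂ : ℝ) := by
    intro v1
    rw [sum_weight_row (ind Y) d₁ (ind_row hY) (fun u => 1 - ind Y u v1), Finset.sum_sub_distrib,
      ind_col hY]
    simp; ring
  calc ∑ f, ∑ g, A6 Y e f g
      = ∑ v1, ∑ u2, ∑ h : Fin n × Fin m, A6 Y e (h.1, v1) (u2, h.2) :=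
        reorder fun a b c d => A6 Y e (a, b) (c, d)
    _ ≤ ∑ v1, ∑ u2, ∑ h : Fin n × Fin m,
          ind Y e.1 v1 * ind Y u2 e.2 * ((1 - ind Y h.1 v1) * ind Y h.1 h.2) := by
        refine Finset.sum_le_sum fun v1 _ => Finset.sum_le_sum fun u2 _ =>
          Finset.sum_le_sum fun h _ => ?_
        unfold A6
        dsimp only
        have h1 : 0 ≤ ind Y e.1 v1 * ind Y u2 e.2 * ((1 - ind Y h.1 v1) * ind Y h.1 h.2) :=
          mul_nonneg (mul_nonneg (h0 _ _) (h0 _ _)) (mul_nonneg (h0' _ _) (h0 _ _))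
        have h2 : (1 - ind Y e.1 e.2) * (1 - ind Y u2 h.2) ≤ 1 :=
          mul_le_one₀ (by linarith [h0 e.1 e.2]) (h0' _ _) (by linarith [h0 u2 h.2])
        have := mul_le_mul_of_nonneg_left h2 h1
        linarith
    _ = d₁ * d₂ * (n * d₁ - d₁ * d₂) := by
        simp only [← Finset.mul_sum, key, ← Finset.sum_mul, ind_row hY, ind_col hY]

lemma A6_lower {n m d₁ d₂ : ℕ} {Y : Fin n → Fin m → Bool} (hY : Y ∈ BBG n m d₁ d₂)
    (e : Fin n × Fin m) :
    (1 - ind Y e.1 e.2) * (d₁ * d₂ * (n * d₁ - d₁ * d₂ - d₁ * d₂)) ≤ ∑ f, ∑ g, A6 Y e f g := by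
  have h0 := ind_nonneg Y
  have h0' := fun u v => sub_nonneg.2 (ind_le Y u v)
  have key : ∀ v1 u2, (n * d₁ - d₁ * d₂ - d₁ * d₂ : ℝ) ≤
      ∑ h : Fin n × Fin m, (1 - ind Y u2 h.2) * (1 - ind Y h.1 v1) * ind Y h.1 h.2 := by
    intro v1 u2
    have h := count_lower (ind Y) d₁ d₂ (ind_nonneg Y) (ind_row hY) (ind_col hY)
      (fun v => ind Y u2 v) (fun u => ind Y u v1) (fun _ => h0 _ _) (fun _ => h0 _ _)
    rw [ind_row hY, ind_col hY] at h
    linarith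
  calc (1 - ind Y e.1 e.2) * (d₁ * d₂ * (n * d₁ - d₁ * d₂ - d₁ * d₂))
      = ∑ v1, ∑ u2, (1 - ind Y e.1 e.2) * (ind Y e.1 v1 * ind Y u2 e.2) *
          (n * d₁ - d₁ * d₂ - d₁ * d₂ : ℝ) := by
        simp only [← Finset.mul_sum, ← Finset.sum_mul, ind_row hY, ind_col hY]
        ring
    _ ≤ ∑ v1, ∑ u2, (1 - ind Y e.1 e.2) * (ind Y e.1 v1 * ind Y u2 e.2) *
          ∑ h : Fin n × Fin m, (1 - ind Y u2 h.2) * (1 - ind Y h.1 v1) * ind Y h.1 h.2 := by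
        refine Finset.sum_le_sum fun v1 _ => Finset.sum_le_sum fun u2 _ => ?_
        exact mul_le_mul_of_nonneg_left (key v1 u2)
          (mul_nonneg (h0' _ _) (mul_nonneg (h0 _ _) (h0 _ _)))
    _ = ∑ v1, ∑ u2, ∑ h : Fin n × Fin m, A6 Y e (h.1, v1) (u2, h.2) := by
        refine Finset.sum_congr rfl fun v1 _ => Finset.sum_congr rfl fun u2 _ => ?_
        rw [Finset.mul_sum]
        refine Finset.sum_congr rfl fun h _ => ?_
        unfold A6; ring
    _ = ∑ f, ∑ g, A6 Y e f g :=
        (reorder fun a b c d => A6 Y e (a, b) (c, d)).symm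

lemma B6_upper {n m d₁ d₂ : ℕ} {Y : Fin n → Fin m → Bool} (hY : Y ∈ BBG n m d₁ d₂)
    (e : Fin n × Fin m) :
    ∑ f, ∑ g, B6 Y e f g ≤ ind Y e.1 e.2 * (((m - d₁) * d₂) * ((n - d₂) * d₁)) := by
  have h0 := ind_nonneg Y
  have h0' := fun u v => sub_nonneg.2 (ind_le Y u v)
  have k1 := sum_weight_col (ind Y) d₂ (ind_col hY) (fun v => 1 - ind Y e.1 v)
  have k2 := sum_weight_row (ind Y) d₁ (ind_row hY) (fun u => 1 - ind Y u e.2)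
  rw [Finset.sum_sub_distrib, ind_row hY] at k1
  rw [Finset.sum_sub_distrib, ind_col hY] at k2
  simp only [Finset.sum_const, Finset.card_univ, Fintype.card_fin, nsmul_eq_mul, mul_one] at k1 k2
  rw [← k1, ← k2, Finset.sum_mul, Finset.mul_sum]
  refine Finset.sum_le_sum fun f _ => ?_
  rw [Finset.mul_sum, Finset.mul_sum]
  refine Finset.sum_le_sum fun g _ => ?_
  unfold B6
  have h1 : 0 ≤ ind Y e.1 e.2 * ((1 - ind Y e.1 f.2) * ind Y f.1 f.2 *
      ((1 - ind Y g.1 e.2) * ind Y g.1 g.2)) :=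
    mul_nonneg (h0 _ _) (mul_nonneg (mul_nonneg (h0' _ _) (h0 _ _))
      (mul_nonneg (h0' _ _) (h0 _ _)))
  have := mul_nonneg h1 (h0 f.1 g.2)
  linarith

lemma A4_quad {n m d₁ d₂ : ℕ} {Y : Fin n → Fin m → Bool} (hY : Y ∈ BBG n m d₁ d₂)
    (q : Fin n × Fin m → ℝ) :
    ∑ e, ∑ f, q e * (q e + q f) * A4 Y e f ≤ 2 * (d₁ * d₂) * ∑ e, q e ^ 2 := by
  have hb : ∑ e, ∑ f, q e ^ 2 * A4 Y e f ≤ d₁ * d₂ * ∑ e, q e ^ 2 := by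
    rw [Finset.mul_sum]
    refine Finset.sum_le_sum fun e _ => ?_
    rw [← Finset.mul_sum, mul_comm]
    refine mul_le_mul_of_nonneg_right ((A4_upper hY e).trans ?_) (sq_nonneg _)
    have : (0 : ℝ) ≤ d₁ * d₂ := by positivity
    nlinarith [ind_nonneg Y e.1 e.2]
  have hs : ∑ e, ∑ f, q f ^ 2 * A4 Y e f = ∑ e, ∑ f, q e ^ 2 * A4 Y e f := by
    rw [Finset.sum_comm]
    refine Finset.sum_congr rfl fun e _ => Finset.sum_congr rfl fun f _ => ?_
    unfold A4; ring
  have : ∑ e, ∑ f, q e * (q e + q f) * A4 Y e f ≤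
      ∑ e, ∑ f, (3 / 2 * (q e ^ 2 * A4 Y e f) + 1 / 2 * (q f ^ 2 * A4 Y e f)) := by
    refine Finset.sum_le_sum fun e _ => Finset.sum_le_sum fun f _ => ?_
    have := mul_nonneg (sq_nonneg (q e - q f)) (A4_nonneg Y e f)
    linarith
  simp only [Finset.sum_add_distrib, ← Finset.mul_sum] at this
  simp only [← Finset.mul_sum] at hb hs
  linarith

lemma A6_quad {n m d₁ d₂ : ℕ} {Y : Fin n → Fin m → Bool} (hY : Y ∈ BBG n m d₁ d₂)
    (q : Fin n × Fin m → ℝ) :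
    ∑ e, ∑ f, ∑ g, q e * (q e + q f + q g) * A6 Y e f g ≤
      3 * (d₁ * d₂ * (n * d₁ - d₁ * d₂)) * ∑ e, q e ^ 2 := by
  have hb : ∑ e, ∑ f, ∑ g, q e ^ 2 * A6 Y e f g ≤
      (d₁ * d₂ * (n * d₁ - d₁ * d₂)) * ∑ e, q e ^ 2 := by
    rw [Finset.mul_sum]
    refine Finset.sum_le_sum fun e _ => ?_
    simp only [← Finset.mul_sum]
    rw [mul_comm]
    exact mul_le_mul_of_nonneg_right (A6_upper hY e) (sq_nonneg _)
  have rot : ∀ F : Fin n × Fin m → Fin n × Fin m → Fin n × Fin m → ℝ,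
      ∑ e, ∑ f, ∑ g, F f g e = ∑ e, ∑ f, ∑ g, F e f g := by
    intro F
    rw [Finset.sum_comm]
    exact Finset.sum_congr rfl fun e _ => Finset.sum_comm
  have inv : ∀ e f g, A6 Y f g e = A6 Y e f g := by
    intro e f g; unfold A6; ring
  have hs : ∑ e, ∑ f, ∑ g, q f ^ 2 * A6 Y e f g = ∑ e, ∑ f, ∑ g, q e ^ 2 * A6 Y e f g := by
    rw [← rot fun e f g => q e ^ 2 * A6 Y e f g]
    simp only [inv]
  have hs2 : ∑ e, ∑ f, ∑ g, q g ^ 2 * A6 Y e f g = ∑ e, ∑ f, ∑ g, q e ^ 2 * A6 Y e f g := by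
    rw [← hs, ← rot fun e f g => q f ^ 2 * A6 Y e f g]
    simp only [inv]
  have : ∑ e, ∑ f, ∑ g, q e * (q e + q f + q g) * A6 Y e f g ≤
      ∑ e, ∑ f, ∑ g, (2 * (q e ^ 2 * A6 Y e f g) + 1 / 2 * (q f ^ 2 * A6 Y e f g)
        + 1 / 2 * (q g ^ 2 * A6 Y e f g)) := by
    refine Finset.sum_le_sum fun e _ => Finset.sum_le_sum fun f _ =>
      Finset.sum_le_sum fun g _ => ?_
    have h1 := mul_nonneg (sq_nonneg (q e - q f)) (A6_nonneg Y e f g)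
    have h2 := mul_nonneg (sq_nonneg (q e - q g)) (A6_nonneg Y e f g)
    linarith
  simp only [Finset.sum_add_distrib, ← Finset.mul_sum] at this
  simp only [← Finset.mul_sum] at hb hs hs2
  linarith

/-! ### Chernoff / Bennett step -/

lemma bennett {ι : Type*} (s : Finset ι) (hs : s.Nonempty) (g : ι → ℝ) (a b σ : ℝ)
    (ha : 0 < a) (hσ : 0 < σ)
    (hd : ∀ θ : ℝ, 0 ≤ θ → ∑ i ∈ s, g i * Real.exp (θ * g i) ≤
      (b + σ / a * (Real.exp (3 * θ * a) - 1)) * ∑ i ∈ s, Real.exp (θ * g i))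
    (t : ℝ) (ht : 0 ≤ t) :
    ((s.filter fun i => b + t ≤ g i).card : ℝ) / (s.card : ℝ) ≤
      Real.exp (-(σ / (3 * a ^ 2)) * hfun (a * t / σ)) := by
  set ψ : ℝ → ℝ := fun θ => b * θ + σ / (3 * a ^ 2) * (Real.exp (3 * θ * a) - 1 - 3 * θ * a) with hψ
  set F : ℝ → ℝ := fun θ => (∑ i ∈ s, Real.exp (θ * g i)) * Real.exp (-ψ θ) with hF
  have hψ' : ∀ θ, HasDerivAt ψ (b + σ / a * (Real.exp (3 * θ * a) - 1)) θ := by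
    intro θ
    have h1 : HasDerivAt (fun θ : ℝ => 3 * θ * a) (3 * a) θ := by
      simpa using ((hasDerivAt_id θ).const_mul 3).mul_const a
    have h2 := ((hasDerivAt_id θ).const_mul b).add
      (((h1.exp.sub_const 1).sub h1).const_mul (σ / (3 * a ^ 2)))
    have e : b * 1 + σ / (3 * a ^ 2) * (Real.exp (3 * θ * a) * (3 * a) - 3 * a) =
        b + σ / a * (Real.exp (3 * θ * a) - 1) := by field_simp
    rw [e] at h2
    exact h2
  have hF' : ∀ θ, HasDerivAt F ((∑ i ∈ s, g i * Real.exp (θ * g i)) * Real.exp (-ψ θ) +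
      (∑ i ∈ s, Real.exp (θ * g i)) *
        (Real.exp (-ψ θ) * (-(b + σ / a * (Real.exp (3 * θ * a) - 1))))) θ := by
    intro θ
    refine HasDerivAt.mul ?_ (hψ' θ).neg.exp
    have : ∀ i ∈ s, HasDerivAt (fun θ : ℝ => Real.exp (θ * g i)) (g i * Real.exp (θ * g i)) θ := by
      intro i _
      have h1 : HasDerivAt (fun θ : ℝ => θ * g i) (g i) θ := by
        simpa using (hasDerivAt_id θ).mul_const (g i)
      simpa [mul_comm] using h1.exp
    exact HasDerivAt.fun_sum this
  have hanti : AntitoneOn F (Set.Ici 0) := by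
    apply antitoneOn_of_deriv_nonpos (convex_Ici 0)
    · exact fun θ _ => (hF' θ).continuousAt.continuousWithinAt
    · exact fun θ _ => (hF' θ).differentiableAt.differentiableWithinAt
    · intro θ hθ
      rw [interior_Ici] at hθ
      rw [(hF' θ).deriv]
      have := mul_le_mul_of_nonneg_right (hd θ (le_of_lt hθ)) (Real.exp_pos (-ψ θ)).le
      linarith
  have hF0 : F 0 = s.card := by simp [hF, hψ]
  set x := a * t / σ with hx
  have hx0 : 0 ≤ x := by positivity
  have hl0 : 0 ≤ Real.log (1 + x) := Real.log_nonneg (by linarith)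
  set θ := Real.log (1 + x) / (3 * a) with hθ
  have hθ0 : 0 ≤ θ := by positivity
  have hle : F θ ≤ s.card := by
    rw [← hF0]; exact hanti (Set.mem_Ici.2 le_rfl) (Set.mem_Ici.2 hθ0) hθ0
  have hN : (0 : ℝ) < s.card := by exact_mod_cast hs.card_pos
  have h3 : 3 * θ * a = Real.log (1 + x) := by rw [hθ]; field_simp
  have hcount : ((s.filter fun i => b + t ≤ g i).card : ℝ) * Real.exp (θ * (b + t)) ≤
      ∑ i ∈ s, Real.exp (θ * g i) := by
    rw [← nsmul_eq_mul, ← Finset.sum_const]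
    refine le_trans (Finset.sum_le_sum (g := fun i => Real.exp (θ * g i)) ?_)
      (Finset.sum_le_sum_of_subset_of_nonneg (Finset.filter_subset _ _)
        fun i _ _ => (Real.exp_pos _).le)
    intro i hi
    exact Real.exp_le_exp.2 (mul_le_mul_of_nonneg_left (Finset.mem_filter.1 hi).2 hθ0)
  rw [div_le_iff₀ hN]
  have hfin : ((s.filter fun i => b + t ≤ g i).card : ℝ) * Real.exp (θ * (b + t)) *
      Real.exp (-ψ θ) ≤ s.card :=
    le_trans (mul_le_mul_of_nonneg_right hcount (Real.exp_pos _).le) hle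
  have hexp : σ / (3 * a ^ 2) * hfun x = θ * (b + t) + -ψ θ := by
    have h1x : (0:ℝ) < 1 + x := by linarith
    simp only [hψ, h3, Real.exp_log h1x, hfun]
    have ht' : t = σ * x / a := by rw [hx]; field_simp
    rw [hθ, ht']
    field_simp
    ring
  rw [mul_assoc, ← Real.exp_add, ← hexp] at hfin
  rw [neg_mul, Real.exp_neg, inv_mul_eq_div, le_div_iff₀ (Real.exp_pos _)]
  exact hfin

/-! ### derivative inequalities -/

lemma fQ_prod {n m : ℕ} (Q : Matrix (Fin n) (Fin m) ℝ) (X : Fin n → Fin m → Bool) :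
    fQ Q X = ∑ e : Fin n × Fin m, Q e.1 e.2 * ind X e.1 e.2 := by
  rw [fQ_eq, Fintype.sum_prod_type]

lemma exp_chord (θ b D : ℝ) (hb : 0 < b) (hD : 0 ≤ D) (hDb : D ≤ b) :
    Real.exp (θ * D) ≤ 1 + D * ((Real.exp (θ * b) - 1) / b) := by
  have hx1 : 0 ≤ 1 - D / b := sub_nonneg.2 ((div_le_one hb).2 hDb)
  have hx2 : 0 ≤ D / b := by positivity
  have hx3 : 1 - D / b + D / b = 1 := by ring
  have h := convexOn_exp.2 (Set.mem_univ (0 : ℝ)) (Set.mem_univ (θ * b)) hx1 hx2 hx3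
  simp only [smul_eq_mul, mul_zero, zero_add, Real.exp_zero, mul_one] at h
  have e1 : D / b * (θ * b) = θ * D := by field_simp
  rw [e1] at h
  calc _ ≤ _ := h
    _ = _ := by field_simp; ring

lemma upper_deriv {n m d₁ d₂ : ℕ} (a : ℝ) (ha : 0 < a)
    (Q : Matrix (Fin n) (Fin m) ℝ) (hQ : ∀ u v, Q u v ∈ Set.Icc (0 : ℝ) a)
    (θ : ℝ) (hθ : 0 ≤ θ) :
    (n * d₁ - d₁ * d₂ : ℝ) * ∑ X ∈ BBG n m d₁ d₂, fQ Q X * Real.exp (θ * fQ Q X) ≤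
      (d₁ * d₂ * ∑ e : Fin n × Fin m, Q e.1 e.2 +
        (Real.exp (θ * (2 * a)) - 1) / (2 * a) * (2 * (d₁ * d₂) *
          ∑ e : Fin n × Fin m, Q e.1 e.2 ^ 2)) *
      ∑ X ∈ BBG n m d₁ d₂, Real.exp (θ * fQ Q X) := by
  set c := (Real.exp (θ * (2 * a)) - 1) / (2 * a) with hc
  have hc0 : 0 ≤ c := by
    apply div_nonneg _ (by positivity)
    linarith [Real.add_one_le_exp (θ * (2 * a)), mul_nonneg hθ (by positivity : 0 ≤ 2 * a)]
  have hQ0 : ∀ u v, 0 ≤ Q u v := fun u v => (hQ u v).1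
  set w : (Fin n → Fin m → Bool) → ℝ := fun X => Real.exp (θ * fQ Q X) with hw
  have hw0 : ∀ X, 0 < w X := fun X => Real.exp_pos _
  set q : Fin n × Fin m → ℝ := fun e => Q e.1 e.2 with hq
  -- pointwise bound for each switching
  have hsw : ∀ e f, ∑ X ∈ BBG n m d₁ d₂, B4 X e f * w X ≤
      ∑ Y ∈ BBG n m d₁ d₂, A4 Y e f * (1 + (q e + q f) * c) * w Y := by
    intro e f
    rw [sum_B4 e f w]
    refine Finset.sum_le_sum fun Y _ => ?_
    by_cases h : A4 Y e f = 0
    · simp [h]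
    rw [mul_assoc]
    refine mul_le_mul_of_nonneg_left ?_ (A4_nonneg Y e f)
    have h1 := fQ_S4 Q hQ0 e f Y h
    have h2 := exp_chord θ (2 * a) (q e + q f) (by positivity)
      (add_nonneg (hQ0 _ _) (hQ0 _ _)) (by linarith [(hQ e.1 e.2).2, (hQ f.1 f.2).2])
    calc w (tog (S4 e f) Y) ≤ Real.exp (θ * (fQ Q Y + (q e + q f))) :=
          Real.exp_le_exp.2 (mul_le_mul_of_nonneg_left h1 hθ)
      _ = Real.exp (θ * (q e + q f)) * w Y := by rw [hw, ← Real.exp_add]; ring_nf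
      _ ≤ _ := mul_le_mul_of_nonneg_right h2 (hw0 Y).le
  have hX : ∀ X ∈ BBG n m d₁ d₂, (n * d₁ - d₁ * d₂ : ℝ) * (fQ Q X * w X) ≤
      (∑ e, q e * (ind X e.1 e.2 * (d₁ * d₂))) * w X + ∑ e, ∑ f, q e * (B4 X e f * w X) := by
    intro X hX
    have : (n * d₁ - d₁ * d₂ : ℝ) * fQ Q X ≤
        ∑ e, q e * (ind X e.1 e.2 * (d₁ * d₂)) + ∑ e, ∑ f, q e * B4 X e f := by
      rw [fQ_prod, Finset.mul_sum, ← Finset.sum_add_distrib]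
      refine Finset.sum_le_sum fun e _ => ?_
      have := mul_le_mul_of_nonneg_left (B4_lower hX e) (hQ0 e.1 e.2)
      rw [← Finset.mul_sum]
      simp only [hq]
      linarith
    have := mul_le_mul_of_nonneg_right this (hw0 X).le
    rw [add_mul, mul_assoc] at this
    refine this.trans (le_of_eq ?_)
    congr 1
    simp only [Finset.sum_mul, mul_assoc]
  have hY : ∀ Y ∈ BBG n m d₁ d₂, (∑ e, q e * (ind Y e.1 e.2 * (d₁ * d₂))) * w Y +
      ∑ e, ∑ f, q e * (A4 Y e f * (1 + (q e + q f) * c) * w Y) ≤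
      (d₁ * d₂ * ∑ e, q e + c * (2 * (d₁ * d₂) * ∑ e, q e ^ 2)) * w Y := by
    intro Y hY
    have h1 : ∑ e, ∑ f, q e * (A4 Y e f * (1 + (q e + q f) * c) * w Y) =
        (∑ e, q e * ∑ f, A4 Y e f + c * ∑ e, ∑ f, q e * (q e + q f) * A4 Y e f) * w Y := by
      simp only [Finset.mul_sum, ← Finset.sum_add_distrib, Finset.sum_mul]
      exact Finset.sum_congr rfl fun e _ => Finset.sum_congr rfl fun f _ => by ring
    rw [h1, ← add_mul]
    refine mul_le_mul_of_nonneg_right ?_ (hw0 Y).le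
    have h2 := mul_le_mul_of_nonneg_left (A4_quad hY q) hc0
    have h3 : ∑ e, q e * (ind Y e.1 e.2 * (d₁ * d₂)) + ∑ e, q e * ∑ f, A4 Y e f ≤
        d₁ * d₂ * ∑ e, q e := by
      rw [Finset.mul_sum, ← Finset.sum_add_distrib]
      refine Finset.sum_le_sum fun e _ => ?_
      have := mul_le_mul_of_nonneg_left (A4_upper hY e) (hQ0 e.1 e.2)
      simp only [hq]
      linarith
    linarith
  have swap : ∀ G : (Fin n → Fin m → Bool) → Fin n × Fin m → Fin n × Fin m → ℝ,
      ∑ X ∈ BBG n m d₁ d₂, ∑ e, ∑ f, q e * G X e f =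
      ∑ e, ∑ f, q e * ∑ X ∈ BBG n m d₁ d₂, G X e f := by
    intro G
    rw [Finset.sum_comm]
    refine Finset.sum_congr rfl fun e _ => ?_
    rw [Finset.sum_comm]
    exact Finset.sum_congr rfl fun f _ => by rw [Finset.mul_sum]
  rw [Finset.mul_sum, Finset.mul_sum]
  refine (Finset.sum_le_sum hX).trans (le_trans ?_ (Finset.sum_le_sum hY))
  rw [Finset.sum_add_distrib, Finset.sum_add_distrib, swap, swap]
  refine add_le_add le_rfl (Finset.sum_le_sum fun e _ => Finset.sum_le_sum fun f _ => ?_)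
  exact mul_le_mul_of_nonneg_left (hsw e f) (hQ0 _ _)

lemma lower_deriv {n m d₁ d₂ : ℕ} (hnd : d₁ * d₂ ≤ n * d₁)
    (Q : Matrix (Fin n) (Fin m) ℝ) (hQ0 : ∀ u v, 0 ≤ Q u v)
    (θ : ℝ) (hθ : 0 ≤ θ) :
    (d₁ * d₂ * (n * d₁ - d₁ * d₂ - d₁ * d₂) * ∑ e : Fin n × Fin m, Q e.1 e.2 -
        θ * (3 * (d₁ * d₂ * (n * d₁ - d₁ * d₂)) * ∑ e : Fin n × Fin m, Q e.1 e.2 ^ 2)) *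
      ∑ X ∈ BBG n m d₁ d₂, Real.exp (θ * (-fQ Q X)) ≤
    (d₁ * d₂ * (n * d₁ - d₁ * d₂) + ((m - d₁) * d₂) * ((n - d₂) * d₁) : ℝ) *
      ∑ X ∈ BBG n m d₁ d₂, fQ Q X * Real.exp (θ * (-fQ Q X)) := by
  set w : (Fin n → Fin m → Bool) → ℝ := fun X => Real.exp (θ * (-fQ Q X)) with hw
  have hw0 : ∀ X, 0 < w X := fun X => Real.exp_pos _
  set q : Fin n × Fin m → ℝ := fun e => Q e.1 e.2 with hq
  set L : ℝ := d₁ * d₂ * (n * d₁ - d₁ * d₂) with hL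
  have hL0 : (d₁ * d₂ * (n * d₁ - d₁ * d₂ - d₁ * d₂) : ℝ) ≤ L := by
    have : (0:ℝ) ≤ (d₁ * d₂) * (d₁ * d₂) := by positivity
    linarith
  have hsw : ∀ e f g, ∑ Y ∈ BBG n m d₁ d₂, A6 Y e f g * (1 - θ * (q e + q f + q g)) * w Y ≤
      ∑ X ∈ BBG n m d₁ d₂, B6 X e f g * w X := by
    intro e f g
    rw [sum_B6 e f g w]
    refine Finset.sum_le_sum fun Y _ => ?_
    by_cases h : A6 Y e f g = 0
    · simp [h]
    rw [mul_assoc]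
    refine mul_le_mul_of_nonneg_left ?_ (A6_nonneg Y e f g)
    have h1 := fQ_S6 Q hQ0 e f g Y h
    have h2 := Real.add_one_le_exp (-(θ * (q e + q f + q g)))
    calc _ ≤ Real.exp (-(θ * (q e + q f + q g))) * w Y :=
          mul_le_mul_of_nonneg_right (by linarith) (hw0 Y).le
      _ = Real.exp (θ * -(fQ Q Y + (q e + q f + q g))) := by rw [hw, ← Real.exp_add]; ring_nf
      _ ≤ _ := Real.exp_le_exp.2 (mul_le_mul_of_nonneg_left (neg_le_neg h1) hθ)
  have hX : ∀ X ∈ BBG n m d₁ d₂,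
      (∑ e, q e * (ind X e.1 e.2 * L)) * w X + ∑ e, ∑ f, ∑ g, q e * (B6 X e f g * w X) ≤
      (L + ((m - d₁) * d₂) * ((n - d₂) * d₁) : ℝ) * (fQ Q X * w X) := by
    intro X hX
    have : ∑ e, q e * (ind X e.1 e.2 * L) + ∑ e, ∑ f, ∑ g, q e * B6 X e f g ≤
        (L + ((m - d₁) * d₂) * ((n - d₂) * d₁) : ℝ) * fQ Q X := by
      rw [fQ_prod, Finset.mul_sum, ← Finset.sum_add_distrib]
      refine Finset.sum_le_sum fun e _ => ?_
      have := mul_le_mul_of_nonneg_left (B6_upper hX e) (hQ0 e.1 e.2)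
      simp only [← Finset.mul_sum]
      simp only [hq]
      linarith
    have := mul_le_mul_of_nonneg_right this (hw0 X).le
    rw [add_mul, mul_assoc (L + _)] at this
    refine le_trans (le_of_eq ?_) this
    congr 1
    simp only [Finset.sum_mul, mul_assoc]
  have hY : ∀ Y ∈ BBG n m d₁ d₂,
      (d₁ * d₂ * (n * d₁ - d₁ * d₂ - d₁ * d₂) * ∑ e, q e - θ * (3 * L * ∑ e, q e ^ 2)) * w Y ≤
      (∑ e, q e * (ind Y e.1 e.2 * L)) * w Y +
      ∑ e, ∑ f, ∑ g, q e * (A6 Y e f g * (1 - θ * (q e + q f + q g)) * w Y) := by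
    intro Y hY
    have h1 : ∑ e, ∑ f, ∑ g, q e * (A6 Y e f g * (1 - θ * (q e + q f + q g)) * w Y) =
        (∑ e, q e * ∑ f, ∑ g, A6 Y e f g -
          θ * ∑ e, ∑ f, ∑ g, q e * (q e + q f + q g) * A6 Y e f g) * w Y := by
      simp only [Finset.mul_sum, ← Finset.sum_sub_distrib, Finset.sum_mul]
      exact Finset.sum_congr rfl fun e _ => Finset.sum_congr rfl fun f _ =>
        Finset.sum_congr rfl fun g _ => by ring
    rw [h1, ← add_mul]
    refine mul_le_mul_of_nonneg_right ?_ (hw0 Y).le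
    have h2 := mul_le_mul_of_nonneg_left (A6_quad hY q) hθ
    have h3 : (d₁ * d₂ * (n * d₁ - d₁ * d₂ - d₁ * d₂) * ∑ e, q e : ℝ) ≤
        ∑ e, q e * (ind Y e.1 e.2 * L) + ∑ e, q e * ∑ f, ∑ g, A6 Y e f g := by
      rw [Finset.mul_sum, ← Finset.sum_add_distrib]
      refine Finset.sum_le_sum fun e _ => ?_
      have h4 := mul_le_mul_of_nonneg_left (A6_lower hY e) (hQ0 e.1 e.2)
      have h5 := mul_le_mul_of_nonneg_left (mul_le_mul_of_nonneg_left hL0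
        (ind_nonneg Y e.1 e.2)) (hQ0 e.1 e.2)
      simp only [hq]
      linarith
    linarith
  have swap : ∀ G : (Fin n → Fin m → Bool) → Fin n × Fin m → Fin n × Fin m → Fin n × Fin m → ℝ,
      ∑ X ∈ BBG n m d₁ d₂, ∑ e, ∑ f, ∑ g, q e * G X e f g =
      ∑ e, ∑ f, ∑ g, q e * ∑ X ∈ BBG n m d₁ d₂, G X e f g := by
    intro G
    rw [Finset.sum_comm]
    refine Finset.sum_congr rfl fun e _ => ?_
    rw [Finset.sum_comm]
    refine Finset.sum_congr rfl fun f _ => ?_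
    rw [Finset.sum_comm]
    exact Finset.sum_congr rfl fun g _ => by rw [Finset.mul_sum]
  rw [Finset.mul_sum (BBG n m d₁ d₂), Finset.mul_sum (BBG n m d₁ d₂)]
  refine (Finset.sum_le_sum hY).trans (le_trans ?_ (Finset.sum_le_sum hX))
  rw [Finset.sum_add_distrib, Finset.sum_add_distrib, swap, swap]
  refine add_le_add le_rfl (Finset.sum_le_sum fun e _ => Finset.sum_le_sum fun f _ =>
    Finset.sum_le_sum fun g _ => ?_)
  exact mul_le_mul_of_nonneg_left (hsw e f g) (hQ0 _ _)

theorem linear_function_tail_bounds (n m d₁ d₂ : ℕ)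
    (hn : 0 < n) (hm : 0 < m) (hd₁ : 0 < d₁) (hd₂ : 0 < d₂)
    (hbal : n * d₁ = m * d₂) (hne : (BBG n m d₁ d₂).Nonempty)
    (hdm : d₁ < m)
    (a : ℝ) (ha : 0 < a)
    (Q : Matrix (Fin n) (Fin m) ℝ) (hQ : ∀ u v, Q u v ∈ Set.Icc (0 : ℝ) a)
    (hQ0 : Q ≠ 0)
    (μ σ2 p p' : ℝ)
    (hμ : μ = (d₁ : ℝ) / m * ∑ u, ∑ v, Q u v)
    (hσ : σ2 = (d₁ : ℝ) / m * ∑ u, ∑ v, (Q u v) ^ 2)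
    (hp : p = 1 - (d₁ : ℝ) / m)
    (hp' : p' = 1 - (d₁ : ℝ) / ((m : ℝ) - d₁))
    (t : ℝ) (ht : 0 ≤ t) :
    ((((BBG n m d₁ d₂).filter fun X => t ≤ fQ Q X - μ / p).card : ℝ) /
        ((BBG n m d₁ d₂).card : ℝ)
      ≤ Real.exp (-(σ2 / (3 * p * a ^ 2)) * hfun (p * a * t / σ2))) ∧
    ((((BBG n m d₁ d₂).filter fun X => fQ Q X - p' * μ ≤ -t).card : ℝ) /
        ((BBG n m d₁ d₂).card : ℝ)
      ≤ Real.exp (-(σ2 / (3 * a ^ 2)) * hfun (a * t / σ2))) := by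
  have hmR : (0 : ℝ) < m := by exact_mod_cast hm
  have hnR : (0 : ℝ) < n := by exact_mod_cast hn
  have h1R : (0 : ℝ) < d₁ := by exact_mod_cast hd₁
  have h2R : (0 : ℝ) < d₂ := by exact_mod_cast hd₂
  have hbR : (n : ℝ) * d₁ = m * d₂ := by exact_mod_cast hbal
  have hdR : (d₁ : ℝ) < m := by exact_mod_cast hdm
  have hmd : (0 : ℝ) < m - d₁ := by linarith
  have hp0 : 0 < p := by
    rw [hp, sub_pos, div_lt_one hmR]; exact hdR
  have hQ0' : ∀ u v, 0 ≤ Q u v := fun u v => (hQ u v).1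
  set s1 := ∑ e : Fin n × Fin m, Q e.1 e.2 with hs1
  set s2 := ∑ e : Fin n × Fin m, Q e.1 e.2 ^ 2 with hs2
  have hμ' : μ = d₁ / m * s1 := by rw [hμ, hs1, Fintype.sum_prod_type]
  have hσ' : σ2 = d₁ / m * s2 := by rw [hσ, hs2, Fintype.sum_prod_type]
  have hs2pos : 0 < s2 := by
    have : ∃ u v, Q u v ≠ 0 := by
      by_contra h
      push Not at h
      exact hQ0 (by ext u v; exact h u v)
    obtain ⟨u, v, huv⟩ := this
    exact Finset.sum_pos' (fun e _ => sq_nonneg _) ⟨(u, v), Finset.mem_univ _, by positivity⟩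
  have hσ0 : 0 < σ2 := by rw [hσ']; positivity
  have hpm : p = (m - d₁) / m := by rw [hp]; field_simp
  have hK : (n * d₁ - d₁ * d₂ : ℝ) = d₂ * (m - d₁) := by rw [hbR]; ring
  constructor
  · have hb := bennett (BBG n m d₁ d₂) hne (fQ Q) a (μ / p) (σ2 / p) ha (by positivity) ?_ t ht
    · have e1 : σ2 / p / (3 * a ^ 2) = σ2 / (3 * p * a ^ 2) := by field_simp
      have e2 : a * t / (σ2 / p) = p * a * t / σ2 := by field_simp
      rw [e1, e2] at hb
      have e3 : ((BBG n m d₁ d₂).filter fun X => t ≤ fQ Q X - μ / p) =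
          (BBG n m d₁ d₂).filter fun X => μ / p + t ≤ fQ Q X := by
        ext X
        simp only [Finset.mem_filter, le_sub_iff_add_le']
      rw [e3]
      exact hb
    · intro θ hθ
      have hu := upper_deriv (d₁ := d₁) (d₂ := d₂) a ha Q hQ θ hθ
      rw [← hs1, ← hs2, hK] at hu
      have hZ : 0 ≤ ∑ X ∈ BBG n m d₁ d₂, Real.exp (θ * fQ Q X) :=
        Finset.sum_nonneg fun X _ => (Real.exp_pos _).le
      have hmono : Real.exp (θ * (2 * a)) ≤ Real.exp (3 * θ * a) :=
        Real.exp_le_exp.2 (by nlinarith [mul_nonneg hθ ha.le])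
      set Z := ∑ X ∈ BBG n m d₁ d₂, Real.exp (θ * fQ Q X) with hZdef
      have hkp : 0 < (d₂ * (m - d₁) : ℝ) := by positivity
      have step : ∑ X ∈ BBG n m d₁ d₂, fQ Q X * Real.exp (θ * fQ Q X) ≤
          (μ / p + σ2 / p / a * (Real.exp (θ * (2 * a)) - 1)) * Z := by
        rw [← mul_le_mul_iff_right₀ hkp]
        refine hu.trans (le_of_eq ?_)
        rw [hμ', hσ', hpm]
        field_simp
      refine step.trans (mul_le_mul_of_nonneg_right ?_ hZ)
      have : 0 ≤ σ2 / p / a := by positivity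
      have := mul_le_mul_of_nonneg_left (sub_le_sub_right hmono 1) this
      linarith
  · have hb := bennett (BBG n m d₁ d₂) hne (fun X => -fQ Q X) a (-(p' * μ)) σ2 ha hσ0 ?_ t ht
    · have e3 : ((BBG n m d₁ d₂).filter fun X => fQ Q X - p' * μ ≤ -t) =
          (BBG n m d₁ d₂).filter fun X => -(p' * μ) + t ≤ -fQ Q X := by
        ext X
        simp only [Finset.mem_filter]
        refine and_congr_right fun _ => ⟨fun h => by linarith, fun h => by linarith⟩
      rw [e3]
      exact hb
    · intro θ hθ
      have hl := lower_deriv (d₁ := d₁) (d₂ := d₂)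
        (by rw [hbal]; exact Nat.mul_le_mul_right _ hdm.le) Q hQ0' θ hθ
      rw [← hs1, ← hs2, hK] at hl
      have hZ : 0 ≤ ∑ X ∈ BBG n m d₁ d₂, Real.exp (θ * (-fQ Q X)) :=
        Finset.sum_nonneg fun X _ => (Real.exp_pos _).le
      set Z := ∑ X ∈ BBG n m d₁ d₂, Real.exp (θ * (-fQ Q X)) with hZdef
      set W := ∑ X ∈ BBG n m d₁ d₂, fQ Q X * Real.exp (θ * (-fQ Q X)) with hW
      have hR : (d₁ * d₂ * (d₂ * (m - d₁)) + ((m - d₁) * d₂) * ((n - d₂) * d₁) : ℝ) =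
          m * d₂ * (d₂ * (m - d₁)) := by
        have : (d₁ * d₂ * (d₂ * (m - d₁)) + ((m - d₁) * d₂) * ((n - d₂) * d₁) : ℝ) =
          (n * d₁) * (d₂ * (m - d₁)) := by ring
        rw [this, hbR]
      rw [hR] at hl
      have hRp : 0 < (m * d₂ * (d₂ * (m - d₁)) : ℝ) := by positivity
      have step : (p' * μ - 3 * θ * σ2) * Z ≤ W := by
        rw [← mul_le_mul_iff_right₀ hRp]
        refine le_trans (le_of_eq ?_) hl
        rw [hμ', hσ', hp']
        field_simp
      have hneg : ∑ X ∈ BBG n m d₁ d₂, -fQ Q X * Real.exp (θ * (-fQ Q X)) = -W := by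
        rw [hW, ← Finset.sum_neg_distrib]
        exact Finset.sum_congr rfl fun X _ => by ring
      rw [hneg]
      have h3 : 3 * θ * σ2 ≤ σ2 / a * (Real.exp (3 * θ * a) - 1) := by
        have h4 := Real.add_one_le_exp (3 * θ * a)
        have h5 : 0 ≤ σ2 / a := by positivity
        calc 3 * θ * σ2 = σ2 / a * (3 * θ * a) := by field_simp
          _ ≤ _ := mul_le_mul_of_nonneg_left (by linarith) h5
      have h6 := mul_le_mul_of_nonneg_right h3 hZ
      linarith
end
end
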